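/- There exists ε₀ > 0 such that for every ε ∈ (0, ε₀) there is q₀(ε) with the following property. Let q ≥ q₀ be a natural number, let H ≤ (ℤ/qℤ)^× be a subgroup of index 2, let b ∈ (ℤ/qℤ)^×, and let R ∈ [q^{0.26}, q]. Then #{n ∈ ℕ : n ≤ R, n mod q ∈ bH, gcd(n, P(q^{√ε})) = 1} ≥ (1/2 − ε) · #{n ∈ ℕ : n ≤ R, gcd(n, P(q^{√ε})) = 1}. -/

import Mathlib

/-! A subgroup `H` of index two is the kernel of a quadratic character `φ` modulo `q`, and `n` lies in
`bH` exactly when `φ(b) φ(n) = 1`. On odd integers prime to `q` one has `φ(n) = g(n)`, where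
`g(n) = ψ(n) (n / D)` for a character `ψ` modulo `8` and an odd squarefree divisor `D` of `q`
(`quadratic_structure`). The theorem thus compares the number of rough integers, those without
prime factors below `z = q ^ √ε`, with their sum weighted by `(1 + φ(b) g(n)) / 2`.

The arithmetic input is cancellation in the sums of `g` over initial segments of length at least
`q ^ 0.259` (`char_sum_bound`). For small `D` it follows from periodicity. For large `D` it is
Burgess's bound for squarefree moduli (`burgess`), available above the exponent `1 / 4`: shifting by
products `a * b` and Hölder's inequality (`burgess_core`) reduce it to high moments of short character
sums (`moment_bound`), which expand into complete sums. These are bounded prime by prime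
(`completeSum_bound`) by the Weil bound for `y ^ 2 = f(x)` (`weil_bound`), proved by Stepanov's method.

The rough integers are counted by the Brun–Hooley sieve (`sieve`), which splits the primes below `z`
into blocks between iterated square roots and truncates inclusion–exclusion on every block. Its level
is `z ^ (4 * B + 6)` and its relative error is of order `16 ^ (-B)`. With `B` of order `1 / √ε` the
level is a small power of `q`, while the error is exponentially small in `1 / √ε` and hence less than
`ε` (`choose_B`). Since `R ≥ q ^ 0.26`, dividing `R` by a number up to the level leaves at least
`q ^ 0.259`, so the sums of `g` over multiples contribute only to the remainder. Applied to both
weights, the sieve gives main terms in the ratio `2` (`rough_char`). Integers sharing a factor with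
`q`, on which `φ` is undefined, are negligible: a rough one is a multiple of one of the few prime
factors `p ≥ z` of `q` (`bad_card`). Finally `coset_count` returns to the coset. -/

open scoped BigOperators Classical

noncomputable section

/-- `P(z)`: the product of all primes `p < z`. -/
def primorialLT (z : ℝ) : ℕ :=
  ∏ p ∈ (Finset.range ⌈z⌉₊).filter Nat.Prime, p

/-! ### Stepanov's method for the quadratic character -/

open Polynomial in
/-- The cofactor of the `k`-th derivative of `f ^ w * u`: the polynomial `U` with
`(f ^ w * u)^(k) = f ^ (w - k) * U` for `k ≤ w`, defined by the recursion
`U ↦ f * U' + (w - k) * f' * U`, which makes it linear in `u`. -/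
def stepU {K : Type*} [Field K] (f : K[X]) (w : ℕ) : ℕ → (K[X] →ₗ[K] K[X])
  | 0 => LinearMap.id
  | k + 1 => (LinearMap.mulLeft K f) ∘ₗ derivative ∘ₗ (stepU f w k) +
      (LinearMap.mulLeft K (((w : K[X]) - (k : K[X])) * derivative f)) ∘ₗ (stepU f w k)

open Polynomial in
theorem stepU_succ {K : Type*} [Field K] (f : K[X]) (w k : ℕ) (u : K[X]) :
    stepU f w (k + 1) u = f * derivative (stepU f w k u)
      + ((w : K[X]) - (k : K[X])) * derivative f * stepU f w k u := rfl

open Polynomial in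
/-- The factor `c` with zero derivative is `1` or a power of `X ^ p` in the application. -/
theorem iterate_derivative_stepU {K : Type*} [Field K] (f u c : K[X]) (hc : derivative c = 0)
    (w k : ℕ) (hk : k ≤ w) :
    derivative^[k] (f ^ w * u * c) = f ^ (w - k) * stepU f w k u * c := by
  induction k with
  | zero => simp [stepU]
  | succ k ih =>
    rw [Function.iterate_succ_apply', ih (by omega), stepU_succ]
    obtain ⟨d, rfl⟩ : ∃ d, w = k + 1 + d := ⟨w - (k + 1), by omega⟩
    rw [show k + 1 + d - k = d + 1 by omega, show k + 1 + d - (k + 1) = d by omega]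
    simp only [derivative_mul, derivative_pow, hc]
    push_cast
    simp only [map_add, map_natCast, map_one]
    ring

open Polynomial in
theorem stepU_mem {K : Type*} [Field K] (f u : K[X]) (n B w k : ℕ) (hf : f.natDegree ≤ n)
    (hu : u ∈ degreeLT K B) : stepU f w k u ∈ degreeLT K (B + k * n) := by
  induction k with
  | zero => simpa [stepU] using hu
  | succ k ih =>
    rw [stepU_succ]
    by_cases h0 : stepU f w k u = 0
    · rw [h0]; simp
    rw [mem_degreeLT, ← natDegree_lt_iff_degree_lt h0] at ih
    have h1 : (f * derivative (stepU f w k u)).degree < ((B + (k + 1) * n : ℕ) : WithBot ℕ) := by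
      by_cases h : f * derivative (stepU f w k u) = 0
      · rw [h, degree_zero]; exact WithBot.bot_lt_coe _
      rw [← natDegree_lt_iff_degree_lt h]
      have := natDegree_mul_le (p := f) (q := derivative (stepU f w k u))
      have h2 := natDegree_derivative_le (stepU f w k u)
      have : (k + 1) * n = k * n + n := by ring
      omega
    have h2 : (((w : K[X]) - (k : K[X])) * derivative f * stepU f w k u).degree
        < ((B + (k + 1) * n : ℕ) : WithBot ℕ) := by
      by_cases h : ((w : K[X]) - (k : K[X])) * derivative f * stepU f w k u = 0
      · rw [h, degree_zero]; exact WithBot.bot_lt_coe _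
      rw [← natDegree_lt_iff_degree_lt h]
      have h3 : (((w : K[X]) - (k : K[X])) * derivative f * stepU f w k u).natDegree
        ≤ (((w : K[X]) - (k : K[X])) * derivative f).natDegree + (stepU f w k u).natDegree :=
        natDegree_mul_le
      have h4 : (((w : K[X]) - (k : K[X])) * derivative f).natDegree ≤ 0 + (derivative f).natDegree := by
        refine natDegree_mul_le.trans (Nat.add_le_add_right ?_ _)
        have : ((w : K[X]) - (k : K[X])) = C ((w : K) - k) := by simp
        rw [this, natDegree_C]
      have h5 := natDegree_derivative_le f
      have : (k + 1) * n = k * n + n := by ring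
      omega
    rw [mem_degreeLT]
    exact (degree_add_le _ _).trans_lt (max_lt h1 h2)

open Polynomial in
/-- Independence in Stepanov's method, with `m = (p - 1) / 2`: polynomials `r j`, `s j` of degree
below about `p / 2` with `∑ (r j + f ^ m * s j) * X ^ (p * j) = 0` all vanish. Modulo `X ^ p` one
has `r 0 = -f ^ m * s 0` and `f ^ p = f(0)`, so that `f * r 0 ^ 2 = f(0) * s 0 ^ 2` modulo `X ^ p`,
hence exactly by degrees; this is impossible at a simple root `a` of `f` unless `r 0 = s 0 = 0`. -/
theorem stepanov_indep {p : ℕ} [Fact p.Prime] (m : ℕ) (hm : 2 * m + 1 = p) (f : (ZMod p)[X])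
    (n B : ℕ) (hf : f.natDegree ≤ n) (hB : 2 * B + n ≤ p) (a : ZMod p)
    (ha : f.rootMultiplicity a = 1) (h0 : f.eval 0 ≠ 0) (J : ℕ) :
    ∀ r s : ℕ → (ZMod p)[X], (∀ j, r j ∈ degreeLT (ZMod p) B) → (∀ j, s j ∈ degreeLT (ZMod p) B) →
      ∑ j ∈ Finset.range J, (r j + f ^ m * s j) * X ^ (p * j) = 0 →
      ∀ j < J, r j = 0 ∧ s j = 0 := by
  have hf0 : f ≠ 0 := by rintro rfl; simp at h0
  induction J with
  | zero => intro r s _ _ _ j hj; omega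
  | succ J ih =>
    intro r s hr hs hsum
    rw [Finset.sum_range_succ'] at hsum
    have hfac : ∑ j ∈ Finset.range J, (r (j+1) + f ^ m * s (j+1)) * X ^ (p * (j+1))
        = X ^ p * ∑ j ∈ Finset.range J, (r (j+1) + f ^ m * s (j+1)) * X ^ (p * j) := by
      rw [Finset.mul_sum]
      refine Finset.sum_congr rfl fun j _ => ?_
      rw [mul_add, pow_add]; ring
    rw [hfac] at hsum
    simp only [mul_zero, pow_zero, mul_one] at hsum
    have hd1 : (X : (ZMod p)[X]) ^ p ∣ r 0 + f ^ m * s 0 := by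
      refine ⟨-∑ j ∈ Finset.range J, (r (j+1) + f ^ m * s (j+1)) * X ^ (p * j), ?_⟩
      linear_combination hsum
    have hd2 : (X : (ZMod p)[X]) ^ p ∣ f ^ p - C (f.eval 0) := by
      have : (X : (ZMod p)[X]) ∣ f - C (f.eval 0) := by
        rw [X_dvd_iff]; simp [coeff_zero_eq_eval_zero]
      have h2 := map_dvd (expand (ZMod p) p) this
      rwa [map_sub, expand_X, expand_C, ZMod.expand_card] at h2
    -- multiply the first divisibility by the conjugate `(r 0 - f ^ m * s 0) * f`
    have hd3 : (X : (ZMod p)[X]) ^ p ∣ f * r 0 ^ 2 - C (f.eval 0) * s 0 ^ 2 := by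
      have h1 : (X : (ZMod p)[X]) ^ p ∣ (r 0 + f ^ m * s 0) * ((r 0 - f ^ m * s 0) * f) :=
        hd1.mul_right _
      have h2 : (X : (ZMod p)[X]) ^ p ∣ (f ^ p - C (f.eval 0)) * s 0 ^ 2 := hd2.mul_right _
      have h3 := dvd_add h1 h2
      have h4 : f ^ p = f ^ m * f ^ m * f := by
        rw [← pow_add, ← pow_succ]; congr 1; omega
      rw [h4] at h3
      convert h3 using 1
      ring
    have hr0 := hr 0
    have hs0 := hs 0
    rw [mem_degreeLT] at hr0 hs0
    have hzero : f * r 0 ^ 2 - C (f.eval 0) * s 0 ^ 2 = 0 := by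
      by_contra hne
      have h1 := natDegree_le_of_dvd hd3 hne
      rw [natDegree_X_pow] at h1
      have hh1 : r 0 ≠ 0 → (f * r 0 ^ 2).natDegree < p := by
        intro h
        rw [← natDegree_lt_iff_degree_lt h] at hr0
        have := natDegree_mul_le (p := f) (q := r 0 ^ 2)
        have := natDegree_pow_le (p := r 0) (n := 2)
        omega
      have hp0 : 0 < p := (Fact.out : p.Prime).pos
      have hh1' : (f * r 0 ^ 2).natDegree < p := by
        by_cases h : r 0 = 0
        · rw [h]; simpa using hp0
        · exact hh1 h
      have hh2' : (C (f.eval 0) * s 0 ^ 2).natDegree < p := by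
        by_cases h : s 0 = 0
        · rw [h]; simpa using hp0
        · rw [← natDegree_lt_iff_degree_lt h] at hs0
          have := natDegree_C_mul_le (f.eval 0) (s 0 ^ 2)
          have := natDegree_pow_le (p := s 0) (n := 2)
          omega
      have := natDegree_sub_le (f * r 0 ^ 2) (C (f.eval 0) * s 0 ^ 2)
      have := max_lt hh1' hh2'
      omega
    have hboth : r 0 = 0 ∧ s 0 = 0 := by
      have heq : f * r 0 ^ 2 = C (f.eval 0) * s 0 ^ 2 := sub_eq_zero.mp hzero
      by_cases hr00 : r 0 = 0
      · refine ⟨hr00, ?_⟩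
        rw [hr00] at heq
        have : C (f.eval 0) * s 0 ^ 2 = 0 := by rw [← heq]; ring
        rcases mul_eq_zero.mp this with h | h
        · exact absurd (C_eq_zero.mp h) h0
        · exact pow_eq_zero_iff (by norm_num) |>.mp h
      · exfalso
        have hne : f * r 0 ^ 2 ≠ 0 := mul_ne_zero hf0 (pow_ne_zero _ hr00)
        have hne' : C (f.eval 0) * s 0 ^ 2 ≠ 0 := heq ▸ hne
        -- the multiplicities of `a` on the two sides have different parity
        have h1 := congrArg (rootMultiplicity a) heq
        rw [rootMultiplicity_mul hne, rootMultiplicity_mul hne', ha, rootMultiplicity_C] at h1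
        have hs00 : s 0 ≠ 0 := by rintro h; simp [h] at hne'
        have e1 : rootMultiplicity a (r 0 ^ 2) = 2 * rootMultiplicity a (r 0) := by
          rw [pow_two, rootMultiplicity_mul (mul_ne_zero hr00 hr00)]; ring
        have e2 : rootMultiplicity a (s 0 ^ 2) = 2 * rootMultiplicity a (s 0) := by
          rw [pow_two, rootMultiplicity_mul (mul_ne_zero hs00 hs00)]; ring
        omega
    rw [hboth.1, hboth.2] at hsum
    have hsum' : ∑ j ∈ Finset.range J, (r (j+1) + f ^ m * s (j+1)) * X ^ (p * j) = 0 := by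
      have : (X : (ZMod p)[X]) ^ p * ∑ j ∈ Finset.range J, (r (j+1) + f ^ m * s (j+1)) * X ^ (p * j) = 0 := by
        simpa using hsum
      exact (mul_eq_zero.mp this).resolve_left (pow_ne_zero _ X_ne_zero)
    have := ih (fun j => r (j+1)) (fun j => s (j+1)) (fun j => hr _) (fun j => hs _) hsum'
    intro j hj
    rcases j with _ | j
    · exact hboth
    · exact this j (by omega)

open Polynomial in
/-- A nonzero choice of `r`, `s` for which the first `l` derivatives of
`f ^ l * ∑ (r j + f ^ m * s j) * X ^ (p * j)` vanish wherever `f ^ m = e`: there are more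
coefficients than linear conditions. The factor `X ^ j` stands for `X ^ (p * j)`, which has the
same values on `ZMod p`. -/
theorem stepanov_exists {K : Type*} [Field K] (f : K[X]) (n m B J l : ℕ) (e : K)
    (hf : f.natDegree ≤ n) (hl : l * (B + l * n + J) < 2 * J * B) :
    ∃ r s : Fin J → K[X], (∀ j, r j ∈ degreeLT K B) ∧ (∀ j, s j ∈ degreeLT K B) ∧
      (∃ j, r j ≠ 0 ∨ s j ≠ 0) ∧
      ∀ k < l, ∑ j : Fin J, X ^ (j : ℕ) * (stepU f l k (r j) + C e * stepU f (l + m) k (s j)) = 0 := by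
  let V := Fin J → (degreeLT K B × degreeLT K B)
  have hfr : ∀ M : ℕ, Module.finrank K (degreeLT K M) = M := fun M => by
    rw [(degreeLTEquiv K M).finrank_eq]; simp
  have hfin : ∀ M : ℕ, Module.Finite K (degreeLT K M) := fun M =>
    Module.Finite.equiv (degreeLTEquiv K M).symm
  let Ψ : ℕ → (V →ₗ[K] K[X]) := fun k => ∑ j : Fin J,
    (LinearMap.mulLeft K ((X : K[X]) ^ (j : ℕ))) ∘ₗ
      ((stepU f l k) ∘ₗ (degreeLT K B).subtype ∘ₗ LinearMap.fst K _ _ ∘ₗ LinearMap.proj j +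
        LinearMap.mulLeft K (C e) ∘ₗ
        (stepU f (l + m) k) ∘ₗ (degreeLT K B).subtype ∘ₗ LinearMap.snd K _ _ ∘ₗ LinearMap.proj j)
  have hΨ : ∀ k v, Ψ k v = ∑ j : Fin J, X ^ (j : ℕ) *
      (stepU f l k (v j).1 + C e * stepU f (l + m) k (v j).2) := by
    intro k v; simp [Ψ]; rfl
  have hmem : ∀ k : Fin l, ∀ v, Ψ k v ∈ degreeLT K (B + l * n + J) := by
    intro k v
    rw [hΨ]
    refine Submodule.sum_mem _ fun j _ => ?_
    have hk : (k : ℕ) * n ≤ l * n := Nat.mul_le_mul_right _ k.2.le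
    have h1 : stepU f l k ((v j).1 : K[X]) ∈ degreeLT K (B + l * n) :=
      degreeLT_mono (by omega) (stepU_mem f _ n B l k hf (v j).1.2)
    have h2 : stepU f (l + m) k ((v j).2 : K[X]) ∈ degreeLT K (B + l * n) :=
      degreeLT_mono (by omega) (stepU_mem f _ n B (l + m) k hf (v j).2.2)
    have h3 : stepU f l k ((v j).1 : K[X]) + C e * stepU f (l + m) k ((v j).2 : K[X])
        ∈ degreeLT K (B + l * n) := by
      refine Submodule.add_mem _ h1 ?_
      rw [← smul_eq_C_mul]; exact Submodule.smul_mem _ _ h2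
    generalize stepU f l k ((v j).1 : K[X]) + C e * stepU f (l + m) k ((v j).2 : K[X]) = g at h3
    by_cases hg : g = 0
    · simp [hg]
    rw [mem_degreeLT, ← natDegree_lt_iff_degree_lt hg] at h3
    rw [mem_degreeLT, ← natDegree_lt_iff_degree_lt (mul_ne_zero (pow_ne_zero _ X_ne_zero) hg),
      natDegree_X_pow_mul _ hg]
    have := j.2
    omega
  let Φ : V →ₗ[K] (Fin l → degreeLT K (B + l * n + J)) :=
    LinearMap.pi fun k => LinearMap.codRestrict _ (Ψ k) (hmem k)
  have hker : LinearMap.ker Φ ≠ ⊥ := by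
    apply LinearMap.ker_ne_bot_of_finrank_lt
    have e1 : Module.finrank K V = J * (B + B) := by
      simp only [V]
      rw [Module.finrank_pi_fintype]
      simp [Module.finrank_prod, hfr]
    have e2 : Module.finrank K (Fin l → degreeLT K (B + l * n + J)) = l * (B + l * n + J) := by
      rw [Module.finrank_pi_fintype]
      simp [hfr]
    rw [e1, e2]
    calc _ < _ := hl
      _ = _ := by ring
  obtain ⟨v, hv, hv0⟩ := Submodule.exists_mem_ne_zero_of_ne_bot hker
  refine ⟨fun j => (v j).1, fun j => (v j).2, fun j => (v j).1.2, fun j => (v j).2.2, ?_, ?_⟩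
  · by_contra hcon
    push Not at hcon
    apply hv0
    funext j
    exact Prod.ext (Subtype.ext (hcon j).1) (Subtype.ext (hcon j).2)
  · intro k hk
    have h1 : Φ v ⟨k, hk⟩ = 0 := by rw [LinearMap.mem_ker.mp hv]; rfl
    have h2 : Ψ k v = 0 := congrArg Subtype.val h1
    rw [hΨ] at h2
    exact h2

open Polynomial in
/-- The auxiliary polynomial is nonzero and vanishes to order `l` at each `x` with `f(x) ^ m = e`,
so the number of such `x` is at most its degree divided by `l`. -/
theorem stepanov_count {p : ℕ} [Fact p.Prime] (m : ℕ) (hm : 2 * m + 1 = p) (f : (ZMod p)[X])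
    (n B J l : ℕ) (e : ZMod p) (hf : f.natDegree ≤ n) (hB : 2 * B + n ≤ p) (a : ZMod p)
    (ha : f.rootMultiplicity a = 1) (h0 : f.eval 0 ≠ 0)
    (hl : l * (B + l * n + J) < 2 * J * B) (hlp : l ≤ p) :
    l * (Finset.univ.filter fun x : ZMod p => f.eval x ^ m = e).card
      ≤ l * n + m * n + B + p * J := by
  have hf0 : f ≠ 0 := by rintro rfl; simp at h0
  rcases Nat.eq_zero_or_pos l with rfl | hl0
  · simp
  obtain ⟨r, s, hr, hs, hne, hk⟩ := stepanov_exists f n m B J l e hf hl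
  set R : (ZMod p)[X] := f ^ l * ∑ j : Fin J, (r j + f ^ m * s j) * X ^ (p * (j : ℕ)) with hR
  have hR0 : R ≠ 0 := by
    intro h
    have h1 : ∑ j : Fin J, (r j + f ^ m * s j) * X ^ (p * (j : ℕ)) = 0 :=
      (mul_eq_zero.mp h).resolve_left (pow_ne_zero _ hf0)
    let r' : ℕ → (ZMod p)[X] := fun j => if h : j < J then r ⟨j, h⟩ else 0
    let s' : ℕ → (ZMod p)[X] := fun j => if h : j < J then s ⟨j, h⟩ else 0
    have := stepanov_indep m hm f n B hf hB a ha h0 J r' s' ?_ ?_ ?_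
    · obtain ⟨j, hj⟩ := hne
      have h3 := this j j.2
      simp [r', s'] at h3
      tauto
    · intro j; simp only [r']; split_ifs
      · exact hr _
      · exact Submodule.zero_mem _
    · intro j; simp only [s']; split_ifs
      · exact hs _
      · exact Submodule.zero_mem _
    · rw [Finset.sum_range]
      rw [← h1]
      refine Finset.sum_congr rfl fun j _ => ?_
      simp [r', s']
  have hdeg : R.natDegree ≤ l * n + m * n + B + p * J := by
    refine natDegree_mul_le.trans ?_
    have h1 : (f ^ l).natDegree ≤ l * n := natDegree_pow_le.trans (Nat.mul_le_mul_left _ hf)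
    have h2 : (∑ j : Fin J, (r j + f ^ m * s j) * X ^ (p * (j : ℕ))).natDegree
        ≤ m * n + B + p * J := by
      apply natDegree_sum_le_of_forall_le
      intro j _
      have hdB : ∀ g ∈ degreeLT (ZMod p) B, g.natDegree ≤ B := by
        intro g hg
        rw [mem_degreeLT] at hg
        exact natDegree_le_of_degree_le hg.le
      have h3 : (f ^ m).natDegree ≤ m * n := natDegree_pow_le.trans (Nat.mul_le_mul_left _ hf)
      have h4 := hdB _ (hr j)
      have h5 := hdB _ (hs j)
      have h6 : (f ^ m * s j).natDegree ≤ m * n + B := natDegree_mul_le.trans (by omega)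
      have h7 : (r j + f ^ m * s j).natDegree ≤ m * n + B :=
        (natDegree_add_le _ _).trans (max_le (by omega) h6)
      have h8 : p * (j : ℕ) ≤ p * J := Nat.mul_le_mul_left _ j.2.le
      refine natDegree_mul_le.trans ?_
      rw [natDegree_X_pow]
      omega
    omega
  have hmult : ∀ x ∈ Finset.univ.filter (fun x : ZMod p => f.eval x ^ m = e),
      l ≤ R.roots.count x := by
    intro x hx
    rw [Finset.mem_filter] at hx
    rw [count_roots]
    suffices l - 1 < R.rootMultiplicity x by omega
    apply lt_rootMultiplicity_of_isRoot_iterate_derivative_of_mem_nonZeroDivisors' hR0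
    · intro k hkl
      have hRs : R = ∑ j : Fin J, (f ^ l * r j * X ^ (p * (j : ℕ))
          + f ^ (l + m) * s j * X ^ (p * (j : ℕ))) := by
        rw [hR, Finset.mul_sum]
        refine Finset.sum_congr rfl fun j _ => ?_
        rw [pow_add]; ring
      have hc : ∀ j : ℕ, derivative ((X : (ZMod p)[X]) ^ (p * j)) = 0 := by
        intro j; rw [derivative_X_pow]; simp
      rw [hRs, iterate_derivative_sum]
      simp only [iterate_map_add]
      rw [IsRoot.def, eval_finsetSum]
      have h1 := congrArg (eval x) (hk k (by omega))
      rw [eval_finsetSum, eval_zero] at h1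
      have h2 : ∀ j : Fin J, eval x (derivative^[k] (f ^ l * r j * X ^ (p * (j : ℕ)))
          + derivative^[k] (f ^ (l + m) * s j * X ^ (p * (j : ℕ))))
          = eval x f ^ (l - k) * eval x (X ^ (j : ℕ) * (stepU f l k (r j)
            + C e * stepU f (l + m) k (s j))) := by
        intro j
        rw [iterate_derivative_stepU f _ _ (hc j) l k (by omega),
          iterate_derivative_stepU f _ _ (hc j) (l + m) k (by omega)]
        rw [show l + m - k = (l - k) + m by omega]
        simp only [eval_add, eval_mul, eval_pow, eval_X, eval_C]
        rw [pow_add, hx.2, pow_mul, ZMod.pow_card]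
        ring
      rw [Finset.sum_congr rfl fun j _ => h2 j, ← Finset.mul_sum, h1, mul_zero]
    · intro k hk1 hk0
      rw [mem_nonZeroDivisors_iff_ne_zero, Ne, ZMod.natCast_eq_zero_iff]
      intro hdvd
      have := Nat.le_of_dvd (Nat.pos_of_ne_zero hk0) hdvd
      omega
  calc l * (Finset.univ.filter fun x : ZMod p => f.eval x ^ m = e).card
      = ∑ x ∈ Finset.univ.filter (fun x : ZMod p => f.eval x ^ m = e), l := by
        rw [Finset.sum_const, smul_eq_mul, mul_comm]
    _ ≤ ∑ x ∈ Finset.univ.filter (fun x : ZMod p => f.eval x ^ m = e), R.roots.count x :=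
        Finset.sum_le_sum hmult
    _ ≤ ∑ x ∈ Finset.univ, R.roots.count x :=
        Finset.sum_le_sum_of_subset (Finset.filter_subset _ _)
    _ = R.roots.card := Multiset.sum_count_eq_card (fun _ _ => Finset.mem_univ _)
    _ ≤ R.natDegree := card_roots' R
    _ ≤ _ := hdeg

/-- `stepanov_count` with `J = s = ⌊√p⌋`, `B` about `p / 2` and `l = 2 * s - (10 * n + 8)`: each
value `e` of `f ^ m` is taken at most `p / 2 + O(n √p)` times. -/
theorem stepanov_count' {p : ℕ} [Fact p.Prime] (m : ℕ) (hm : 2 * m + 1 = p) (f : Polynomial (ZMod p))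
    (n s : ℕ) (e : ZMod p) (hf : f.natDegree ≤ n) (a : ZMod p)
    (ha : f.rootMultiplicity a = 1) (h0 : f.eval 0 ≠ 0)
    (hs1 : s * s ≤ p) (hs2 : p < (s + 1) * (s + 1)) (hst : 10 * n + 8 ≤ s) :
    ((Finset.univ.filter fun x : ZMod p => f.eval x ^ m = e).card : ℝ)
      ≤ p / 2 + (32 * n + 20) * s := by
  obtain ⟨l, hl⟩ : ∃ l, l + (10 * n + 8) = 2 * s := ⟨2 * s - (10 * n + 8), by omega⟩
  have hsp : s ≤ p := by nlinarith
  obtain ⟨B, hB1, hB2⟩ : ∃ B, 2 * B + n ≤ p ∧ p ≤ 2 * B + n + 1 := ⟨(p - n) / 2, by omega, by omega⟩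
  have hls : s ≤ l := by omega
  have hs0 : 8 ≤ s := by omega
  have hlR : (l : ℝ) + (10 * n + 8) = 2 * s := by exact_mod_cast hl
  have hs1R : (s : ℝ) * s ≤ p := by exact_mod_cast hs1
  have hspR : (s : ℝ) ≤ p := by exact_mod_cast hsp
  have hB1R : 2 * (B : ℝ) + n ≤ p := by exact_mod_cast hB1
  have hB2R : (p : ℝ) ≤ 2 * B + n + 1 := by exact_mod_cast hB2
  have hlsR : (s : ℝ) ≤ l := by exact_mod_cast hls
  have hs0R : (8 : ℝ) ≤ s := by exact_mod_cast hs0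
  have hmR : 2 * (m : ℝ) + 1 = p := by exact_mod_cast hm
  have hn0 : (0 : ℝ) ≤ n := Nat.cast_nonneg n
  have hp0 : (0 : ℝ) < p := by linarith
  have hl2 : (l : ℝ) ≤ 2 * s := by linarith
  have hp4 : (p : ℝ) ≤ 4 * (s * s) := by
    have h1 : (p : ℝ) < (s + 1) * (s + 1) := by exact_mod_cast hs2
    nlinarith
  have key : l * (B + l * n + s) < 2 * s * B := by
    have : (l : ℝ) * (B + l * n + s) < 2 * s * B := by
      have e1 : (l : ℝ) * (l * n + s) ≤ p * (4 * n + 2) := by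
        calc (l : ℝ) * (l * n + s) ≤ (2 * s) * ((2 * s) * n + s) := by gcongr
          _ = (s * s) * (4 * n + 2) := by ring
          _ ≤ p * (4 * n + 2) := by gcongr
      have e2 : (l : ℝ) * B ≤ 2 * s * B - (10 * n + 8) * B := by
        rw [show (l : ℝ) = 2 * s - (10 * n + 8) by linarith]; linarith
      have e3 : (10 * (n : ℝ) + 8) * (p - n - 1) / 2 ≤ (10 * n + 8) * B := by nlinarith
      have e4 : (n : ℝ) + 1 ≤ p / 8 := by
        have : (10 * n + 8 : ℝ) ≤ s := by exact_mod_cast hst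
        nlinarith
      have e5 : (10 * (n : ℝ) + 8) * (p - p / 8) / 2 ≤ (10 * (n : ℝ) + 8) * (p - n - 1) / 2 := by
        have : (10 * (n : ℝ) + 8) * (p - p / 8) ≤ (10 * (n : ℝ) + 8) * (p - n - 1) := by
          apply mul_le_mul_of_nonneg_left <;> linarith
        linarith
      have : (p : ℝ) * (4 * n + 2) < (10 * (n : ℝ) + 8) * (p - p / 8) / 2 := by nlinarith
      linarith
    exact_mod_cast this
  have hlp : l ≤ p := by nlinarith
  have main := stepanov_count m hm f n B s l e hf hB1 a ha h0 key hlp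
  have mainR : (l : ℝ) * ((Finset.univ.filter fun x : ZMod p => f.eval x ^ m = e).card : ℝ)
      ≤ l * n + m * n + B + p * s := by exact_mod_cast main
  have hl0 : (0 : ℝ) < l := by linarith
  refine le_of_mul_le_mul_left (mainR.trans ?_) hl0
  have f1 : (l : ℝ) * n ≤ 2 * p * n := by gcongr; linarith
  have f2 : (m : ℝ) * n ≤ p / 2 * n := by gcongr; linarith
  have f3 : (B : ℝ) ≤ p / 2 := by linarith
  have f4 : (l : ℝ) * (p / 2) = s * p - (5 * n + 4) * p := by
    rw [show (l : ℝ) = 2 * s - (10 * n + 8) by linarith]; ring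
  have f5 : (p : ℝ) * (8 * n + 5) ≤ l * ((32 * n + 20) * s) := by
    calc (p : ℝ) * (8 * n + 5) ≤ (4 * (s * s)) * (8 * n + 5) := by gcongr
      _ = s * ((32 * n + 20) * s) := by ring
      _ ≤ _ := by gcongr
  rw [mul_add, f4]
  nlinarith

open Polynomial in
theorem rootMult_prod {p : ℕ} [Fact p.Prime] (n : ℕ) (b : Fin n → ZMod p) (i : Fin n)
    (hi : ∀ j, j ≠ i → b j ≠ b i) :
    (∏ j, (X + C (b j))).rootMultiplicity (-b i) = 1 := by
  have hne : (∏ j, (X + C (b j))) ≠ 0 := (monic_prod_of_monic _ _ fun j _ => monic_X_add_C _).ne_zero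
  rw [← Finset.mul_prod_erase Finset.univ _ (Finset.mem_univ i)] at hne ⊢
  rw [rootMultiplicity_mul hne]
  have h1 : rootMultiplicity (-b i) (X + C (b i)) = 1 := by
    have := rootMultiplicity_X_sub_C_self (x := -b i)
    simpa using this
  rw [h1, rootMultiplicity_eq_zero]
  rw [IsRoot.def, eval_prod, Finset.prod_eq_zero_iff]
  rintro ⟨j, hj, h⟩
  rw [Finset.mem_erase] at hj
  apply hi j hj.1
  simp at h
  linear_combination h

open Polynomial in
/-- The Weil bound when no `b j` vanishes and `p` is large: both `1` and `-1` are taken at most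
`p / 2 + O(n √p)` times, which bounds the sum from above and from below. -/
theorem weil_bound_aux {p : ℕ} [Fact p.Prime] (m : ℕ) (hm : 2 * m + 1 = p) (n : ℕ)
    (b : Fin n → ZMod p) (i : Fin n) (hi : ∀ j, j ≠ i → b j ≠ b i) (h0 : ∀ j, b j ≠ 0)
    (s : ℕ) (hs1 : s * s ≤ p) (hs2 : p < (s + 1) * (s + 1)) (hst : 10 * n + 8 ≤ s) :
    |((∑ x : ZMod p, quadraticChar (ZMod p) (∏ j, (x + b j)) : ℤ) : ℝ)|
      ≤ (65 * n + 40) * s := by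
  set f : (ZMod p)[X] := ∏ j, (X + C (b j)) with hf
  have hmul := rootMult_prod n b i hi
  have hev : ∀ x, f.eval x = ∏ j, (x + b j) := fun x => by rw [hf, eval_prod]; simp
  have hdeg : f.natDegree ≤ n := by
    rw [hf]
    refine (natDegree_prod_le _ _).trans ?_
    simp
  have hf0 : f.eval 0 ≠ 0 := by
    rw [hev, Finset.prod_ne_zero_iff]
    intro j _
    simpa using h0 j
  have hfne : f ≠ 0 := by intro h; simp [h] at hf0
  have n1 := stepanov_count' m hm f n s 1 hdeg (-b i) hmul hf0 hs1 hs2 hst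
  have n2 := stepanov_count' m hm f n s (-1) hdeg (-b i) hmul hf0 hs1 hs2 hst
  have n0 : (Finset.univ.filter fun x : ZMod p => f.eval x = 0).card ≤ n := by
    have : (Finset.univ.filter fun x : ZMod p => f.eval x = 0) ⊆ f.roots.toFinset := by
      intro x hx
      rw [Finset.mem_filter] at hx
      rw [Multiset.mem_toFinset, mem_roots hfne]
      exact hx.2
    exact (Finset.card_le_card this).trans ((Multiset.toFinset_card_le _).trans
      ((card_roots' f).trans hdeg))
  have hchar : ringChar (ZMod p) ≠ 2 := by
    rw [ZMod.ringChar_zmod_n]; omega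
  have hcard : Fintype.card (ZMod p) / 2 = m := by rw [ZMod.card]; omega
  have hq : ∀ a : ZMod p, ((quadraticChar (ZMod p) a : ℤ) : ZMod p) = a ^ m := by
    intro a; rw [quadraticChar_eq_pow_of_char_ne_two' hchar, hcard]
  have hup : ∀ a : ZMod p, quadraticChar (ZMod p) a
      ≤ 2 * (if a ^ m = 1 then 1 else 0) - 1 + (if a = 0 then 1 else 0) := by
    intro a
    by_cases ha : a = 0
    · subst ha; simp only [quadraticChar_zero, if_true]; split_ifs <;> norm_num
    · have := hq a
      rcases quadraticChar_dichotomy ha with h | h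
      · rw [h] at this ⊢
        rw [if_pos (by rw [← this]; simp), if_neg ha]; norm_num
      · rw [h, if_neg ha]; split_ifs <;> norm_num
  have hlo : ∀ a : ZMod p, 1 - 2 * (if a ^ m = -1 then 1 else 0) - (if a = 0 then 1 else 0)
      ≤ quadraticChar (ZMod p) a := by
    intro a
    by_cases ha : a = 0
    · subst ha; simp only [quadraticChar_zero, if_true]; split_ifs <;> norm_num
    · have := hq a
      rcases quadraticChar_dichotomy ha with h | h
      · rw [h, if_neg ha]; split_ifs <;> norm_num
      · rw [h] at this ⊢
        rw [if_pos (by rw [← this]; simp), if_neg ha]; norm_num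
  have hU := Finset.sum_le_sum fun (x : ZMod p) (_ : x ∈ Finset.univ) => hup (f.eval x)
  have hL := Finset.sum_le_sum fun (x : ZMod p) (_ : x ∈ Finset.univ) => hlo (f.eval x)
  rw [Finset.sum_add_distrib, Finset.sum_sub_distrib, ← Finset.mul_sum, Finset.sum_boole,
    Finset.sum_boole, Finset.sum_const, Finset.card_univ, ZMod.card] at hU
  rw [Finset.sum_sub_distrib, Finset.sum_sub_distrib, ← Finset.mul_sum, Finset.sum_boole,
    Finset.sum_boole, Finset.sum_const, Finset.card_univ, ZMod.card] at hL
  simp only [hev] at hU hL n1 n2 n0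
  set S := ∑ x : ZMod p, quadraticChar (ZMod p) (∏ j, (x + b j))
  have n0R : ((Finset.univ.filter fun x : ZMod p => ∏ j, (x + b j) = 0).card : ℝ) ≤ n := by
    exact_mod_cast n0
  simp only [nsmul_eq_mul, mul_one] at hU hL
  have hUR : (S : ℝ) ≤ _ := Int.cast_le.mpr hU
  have hLR : _ ≤ (S : ℝ) := Int.cast_le.mpr hL
  push_cast at hUR hLR
  have hs8 : (10 * n + 8 : ℝ) ≤ s := by exact_mod_cast hst
  have hn0 : (0 : ℝ) ≤ n := Nat.cast_nonneg n
  have : (n : ℝ) ≤ n * s := by nlinarith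
  rw [abs_le]
  constructor <;> linarith

theorem quadraticChar_abs_le {p : ℕ} [Fact p.Prime] (a : ZMod p) :
    |quadraticChar (ZMod p) a| ≤ 1 := by
  by_cases ha : a = 0
  · simp [ha]
  · rcases quadraticChar_dichotomy ha with h | h <;> simp [h]

theorem quadraticChar_sum_abs_le {p : ℕ} [Fact p.Prime] (g : ZMod p → ZMod p) :
    |((∑ x : ZMod p, quadraticChar (ZMod p) (g x) : ℤ) : ℝ)| ≤ p := by
  have : |∑ x : ZMod p, quadraticChar (ZMod p) (g x)| ≤ p := by
    refine (Finset.abs_sum_le_sum_abs _ _).trans ?_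
    refine (Finset.sum_le_sum fun x _ => quadraticChar_abs_le (g x)).trans ?_
    simp [ZMod.card]
  exact_mod_cast this

/-- Weil's bound for the sum of the quadratic character over a product of `n` linear factors, one
of which occurs exactly once. A translation makes all `b j` nonzero, and small `p` is trivial. -/
theorem weil_bound {p : ℕ} [Fact p.Prime] (hp2 : p ≠ 2) (n : ℕ) (b : Fin n → ZMod p) (i : Fin n)
    (hi : ∀ j, j ≠ i → b j ≠ b i) :
    |((∑ x : ZMod p, quadraticChar (ZMod p) (∏ j, (x + b j)) : ℤ) : ℝ)|
      ≤ (65 * n + 40) * √p := by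
  have hp := (Fact.out : p.Prime)
  obtain ⟨m, hm⟩ : ∃ m, 2 * m + 1 = p := by
    obtain ⟨k, hk⟩ := hp.odd_of_ne_two hp2; exact ⟨k, hk.symm⟩
  have hs1 := Nat.sqrt_le p
  have hs2 : p < (Nat.sqrt p + 1) * (Nat.sqrt p + 1) := Nat.lt_succ_sqrt p
  set s := Nat.sqrt p with hs
  by_cases hst : 10 * n + 8 ≤ s
  · have hsR : (s : ℝ) ≤ √p := by
      apply Real.le_sqrt_of_sq_le
      rw [pow_two]; exact_mod_cast hs1
    obtain ⟨t, ht⟩ : ∃ t : ZMod p, t ∉ Finset.univ.image fun j => -b j := by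
      by_contra hcon
      push Not at hcon
      have h1 : (Finset.univ : Finset (ZMod p)) ⊆ Finset.univ.image fun j => -b j :=
        fun x _ => hcon x
      have h2 := (Finset.card_le_card h1).trans Finset.card_image_le
      rw [Finset.card_univ, ZMod.card, Finset.card_univ, Fintype.card_fin] at h2
      nlinarith
    have hshift : ∑ x : ZMod p, quadraticChar (ZMod p) (∏ j, (x + b j))
        = ∑ x : ZMod p, quadraticChar (ZMod p) (∏ j, (x + (b j + t))) := by
      rw [← Equiv.sum_comp (Equiv.addRight t)]
      refine Finset.sum_congr rfl fun x _ => ?_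
      congr 1
      refine Finset.prod_congr rfl fun j _ => ?_
      simp only [Equiv.coe_addRight]
      ring
    rw [hshift]
    refine (weil_bound_aux m hm n (fun j => b j + t) i (fun j hj h => hi j hj (by simpa using h))
      (fun j h => ht ?_) s hs1 hs2 hst).trans ?_
    · rw [Finset.mem_image]
      exact ⟨j, Finset.mem_univ _, by linear_combination -h⟩
    · gcongr
  · refine (quadraticChar_sum_abs_le _).trans ?_
    have h1 : √(p : ℝ) * √p = p := Real.mul_self_sqrt (Nat.cast_nonneg p)
    have h2 : √(p : ℝ) ≤ s + 1 := by
      apply Real.sqrt_le_iff.mpr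
      refine ⟨by positivity, ?_⟩
      rw [pow_two]; exact_mod_cast hs2.le
    have h3 : (s : ℝ) + 1 ≤ 10 * n + 8 := by
      have : s + 1 ≤ 10 * n + 8 := by omega
      exact_mod_cast this
    calc (p : ℝ) = √p * √p := h1.symm
      _ ≤ (65 * n + 40) * √p := by
        have hn0 : (0 : ℝ) ≤ n := Nat.cast_nonneg n
        gcongr; linarith

/-! ### Complete character sums modulo a squarefree number -/

theorem sum_zmod_eq_range {p : ℕ} [NeZero p] {M : Type*} [AddCommMonoid M] (F : ZMod p → M) :
    ∑ x : ZMod p, F x = ∑ x ∈ Finset.range p, F (x : ZMod p) := by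
  symm
  refine Finset.sum_nbij' (fun x => (x : ZMod p)) ZMod.val ?_ ?_ ?_ ?_ ?_
  · simp
  · intro x _; simpa using ZMod.val_lt x
  · intro x hx; exact ZMod.val_cast_of_lt (by simpa using hx)
  · intro x _; simp
  · simp

/-- Chinese remainder theorem for the sum of a product of two periodic functions. -/
theorem sum_range_mul_coprime (m n : ℕ) (hm : 0 < m) (hn : 0 < n) (h : m.Coprime n) (f g : ℕ → ℤ)
    (hf : ∀ x, f (x % m) = f x) (hg : ∀ x, g (x % n) = g x) :
    ∑ x ∈ Finset.range (m * n), f x * g x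
      = (∑ x ∈ Finset.range m, f x) * ∑ x ∈ Finset.range n, g x := by
  rw [Finset.sum_mul_sum, ← Finset.sum_product']
  refine Finset.sum_nbij (fun x => (x % m, x % n)) ?_ ?_ ?_ ?_
  · intro x _
    simp [Nat.mod_lt _ hm, Nat.mod_lt _ hn]
  · intro x hx y hy hxy
    simp only [Prod.mk.injEq] at hxy
    have : x ≡ y [MOD m * n] := (Nat.modEq_and_modEq_iff_modEq_mul h).mp ⟨hxy.1, hxy.2⟩
    simp only [Finset.coe_range, Set.mem_Iio] at hx hy
    exact Nat.ModEq.eq_of_lt_of_lt this hx hy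
  · rintro ⟨a, b⟩ hab
    simp only [Finset.coe_product, Finset.coe_range, Set.mem_prod, Set.mem_Iio] at hab
    refine ⟨(Nat.chineseRemainder h a b : ℕ), ?_, ?_⟩
    · simpa using Nat.chineseRemainder_lt_mul h a b hm.ne' hn.ne'
    · have h1 := (Nat.chineseRemainder h a b).2
      simp only [Prod.mk.injEq]
      exact ⟨Nat.mod_eq_of_modEq h1.1 hab.1, Nat.mod_eq_of_modEq h1.2 hab.2⟩
  · intro x _
    simp [hf, hg]

/-- The complete sum `∑_{x mod D} (∏ (x + b_j) / D)` of Jacobi symbols. -/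
def completeSum {n : ℕ} (D : ℕ) (b : Fin n → ℤ) : ℤ :=
  ∑ x ∈ Finset.range D, jacobiSym (∏ j, ((x : ℤ) + b j)) D

theorem jacobi_prod_periodic {n : ℕ} (D : ℕ) (b : Fin n → ℤ) (x : ℕ) :
    jacobiSym (∏ j, (((x % D : ℕ) : ℤ) + b j)) D = jacobiSym (∏ j, ((x : ℤ) + b j)) D := by
  apply jacobiSym.mod_left'
  have : ∏ j, (((x % D : ℕ) : ℤ) + b j) ≡ ∏ j, ((x : ℤ) + b j) [ZMOD D] := by
    apply Int.ModEq.prod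
    intro j _
    apply Int.ModEq.add_right
    push_cast
    exact Int.mod_modEq _ _
  exact this

theorem completeSum_mul {n : ℕ} (D E : ℕ) (hD : 0 < D) (hE : 0 < E) (h : D.Coprime E)
    (b : Fin n → ℤ) : completeSum (D * E) b = completeSum D b * completeSum E b := by
  unfold completeSum
  rw [← sum_range_mul_coprime D E hD hE h]
  · refine Finset.sum_congr rfl fun x _ => ?_
    rw [jacobiSym.mul_right' _ hD.ne' hE.ne']
  · exact jacobi_prod_periodic D b
  · exact jacobi_prod_periodic E b

theorem completeSum_prime {n : ℕ} (p : ℕ) [Fact p.Prime] (b : Fin n → ℤ) :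
    completeSum p b = ∑ x : ZMod p, quadraticChar (ZMod p) (∏ j, (x + (b j : ZMod p))) := by
  rw [sum_zmod_eq_range]
  unfold completeSum
  refine Finset.sum_congr rfl fun x _ => ?_
  rw [← jacobiSym.legendreSym.to_jacobiSym, legendreSym]
  push_cast
  rfl

/-- If some `b j` with `j ≠ i` agrees with `b i` modulo `p`, its gcd contributes a factor `p` and the
bound is trivial; otherwise `- b i` is a simple root of the polynomial and the Weil bound applies. -/
theorem completeSum_prime_bound {n : ℕ} (p : ℕ) (hp : p.Prime) (hp2 : p ≠ 2) (b : Fin n → ℤ)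
    (i : Fin n) :
    |(completeSum p b : ℝ)| ≤ (65 * n + 40) * √p *
      ∏ j ∈ Finset.univ.erase i, ((Int.gcd p (b i - b j) : ℕ) : ℝ) := by
  have := Fact.mk hp
  rw [completeSum_prime]
  have hg1 : ∀ j, 1 ≤ ((Int.gcd p (b i - b j) : ℕ) : ℝ) := by
    intro j
    have : 0 < Int.gcd p (b i - b j) := Int.gcd_pos_of_ne_zero_left _ (by exact_mod_cast hp.ne_zero)
    exact_mod_cast this
  have hn0 : (0 : ℝ) ≤ n := Nat.cast_nonneg n
  have hP : 1 ≤ ∏ j ∈ Finset.univ.erase i, ((Int.gcd p (b i - b j) : ℕ) : ℝ) := by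
    rw [← Finset.prod_const_one (s := Finset.univ.erase i)]
    exact Finset.prod_le_prod (fun _ _ => zero_le_one) fun j _ => hg1 j
  by_cases hi : ∀ j, j ≠ i → (b j : ZMod p) ≠ b i
  · refine (weil_bound hp2 n _ i hi).trans ?_
    exact le_mul_of_one_le_right (by positivity) hP
  · push Not at hi
    obtain ⟨j, hji, hj⟩ := hi
    refine (quadraticChar_sum_abs_le _).trans ?_
    have hdvd : (p : ℤ) ∣ b i - b j := (ZMod.intCast_eq_intCast_iff_dvd_sub _ _ _).mp hj
    have hgp : Int.gcd p (b i - b j) = p := by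
      simpa [Int.gcd] using Nat.gcd_eq_left (Int.natCast_dvd.mp hdvd)
    have h1 : (p : ℝ) ≤ ∏ j ∈ Finset.univ.erase i, ((Int.gcd p (b i - b j) : ℕ) : ℝ) := by
      rw [← Finset.mul_prod_erase _ _ (Finset.mem_erase.mpr ⟨hji, Finset.mem_univ _⟩), hgp]
      refine le_mul_of_one_le_right (by positivity) ?_
      rw [← Finset.prod_const_one (s := (Finset.univ.erase i).erase j)]
      exact Finset.prod_le_prod (fun _ _ => zero_le_one) fun j _ => hg1 j
    refine h1.trans (le_mul_of_one_le_left (by positivity) ?_)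
    have : 1 ≤ √(p : ℝ) := by
      rw [Real.one_le_sqrt]; exact_mod_cast hp.one_lt.le
    nlinarith

/-- The bound for prime moduli multiplied over the prime factors of `D`. -/
theorem completeSum_bound {n : ℕ} (D : ℕ) (hD : Squarefree D) (hodd : Odd D) (b : Fin n → ℤ)
    (i : Fin n) :
    |(completeSum D b : ℝ)| ≤ (65 * n + 40) ^ D.primeFactors.card * √D *
      ∏ j ∈ Finset.univ.erase i, ((Int.gcd D (b i - b j) : ℕ) : ℝ) := by
  induction D using induction_on_primes with
  | zero => simp at hD
  | one =>
    simp [completeSum]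
  | prime_mul p a hp ih =>
    have hcop : p.Coprime a := (Nat.squarefree_mul_iff.mp hD).1
    have ha := (Nat.squarefree_mul_iff.mp hD).2.2
    have hpo : Odd p := (Nat.odd_mul.mp hodd).1
    have hao : Odd a := (Nat.odd_mul.mp hodd).2
    have ha0 : 0 < a := hao.pos
    rw [completeSum_mul p a hp.pos ha0 hcop]
    have h1 := completeSum_prime_bound p hp (by rintro rfl; revert hpo; decide) b i
    have h2 := ih ha hao
    push_cast
    rw [abs_mul]
    refine (mul_le_mul h1 h2 (abs_nonneg _) (by positivity)).trans_eq ?_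
    have hc : (p * a).primeFactors.card = a.primeFactors.card + 1 := by
      rw [hcop.primeFactors_mul, Finset.card_union_of_disjoint hcop.disjoint_primeFactors,
        hp.primeFactors, Finset.card_singleton, add_comm]
    have hg : ∀ j, ((Int.gcd ((p : ℤ) * a) (b i - b j) : ℕ) : ℝ)
        = (Int.gcd p (b i - b j) : ℕ) * (Int.gcd a (b i - b j) : ℕ) := by
      intro j
      have : Int.gcd ((p : ℤ) * a) (b i - b j) = Int.gcd p (b i - b j) * Int.gcd a (b i - b j) := by
        simp only [Int.gcd, Int.natAbs_mul, Int.natAbs_natCast]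
        rw [Nat.gcd_comm, Nat.Coprime.gcd_mul _ hcop, Nat.gcd_comm _ p, Nat.gcd_comm _ a]
      rw [this, Nat.cast_mul]
    simp only [hg]
    rw [Finset.prod_mul_distrib, hc, pow_succ, Real.sqrt_mul (Nat.cast_nonneg p)]
    ring

/-! ### High moments of short character sums -/

theorem jacobi_prod {ι : Type*} (s : Finset ι) (f : ι → ℤ) (D : ℕ) :
    jacobiSym (∏ j ∈ s, f j) D = ∏ j ∈ s, jacobiSym (f j) D := by
  induction s using Finset.induction_on with
  | empty => simp
  | insert a s ha ih => rw [Finset.prod_insert ha, Finset.prod_insert ha, jacobiSym.mul_left, ih]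

/-- Expanding the power turns the `n`-th moment into complete sums, one for each tuple of shifts. -/
theorem moment_expand (D B n : ℕ) :
    ∑ x ∈ Finset.range D, (∑ b ∈ Finset.range B, jacobiSym ((x : ℤ) + b) D) ^ n
      = ∑ b ∈ Fintype.piFinset (fun _ : Fin n => Finset.range B),
          completeSum D (fun j => (b j : ℤ)) := by
  unfold completeSum
  rw [Finset.sum_comm]
  refine Finset.sum_congr rfl fun x _ => ?_
  have : (∑ b ∈ Finset.range B, jacobiSym ((x : ℤ) + b) D) ^ n
      = ∏ _j : Fin n, ∑ b ∈ Finset.range B, jacobiSym ((x : ℤ) + b) D := by simp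
  rw [this, Finset.prod_univ_sum]
  refine Finset.sum_congr rfl fun b _ => ?_
  rw [jacobi_prod]

theorem jacobi_abs_le (a : ℤ) (D : ℕ) : |jacobiSym a D| ≤ 1 := by
  rcases jacobiSym.trichotomy a D with h | h | h <;> simp [h]

theorem completeSum_trivial {n : ℕ} (D : ℕ) (b : Fin n → ℤ) : |(completeSum D b : ℝ)| ≤ D := by
  have : |completeSum D b| ≤ D := by
    refine (Finset.abs_sum_le_sum_abs _ _).trans ?_
    refine (Finset.sum_le_sum fun x _ => jacobi_abs_le _ D).trans ?_
    simp
  exact_mod_cast this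

/-- The tuples in which every value is repeated: they take at most half as many values as they
have entries. -/
theorem card_bad_tuples (B r : ℕ) (hr : 0 < r) :
    ((Fintype.piFinset (fun _ : Fin (2 * r) => Finset.range B)).filter
      (fun b => ∀ i, ∃ j, j ≠ i ∧ b j = b i)).card ≤ B ^ r * r ^ (2 * r) := by
  have hsub : ((Fintype.piFinset (fun _ : Fin (2 * r) => Finset.range B)).filter
      (fun b => ∀ i, ∃ j, j ≠ i ∧ b j = b i)) ⊆
      ((Fintype.piFinset (fun _ : Fin r => Finset.range B)) ×ˢ
        (Finset.univ : Finset (Fin (2 * r) → Fin r))).image (fun ec j => ec.1 (ec.2 j)) := by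
    intro b hb
    rw [Finset.mem_filter, Fintype.mem_piFinset] at hb
    obtain ⟨hb, hbad⟩ := hb
    have hcard : (Finset.univ.image b).card * 2 ≤ 2 * r := by
      have h1 := Finset.card_eq_sum_card_image b (Finset.univ : Finset (Fin (2 * r)))
      rw [Finset.card_univ, Fintype.card_fin] at h1
      refine le_trans ?_ h1.ge
      rw [← smul_eq_mul]
      apply Finset.card_nsmul_le_sum
      intro y hy
      obtain ⟨i, _, rfl⟩ := Finset.mem_image.mp hy
      obtain ⟨j, hj, hji⟩ := hbad i
      have : ({i, j} : Finset (Fin (2 * r))) ⊆ Finset.univ.filter fun k => b k = b i := by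
        intro k hk
        rw [Finset.mem_insert, Finset.mem_singleton] at hk
        rcases hk with rfl | rfl <;> simp [hji]
      have h2 := Finset.card_le_card this
      rwa [Finset.card_pair hj.symm] at h2
    set s := Finset.univ.image b with hs
    have hs0 : 0 < s.card := by
      rw [Finset.card_pos]
      exact ⟨b ⟨0, by omega⟩, Finset.mem_image_of_mem _ (Finset.mem_univ _)⟩
    have hsr : s.card ≤ r := by omega
    let e : Fin r → ℕ := fun k => if h : k.1 < s.card then (s.equivFin.symm ⟨k.1, h⟩ : ℕ)
      else (s.equivFin.symm ⟨0, hs0⟩ : ℕ)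
    have hmem : ∀ j, b j ∈ s := fun j => Finset.mem_image_of_mem _ (Finset.mem_univ _)
    let c : Fin (2 * r) → Fin r := fun j =>
      ⟨(s.equivFin ⟨b j, hmem j⟩).1, (s.equivFin ⟨b j, hmem j⟩).2.trans_le hsr⟩
    rw [Finset.mem_image]
    refine ⟨(e, c), ?_, ?_⟩
    · rw [Finset.mem_product, Fintype.mem_piFinset]
      refine ⟨fun k => ?_, Finset.mem_univ _⟩
      have hsB : ∀ y ∈ s, y ∈ Finset.range B := by
        intro y hy
        obtain ⟨i, _, rfl⟩ := Finset.mem_image.mp hy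
        exact hb i
      simp only [e]
      split_ifs with h <;> exact hsB _ (Subtype.property _)
    · funext j
      simp only [e, c]
      rw [dif_pos (s.equivFin ⟨b j, hmem j⟩).2]
      simp
  refine (Finset.card_le_card hsub).trans (Finset.card_image_le.trans ?_)
  rw [Finset.card_product]
  simp

/-- The sum of `gcd (D, c - y)` over `y ≠ c` in `[0, B)`, on average a divisor function. -/
theorem sum_gcd_le (D B c : ℕ) (hD : D ≠ 0) (hc : c < B) :
    ∑ y ∈ Finset.range B, (if y = c then (0 : ℝ) else ((Int.gcd D ((c : ℤ) - y) : ℕ) : ℝ))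
      ≤ B * D.divisors.card := by
  have h1 : ∀ y ∈ Finset.range B,
      (if y = c then (0 : ℝ) else ((Int.gcd D ((c : ℤ) - y) : ℕ) : ℝ))
      ≤ ∑ d ∈ D.divisors, if y ≡ c [MOD d] ∧ y ≠ c then (d : ℝ) else 0 := by
    intro y _
    split_ifs with h
    · exact Finset.sum_nonneg fun d _ => by split_ifs <;> positivity
    · set g := Int.gcd D ((c : ℤ) - y) with hg
      have hgD : g ∈ D.divisors := by
        rw [Nat.mem_divisors]
        refine ⟨?_, hD⟩
        have := Int.gcd_dvd_left (D : ℤ) ((c : ℤ) - y)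
        exact Int.natCast_dvd_natCast.mp this
      have hgy : y ≡ c [MOD g] := by
        rw [Nat.modEq_iff_dvd]
        exact Int.gcd_dvd_right (D : ℤ) ((c : ℤ) - y)
      have := Finset.single_le_sum (f := fun d : ℕ => if y ≡ c [MOD d] ∧ y ≠ c then (d : ℝ) else 0)
        (fun d _ => by split_ifs <;> positivity) hgD
      simpa [hgy, h] using this
  refine (Finset.sum_le_sum h1).trans ?_
  rw [Finset.sum_comm, mul_comm, ← nsmul_eq_mul]
  apply Finset.sum_le_card_nsmul
  intro d hd
  have hd0 : 0 < d := Nat.pos_of_mem_divisors hd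
  rw [← Finset.sum_filter, Finset.sum_const, nsmul_eq_mul]
  have hcard : ((Finset.range B).filter fun y => y ≡ c [MOD d] ∧ y ≠ c).card ≤ B / d := by
    have h2 : ((Finset.range B).filter fun y => y ≡ c [MOD d] ∧ y ≠ c)
        = ((Finset.range B).filter fun y => y ≡ c [MOD d]).erase c := by
      ext y; simp only [Finset.mem_filter, Finset.mem_erase]; tauto
    rw [h2, Finset.card_erase_of_mem (by simp [hc, Nat.ModEq.refl])]
    rw [← Nat.count_eq_card_filter_range, Nat.count_modEq_card _ hd0]
    have := Nat.zero_le (B / d)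
    generalize B / d = t
    split_ifs <;> omega
  have hcR : (((Finset.range B).filter fun y => y ≡ c [MOD d] ∧ y ≠ c).card : ℝ) ≤ (B : ℝ) / d :=
    (Nat.cast_le.mpr hcard).trans Nat.cast_div_le
  calc _ ≤ (B : ℝ) / d * d := by gcongr
    _ = B := by field_simp

/-- The total of the gcd factors from `completeSum_bound` over the tuples whose `i`-th entry is not
repeated; the value `0` discards the other tuples. -/
theorem moment_good_i (D B n : ℕ) (hD : D ≠ 0) (i : Fin n) :
    ∑ b ∈ Fintype.piFinset (fun _ : Fin n => Finset.range B),
      ∏ j ∈ Finset.univ.erase i,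
        (if b j = b i then (0 : ℝ) else ((Int.gcd D ((b i : ℤ) - b j) : ℕ) : ℝ))
      ≤ B * (B * D.divisors.card) ^ (n - 1) := by
  set G : ℕ → ℕ → ℝ := fun c y => if y = c then (0 : ℝ) else ((Int.gcd D ((c : ℤ) - y) : ℕ) : ℝ)
    with hG
  have hG0 : ∀ c y, 0 ≤ G c y := by
    intro c y; simp only [hG]; split_ifs <;> positivity
  set h : ℕ → Fin n → ℕ → ℝ := fun c j y => if j = i then (if y = c then 1 else 0) else G c y
    with hh
  have h1 : ∀ b ∈ Fintype.piFinset (fun _ : Fin n => Finset.range B),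
      ∏ j ∈ Finset.univ.erase i, G (b i) (b j) = ∑ c ∈ Finset.range B, ∏ j, h c j (b j) := by
    intro b hb
    have hbi : b i ∈ Finset.range B := Fintype.mem_piFinset.mp hb i
    have h2 : ∀ c, ∏ j, h c j (b j) = if b i = c then ∏ j ∈ Finset.univ.erase i, G c (b j) else 0 := by
      intro c
      rw [← Finset.mul_prod_erase _ _ (Finset.mem_univ i)]
      have h3 : ∏ j ∈ Finset.univ.erase i, h c j (b j) = ∏ j ∈ Finset.univ.erase i, G c (b j) := by
        refine Finset.prod_congr rfl fun j hj => ?_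
        simp only [hh, if_neg (Finset.ne_of_mem_erase hj)]
      rw [h3]
      simp only [hh, if_true]
      split_ifs <;> simp
    simp only [h2]
    rw [Finset.sum_ite_eq, if_pos hbi]
  have h2 := Finset.sum_congr rfl h1
  simp only [hG] at h2 ⊢
  rw [h2, Finset.sum_comm]
  have h3 : ∀ c ∈ Finset.range B, ∑ b ∈ Fintype.piFinset (fun _ : Fin n => Finset.range B),
      ∏ j, h c j (b j) ≤ (B * D.divisors.card : ℝ) ^ (n - 1) := by
    intro c hc
    rw [← Finset.prod_univ_sum (fun _ : Fin n => Finset.range B) (h c),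
      ← Finset.mul_prod_erase _ _ (Finset.mem_univ i)]
    have h4 : ∑ y ∈ Finset.range B, h c i y = 1 := by
      simp only [hh, if_true]
      rw [Finset.sum_ite_eq', if_pos hc]
    rw [h4, one_mul]
    have h5 : ∀ j ∈ Finset.univ.erase i, ∑ y ∈ Finset.range B, h c j y ≤ B * D.divisors.card := by
      intro j hj
      simp only [hh, if_neg (Finset.ne_of_mem_erase hj)]
      exact sum_gcd_le D B c hD (Finset.mem_range.mp hc)
    refine (Finset.prod_le_prod (fun j hj => ?_) h5).trans ?_
    · refine Finset.sum_nonneg fun y _ => ?_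
      simp only [hh, if_neg (Finset.ne_of_mem_erase hj)]
      exact hG0 c y
    · rw [Finset.prod_const, Finset.card_erase_of_mem (Finset.mem_univ i), Finset.card_univ,
        Fintype.card_fin]
  refine (Finset.sum_le_card_nsmul _ _ _ h3).trans ?_
  rw [Finset.card_range, nsmul_eq_mul]

/-- Tuples of shifts with an entry that is not repeated are estimated by `completeSum_bound`, with
that entry in the role of `i`. The few others (`card_bad_tuples`) are estimated trivially. -/
theorem moment_bound (D B r : ℕ) (hr : 0 < r) (hD : Squarefree D) (hodd : Odd D) :
    ((∑ x ∈ Finset.range D, (∑ b ∈ Finset.range B, jacobiSym ((x : ℤ) + b) D) ^ (2 * r) : ℤ) : ℝ)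
      ≤ B ^ r * r ^ (2 * r) * D + 2 * r * ((130 * r + 40) ^ D.primeFactors.card * √D *
          (B * (B * D.divisors.card) ^ (2 * r - 1))) := by
  rw [moment_expand]
  set T := Fintype.piFinset (fun _ : Fin (2 * r) => Finset.range B) with hT
  set K : ℝ := (130 * r + 40) ^ D.primeFactors.card * √D with hK
  have hK0 : 0 ≤ K := by positivity
  set F : Fin (2 * r) → (Fin (2 * r) → ℕ) → ℝ := fun i b => ∏ j ∈ Finset.univ.erase i,
        (if b j = b i then (0 : ℝ) else ((Int.gcd D ((b i : ℤ) - b j) : ℕ) : ℝ)) with hF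
  have hF0 : ∀ i b, 0 ≤ F i b := by
    intro i b
    refine Finset.prod_nonneg fun j _ => ?_
    split_ifs <;> positivity
  have hpt : ∀ b ∈ T, (completeSum D (fun j => (b j : ℤ)) : ℝ)
      ≤ (if ∀ i, ∃ j, j ≠ i ∧ b j = b i then (D : ℝ) else 0) + ∑ i, K * F i b := by
    intro b _
    have hs0 : 0 ≤ ∑ i, K * F i b := Finset.sum_nonneg fun i _ => mul_nonneg hK0 (hF0 i b)
    split_ifs with h
    · have := (le_abs_self _).trans (completeSum_trivial D (fun j => (b j : ℤ)))
      linarith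
    · push Not at h
      obtain ⟨i, hi⟩ := h
      have h1 := (le_abs_self _).trans (completeSum_bound D hD hodd (fun j => (b j : ℤ)) i)
      have h2 : ∏ j ∈ Finset.univ.erase i, ((Int.gcd D ((b i : ℤ) - b j) : ℕ) : ℝ) = F i b := by
        refine Finset.prod_congr rfl fun j hj => ?_
        rw [if_neg (hi j (Finset.ne_of_mem_erase hj))]
      have h3 : K * F i b ≤ ∑ i, K * F i b :=
        Finset.single_le_sum (f := fun i => K * F i b) (fun i _ => mul_nonneg hK0 (hF0 i b))
          (Finset.mem_univ i)
      rw [h2] at h1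
      rw [zero_add]
      refine h1.trans (le_trans (le_of_eq ?_) h3)
      rw [hK]; push_cast; ring
  push_cast
  refine (Finset.sum_le_sum hpt).trans ?_
  rw [Finset.sum_add_distrib, ← Finset.sum_filter, Finset.sum_const, nsmul_eq_mul, Finset.sum_comm]
  refine add_le_add ?_ ?_
  · gcongr
    exact_mod_cast card_bad_tuples B r hr
  · have : ∀ i ∈ (Finset.univ : Finset (Fin (2 * r))), ∑ b ∈ T, K * F i b
        ≤ K * (B * (B * D.divisors.card) ^ (2 * r - 1)) := by
      intro i _
      rw [← Finset.mul_sum]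
      exact mul_le_mul_of_nonneg_left (moment_good_i D B (2 * r) hD.ne_zero i) hK0
    refine (Finset.sum_le_card_nsmul _ _ _ this).trans ?_
    simp

/-! ### Burgess's method -/

theorem sum_shift_le (f : ℕ → ℝ) (hf : ∀ k, |f k| ≤ 1) (N h : ℕ) :
    |∑ k ∈ Finset.range N, f k - ∑ k ∈ Finset.range N, f (k + h)| ≤ 2 * h := by
  have h1 : ∑ k ∈ Finset.range (N + h), f k
      = ∑ k ∈ Finset.range N, f k + ∑ k ∈ Finset.range h, f (N + k) := Finset.sum_range_add f N h
  have h2 : ∑ k ∈ Finset.range (h + N), f k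
      = ∑ k ∈ Finset.range h, f k + ∑ k ∈ Finset.range N, f (h + k) := Finset.sum_range_add f h N
  have h3 : ∀ g : ℕ → ℝ, (∀ k, |g k| ≤ 1) → |∑ k ∈ Finset.range h, g k| ≤ h := by
    intro g hg
    refine (Finset.abs_sum_le_sum_abs _ _).trans ((Finset.sum_le_sum fun k _ => hg k).trans ?_)
    simp
  have h4 := h3 f hf
  have h5 := h3 (fun k => f (N + k)) (fun k => hf _)
  have h6 : ∑ k ∈ Finset.range N, f (k + h) = ∑ k ∈ Finset.range N, f (h + k) := by
    simp only [add_comm]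
  rw [add_comm h N, h1] at h2
  have h7 : ∑ k ∈ Finset.range N, f k - ∑ k ∈ Finset.range N, f (k + h)
      = ∑ k ∈ Finset.range h, f k - ∑ k ∈ Finset.range h, f (N + k) := by
    rw [h6]; linarith
  rw [h7]
  have := abs_sub (∑ k ∈ Finset.range h, f k) (∑ k ∈ Finset.range h, f (N + k))
  linarith

theorem weighted_pow_le {ι : Type*} (s : Finset ι) (w z : ι → ℝ) (hw : ∀ i ∈ s, 0 ≤ w i)
    (hz : ∀ i ∈ s, 0 ≤ z i) (n : ℕ) :
    (∑ i ∈ s, w i * z i) ^ (n + 1) ≤ (∑ i ∈ s, w i) ^ n * ∑ i ∈ s, w i * z i ^ (n + 1) := by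
  set W := ∑ i ∈ s, w i with hW
  have hW0 : 0 ≤ W := Finset.sum_nonneg hw
  rcases hW0.eq_or_lt with h | h
  · have hw0 : ∀ i ∈ s, w i = 0 := (Finset.sum_eq_zero_iff_of_nonneg hw).mp h.symm
    have h1 : ∑ i ∈ s, w i * z i = 0 := Finset.sum_eq_zero fun i hi => by rw [hw0 i hi, zero_mul]
    have h2 : ∑ i ∈ s, w i * z i ^ (n + 1) = 0 :=
      Finset.sum_eq_zero fun i hi => by rw [hw0 i hi, zero_mul]
    rw [h1, h2]; simp
  · have := Real.pow_arith_mean_le_arith_mean_pow s (fun i => w i / W) z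
      (fun i hi => div_nonneg (hw i hi) hW0) (by rw [← Finset.sum_div, ← hW, div_self h.ne'])
      hz (n + 1)
    have e1 : ∑ i ∈ s, w i / W * z i = (∑ i ∈ s, w i * z i) / W := by
      rw [Finset.sum_div]; exact Finset.sum_congr rfl fun i _ => by ring
    have e2 : ∑ i ∈ s, w i / W * z i ^ (n + 1) = (∑ i ∈ s, w i * z i ^ (n + 1)) / W := by
      rw [Finset.sum_div]; exact Finset.sum_congr rfl fun i _ => by ring
    rw [e1, e2, div_pow, div_le_div_iff₀ (by positivity) h] at this
    have h3 : W ^ (n + 1) = W ^ n * W := pow_succ _ _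
    rw [h3] at this
    refine le_of_mul_le_mul_right (this.trans_eq ?_) h
    ring

/-- Hölder's inequality in the form used by Burgess. -/
theorem burgess_holder {ι : Type*} (s : Finset ι) (w z : ι → ℝ) (hw : ∀ i ∈ s, 0 ≤ w i)
    (hz : ∀ i ∈ s, 0 ≤ z i) (n : ℕ) :
    (∑ i ∈ s, w i * z i) ^ (2 * (n + 1)) ≤ (∑ i ∈ s, w i) ^ (2 * n) * (∑ i ∈ s, w i ^ 2) *
      ∑ i ∈ s, z i ^ (2 * (n + 1)) := by
  have h1 := weighted_pow_le s w z hw hz n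
  have h0 : 0 ≤ ∑ i ∈ s, w i * z i := Finset.sum_nonneg fun i hi => mul_nonneg (hw i hi) (hz i hi)
  have h2 := Finset.sum_mul_sq_le_sq_mul_sq s w (fun i => z i ^ (n + 1))
  calc (∑ i ∈ s, w i * z i) ^ (2 * (n + 1)) = ((∑ i ∈ s, w i * z i) ^ (n + 1)) ^ 2 := by
        rw [← pow_mul, mul_comm]
    _ ≤ ((∑ i ∈ s, w i) ^ n * ∑ i ∈ s, w i * z i ^ (n + 1)) ^ 2 := by gcongr
    _ = (∑ i ∈ s, w i) ^ (2 * n) * (∑ i ∈ s, w i * z i ^ (n + 1)) ^ 2 := by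
        rw [mul_pow, ← pow_mul, mul_comm n]
    _ ≤ (∑ i ∈ s, w i) ^ (2 * n) * ((∑ i ∈ s, w i ^ 2) * ∑ i ∈ s, (z i ^ (n + 1)) ^ 2) := by
        have : 0 ≤ (∑ i ∈ s, w i) ^ (2 * n) := by
          have := Finset.sum_nonneg hw
          positivity
        gcongr
    _ = _ := by
        rw [← mul_assoc]
        congr 1
        refine Finset.sum_congr rfl fun i _ => ?_
        rw [← pow_mul, mul_comm (n + 1)]

/-- The residue `(M + k) / a` modulo `D`, as a natural number. -/
def divRes (D : ℕ) (M : ℤ) (a k : ℕ) : ℕ := (((M + k : ℤ) : ZMod D) * (a : ZMod D)⁻¹).val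

theorem divRes_lt {D : ℕ} (hD : 0 < D) (M : ℤ) (a k : ℕ) : divRes D M a k < D := by
  have : NeZero D := ⟨hD.ne'⟩
  exact ZMod.val_lt _

theorem mul_divRes {D : ℕ} (hD : 0 < D) (M : ℤ) (a k : ℕ) (h : a.Coprime D) :
    (a : ZMod D) * (divRes D M a k : ZMod D) = ((M + k : ℤ) : ZMod D) := by
  have : NeZero D := ⟨hD.ne'⟩
  unfold divRes
  rw [ZMod.natCast_zmod_val, mul_comm, mul_assoc, mul_comm _ (a : ZMod D),
    ZMod.coe_mul_inv_eq_one a h, mul_one]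

/-- Burgess's shift by `a * b`: dividing by `a` turns it into a shift by `b` alone. -/
theorem jacobi_divRes {D : ℕ} (hD : 0 < D) (M : ℤ) (a k b : ℕ) (h : a.Coprime D) :
    jacobiSym (M + k + (a * b : ℕ)) D
      = jacobiSym a D * jacobiSym ((divRes D M a k : ℕ) + (b : ℤ)) D := by
  rw [← jacobiSym.mul_left]
  apply jacobiSym.mod_left'
  apply (ZMod.intCast_eq_intCast_iff' _ _ _).mp
  have := mul_divRes hD M a k h
  push_cast at this ⊢
  rw [mul_add, this]

theorem divRes_collision_cong {D : ℕ} (hD : 0 < D) (M : ℤ) (a₁ a₂ k₁ k₂ : ℕ) (h₁ : a₁.Coprime D)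
    (h₂ : a₂.Coprime D) (h : divRes D M a₁ k₁ = divRes D M a₂ k₂) :
    (a₁ : ZMod D) * (M + k₂) = a₂ * (M + k₁) := by
  have e1 := mul_divRes hD M a₁ k₁ h₁
  have e2 := mul_divRes hD M a₂ k₂ h₂
  rw [← h] at e2
  push_cast at e1 e2
  rw [← e1, ← e2]; ring

/-- A collision is a congruence modulo `D` between integers too small to differ by a nonzero
multiple of `D`, so for two distinct primes all collisions lie on one lattice line. -/
theorem collisions_ne {D : ℕ} (M : ℤ) (A N a₁ a₂ : ℕ) (hAN : 2 * A * N ≤ D) (hD : 0 < D)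
    (h₁ : a₁.Coprime D) (h₂ : a₂.Coprime D) (hp₁ : a₁.Prime) (hp₂ : a₂.Prime) (hne : a₁ ≠ a₂)
    (hA₁ : a₁ ≤ A) (hA₂ : a₂ ≤ A) :
    ((Finset.range N ×ˢ Finset.range N).filter fun k : ℕ × ℕ =>
      divRes D M a₁ k.1 = divRes D M a₂ k.2).card ≤ N / a₁ + 1 := by
  set S := (Finset.range N ×ˢ Finset.range N).filter fun k : ℕ × ℕ =>
      divRes D M a₁ k.1 = divRes D M a₂ k.2 with hS
  have key : ∀ k ∈ S, ∀ l ∈ S, (a₁ : ℤ) * k.2 - a₂ * k.1 = a₁ * l.2 - a₂ * l.1 := by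
    intro k hk l hl
    simp only [hS, Finset.mem_filter, Finset.mem_product, Finset.mem_range] at hk hl
    have e1 := divRes_collision_cong hD M a₁ a₂ k.1 k.2 h₁ h₂ hk.2
    have e2 := divRes_collision_cong hD M a₁ a₂ l.1 l.2 h₁ h₂ hl.2
    have e3 : (((a₁ : ℤ) * k.2 - a₂ * k.1 - (a₁ * l.2 - a₂ * l.1) : ℤ) : ZMod D) = 0 := by
      push_cast
      linear_combination e1 - e2
    rw [ZMod.intCast_zmod_eq_zero_iff_dvd] at e3
    have hb : ∀ a k : ℕ, a ≤ A → k < N → a * k < A * N ∨ (a * k = 0) := by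
      intro a k ha hk
      by_cases hA : A = 0
      · right; rw [show a = 0 by omega, zero_mul]
      · left; calc a * k ≤ A * k := by gcongr
          _ < A * N := by gcongr
    have hN : 0 < N := by omega
    have hA0 : 0 < A := hp₁.pos.trans_le hA₁
    have hAN0 : 0 < A * N := Nat.mul_pos hA0 hN
    have hb' : ∀ a k : ℕ, a ≤ A → k < N → ((a : ℤ) * k < A * N ∧ 0 ≤ (a : ℤ) * k) := by
      intro a k ha hk
      refine ⟨?_, by positivity⟩
      have : a * k < A * N := by rcases hb a k ha hk with h | h <;> omega
      exact_mod_cast this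
    have b1 := hb' a₁ k.2 hA₁ hk.1.2
    have b2 := hb' a₂ k.1 hA₂ hk.1.1
    have b3 := hb' a₁ l.2 hA₁ hl.1.2
    have b4 := hb' a₂ l.1 hA₂ hl.1.1
    have hANZ : 2 * ((A : ℤ) * N) ≤ D := by
      rw [← mul_assoc]; exact_mod_cast hAN
    have := Int.eq_zero_of_abs_lt_dvd e3 (by rw [abs_lt]; constructor <;> linarith)
    linarith
  rcases S.eq_empty_or_nonempty with hemp | ⟨l, hl⟩
  · rw [hemp]; simp
  have hcop : IsCoprime (a₁ : ℤ) (a₂ : ℤ) :=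
    Nat.isCoprime_iff_coprime.mpr ((Nat.coprime_primes hp₁ hp₂).mpr hne)
  have hsub : S.image Prod.fst ⊆ (Finset.range N).filter fun x => x ≡ l.1 [MOD a₁] := by
    intro x hx
    obtain ⟨k, hk, rfl⟩ := Finset.mem_image.mp hx
    have hk' := hk
    simp only [hS, Finset.mem_filter, Finset.mem_product] at hk'
    rw [Finset.mem_filter]
    refine ⟨hk'.1.1, ?_⟩
    rw [Nat.modEq_iff_dvd]
    have hkey := key k hk l hl
    have : (a₁ : ℤ) ∣ a₂ * ((l.1 : ℤ) - k.1) := ⟨l.2 - k.2, by linarith⟩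
    exact hcop.dvd_of_dvd_mul_left this
  have hinj : Set.InjOn Prod.fst (S : Set (ℕ × ℕ)) := by
    intro k hk m hm hkm
    have hkey := key k hk m hm
    rw [hkm] at hkey
    have h3 : (a₁ : ℤ) * k.2 = a₁ * m.2 := by linarith
    have h4 : (a₁ : ℤ) ≠ 0 := by exact_mod_cast hp₁.ne_zero
    have h5 := mul_left_cancel₀ h4 h3
    exact Prod.ext hkm (by exact_mod_cast h5)
  rw [← Finset.card_image_of_injOn hinj]
  refine (Finset.card_le_card hsub).trans ?_
  rw [← Nat.count_eq_card_filter_range, Nat.count_modEq_card _ hp₁.pos]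
  split_ifs <;> simp

theorem collisions_eq {D : ℕ} (M : ℤ) (N a : ℕ) (hN : N ≤ D) (hD : 0 < D) (h : a.Coprime D) :
    ((Finset.range N ×ˢ Finset.range N).filter fun k : ℕ × ℕ =>
      divRes D M a k.1 = divRes D M a k.2).card ≤ N := by
  set S := (Finset.range N ×ˢ Finset.range N).filter fun k : ℕ × ℕ =>
      divRes D M a k.1 = divRes D M a k.2 with hS
  have heq : ∀ k ∈ S, k.1 = k.2 := by
    intro k hk
    simp only [hS, Finset.mem_filter, Finset.mem_product, Finset.mem_range] at hk
    have e1 := mul_divRes hD M a k.1 h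
    have e2 := mul_divRes hD M a k.2 h
    rw [hk.2, e2] at e1
    push_cast at e1
    have e3 : (k.2 : ZMod D) = k.1 := add_left_cancel e1
    have e4 := (ZMod.natCast_eq_natCast_iff _ _ _).mp e3
    exact (Nat.ModEq.eq_of_lt_of_lt e4 (by omega) (by omega)).symm
  have hinj : Set.InjOn Prod.fst (S : Set (ℕ × ℕ)) := by
    intro k hk m hm hkm
    exact Prod.ext hkm (by rw [← heq k hk, ← heq m hm, hkm])
  rw [← Finset.card_image_of_injOn hinj]
  have : S.image Prod.fst ⊆ Finset.range N := by
    intro x hx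
    obtain ⟨k, hk, rfl⟩ := Finset.mem_image.mp hx
    simp only [hS, Finset.mem_filter, Finset.mem_product] at hk
    exact hk.1.1
  simpa using Finset.card_le_card this

theorem sum_inv_le (𝒜 : Finset ℕ) (A : ℕ) (h : ∀ a ∈ 𝒜, 1 ≤ a ∧ a ≤ A) :
    ∑ a ∈ 𝒜, (1 : ℝ) / a ≤ 1 + Real.log A := by
  refine le_trans ?_ (harmonic_le_one_add_log A)
  rw [harmonic_eq_sum_Icc]
  push_cast
  simp only [one_div]
  refine Finset.sum_le_sum_of_subset_of_nonneg ?_ fun i _ _ => by positivity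
  intro a ha
  rw [Finset.mem_Icc]; exact h a ha

/-- The number of representations `a x ≡ M + k (mod D)` with `a ∈ 𝒜` and `k < N`. -/
def reps (D : ℕ) (M : ℤ) (N : ℕ) (𝒜 : Finset ℕ) (x : ℕ) : ℕ :=
  ((𝒜 ×ˢ Finset.range N).filter fun t => divRes D M t.1 t.2 = x).card

theorem sum_reps_mul {D : ℕ} (hD : 0 < D) (M : ℤ) (N : ℕ) (𝒜 : Finset ℕ) (F : ℕ → ℝ) :
    ∑ x ∈ Finset.range D, (reps D M N 𝒜 x : ℝ) * F x
      = ∑ a ∈ 𝒜, ∑ k ∈ Finset.range N, F (divRes D M a k) := by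
  rw [← Finset.sum_product', ← Finset.sum_fiberwise_of_maps_to
    (t := Finset.range D) (g := fun t : ℕ × ℕ => divRes D M t.1 t.2)]
  · refine Finset.sum_congr rfl fun x _ => ?_
    rw [Finset.sum_congr rfl (g := fun _ => F x), Finset.sum_const, nsmul_eq_mul]
    · rfl
    · intro t ht
      rw [(Finset.mem_filter.mp ht).2]
  · intro t _
    exact Finset.mem_range.mpr (divRes_lt hD M t.1 t.2)

theorem sum_reps {D : ℕ} (hD : 0 < D) (M : ℤ) (N : ℕ) (𝒜 : Finset ℕ) :
    ∑ x ∈ Finset.range D, (reps D M N 𝒜 x : ℝ) = 𝒜.card * N := by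
  have := sum_reps_mul hD M N 𝒜 (fun _ => 1)
  simpa using this

/-- The second moment of `reps` counts collisions between pairs `(a₁, k₁)` and `(a₂, k₂)`: those with
`a₁ = a₂` are diagonal, and for `a₁ ≠ a₂` they are counted by `collisions_ne`. -/
theorem sum_reps_sq {D : ℕ} (hD : 0 < D) (M : ℤ) (A N : ℕ) (𝒜 : Finset ℕ) (hAN : 2 * A * N ≤ D)
    (hA : ∀ a ∈ 𝒜, a.Prime ∧ a ≤ A ∧ a.Coprime D) (hA1 : A ≤ N) (hA0 : 0 < A) :
    ∑ x ∈ Finset.range D, (reps D M N 𝒜 x : ℝ) ^ 2 ≤ 𝒜.card * N * (3 + Real.log A) := by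
  have h1 : ∑ x ∈ Finset.range D, (reps D M N 𝒜 x : ℝ) ^ 2
      = ∑ a₁ ∈ 𝒜, ∑ a₂ ∈ 𝒜, (((Finset.range N ×ˢ Finset.range N).filter fun k : ℕ × ℕ =>
      divRes D M a₁ k.1 = divRes D M a₂ k.2).card : ℝ) := by
    simp only [pow_two]
    rw [sum_reps_mul hD M N 𝒜 (fun x => (reps D M N 𝒜 x : ℝ))]
    refine Finset.sum_congr rfl fun a₁ _ => ?_
    have h2 : ∀ x, (reps D M N 𝒜 x : ℝ)
        = ∑ a₂ ∈ 𝒜, ∑ k ∈ Finset.range N, if x = divRes D M a₂ k then (1 : ℝ) else 0 := by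
      intro x
      unfold reps
      rw [← Finset.sum_product', Finset.sum_boole]
      congr 2
      ext t; simp only [eq_comm]
    simp only [h2]
    rw [Finset.sum_comm]
    refine Finset.sum_congr rfl fun a₂ _ => ?_
    rw [← Finset.sum_product' (f := fun k l => if divRes D M a₁ k = divRes D M a₂ l then (1 : ℝ) else 0),
      Finset.sum_boole]
  rw [h1]
  have hND : N ≤ D := by nlinarith
  have h3 : ∀ a₁ ∈ 𝒜, ∀ a₂ ∈ 𝒜, (((Finset.range N ×ˢ Finset.range N).filter fun k : ℕ × ℕ =>
      divRes D M a₁ k.1 = divRes D M a₂ k.2).card : ℝ)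
      ≤ (N * (1 / a₁) + 1) + if a₁ = a₂ then (N : ℝ) else 0 := by
    intro a₁ h₁ a₂ h₂
    obtain ⟨p1, l1, c1⟩ := hA a₁ h₁
    obtain ⟨p2, l2, c2⟩ := hA a₂ h₂
    have hpos : (0 : ℝ) ≤ N * (1 / a₁) + 1 := by positivity
    split_ifs with h
    · subst h
      have : (_ : ℝ) ≤ (N : ℝ) := Nat.cast_le.mpr (collisions_eq M N a₁ hND hD c1)
      linarith
    · have h4 : (_ : ℝ) ≤ ((N / a₁ + 1 : ℕ) : ℝ) :=
        Nat.cast_le.mpr (collisions_ne M A N a₁ a₂ hAN hD c1 c2 p1 p2 h l1 l2)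
      push_cast at h4
      have h5 : ((N / a₁ : ℕ) : ℝ) ≤ N / a₁ := Nat.cast_div_le
      rw [add_zero]
      refine h4.trans ?_
      rw [mul_one_div]; linarith
  have h4 : ∀ a₁ ∈ 𝒜, ∑ a₂ ∈ 𝒜, (((Finset.range N ×ˢ Finset.range N).filter fun k : ℕ × ℕ =>
      divRes D M a₁ k.1 = divRes D M a₂ k.2).card : ℝ) ≤ 𝒜.card * N * (1 / a₁) + 𝒜.card + N := by
    intro a₁ h₁
    refine (Finset.sum_le_sum (h3 a₁ h₁)).trans ?_
    rw [Finset.sum_add_distrib, Finset.sum_ite_eq, if_pos h₁, Finset.sum_const, nsmul_eq_mul]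
    apply le_of_eq; ring
  refine (Finset.sum_le_sum h4).trans ?_
  rw [Finset.sum_add_distrib, Finset.sum_add_distrib, Finset.sum_const, Finset.sum_const,
    ← Finset.mul_sum]
  simp only [nsmul_eq_mul]
  have h5 := sum_inv_le 𝒜 A fun a ha => ⟨(hA a ha).1.one_lt.le, (hA a ha).2.1⟩
  have h6 : (𝒜.card : ℝ) ≤ N := by
    have : 𝒜 ⊆ Finset.Icc 1 A := fun a ha =>
      Finset.mem_Icc.mpr ⟨(hA a ha).1.one_lt.le, (hA a ha).2.1⟩
    have h7 := Finset.card_le_card this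
    rw [Nat.card_Icc] at h7
    exact_mod_cast (by omega : 𝒜.card ≤ N)
  have h7 : (𝒜.card : ℝ) * N * ∑ a ∈ 𝒜, (1 : ℝ) / a ≤ 𝒜.card * N * (1 + Real.log A) := by gcongr
  have h8 : (𝒜.card : ℝ) * 𝒜.card ≤ 𝒜.card * N := by gcongr
  linarith

/-- Burgess's inequality with free parameters. Averaging the sum over the shifts `a * b`, with
`a ∈ 𝒜` and `b < B`, costs an error `2 * A * B`; it leaves a sum over residues weighted by `reps`, to
which Hölder's inequality applies. Here `X` bounds the moment of order `2 (n + 1)`. -/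
theorem burgess_core {D : ℕ} (hD : 0 < D) (M : ℤ) (A N B : ℕ) (𝒜 : Finset ℕ)
    (hAN : 2 * A * N ≤ D) (hA : ∀ a ∈ 𝒜, a.Prime ∧ a ≤ A ∧ a.Coprime D) (hA1 : A ≤ N)
    (hA0 : 0 < A) (n : ℕ) (X : ℝ)
    (hX : ((∑ x ∈ Finset.range D,
      (∑ b ∈ Finset.range B, jacobiSym ((x : ℤ) + b) D) ^ (2 * (n + 1)) : ℤ) : ℝ) ≤ X) :
    ∃ T : ℝ, 0 ≤ T ∧
      𝒜.card * B * |∑ k ∈ Finset.range N, (jacobiSym (M + k) D : ℝ)|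
        ≤ 𝒜.card * B * (2 * A * B) + T ∧
      T ^ (2 * (n + 1)) ≤ (𝒜.card * N) ^ (2 * n + 1) * (3 + Real.log A) * X := by
  set F : ℕ → ℝ := fun x => |∑ b ∈ Finset.range B, (jacobiSym ((x : ℤ) + b) D : ℝ)| with hF
  refine ⟨∑ x ∈ Finset.range D, (reps D M N 𝒜 x : ℝ) * F x, by positivity, ?_, ?_⟩
  · rw [sum_reps_mul hD]
    set S := |∑ k ∈ Finset.range N, (jacobiSym (M + k) D : ℝ)| with hS
    have h1 : ∀ a ∈ 𝒜, B * S ≤ ∑ k ∈ Finset.range N, F (divRes D M a k) + B * (2 * A * B) := by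
      intro a ha
      obtain ⟨hap, haA, hac⟩ := hA a ha
      have e1 : ∑ b ∈ Finset.range B, ∑ k ∈ Finset.range N, (jacobiSym (M + k + (a * b : ℕ)) D : ℝ)
          = jacobiSym a D * ∑ k ∈ Finset.range N, ∑ b ∈ Finset.range B,
            (jacobiSym ((divRes D M a k : ℕ) + (b : ℤ)) D : ℝ) := by
        rw [Finset.sum_comm, Finset.mul_sum]
        refine Finset.sum_congr rfl fun k _ => ?_
        rw [Finset.mul_sum]
        refine Finset.sum_congr rfl fun b _ => ?_
        rw [jacobi_divRes hD M a k b hac]; push_cast; rfl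
      have e2 : |∑ b ∈ Finset.range B, ∑ k ∈ Finset.range N,
          (jacobiSym (M + k + (a * b : ℕ)) D : ℝ)| ≤ ∑ k ∈ Finset.range N, F (divRes D M a k) := by
        rw [e1, abs_mul]
        have hj : |(jacobiSym a D : ℝ)| ≤ 1 := by exact_mod_cast jacobi_abs_le a D
        refine (mul_le_of_le_one_left (abs_nonneg _) hj).trans (Finset.abs_sum_le_sum_abs _ _)
      have e3 : |∑ b ∈ Finset.range B, (∑ k ∈ Finset.range N, (jacobiSym (M + k) D : ℝ)
          - ∑ k ∈ Finset.range N, (jacobiSym (M + k + (a * b : ℕ)) D : ℝ))| ≤ B * (2 * A * B) := by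
        refine (Finset.abs_sum_le_sum_abs _ _).trans ?_
        have : ∀ b ∈ Finset.range B, |∑ k ∈ Finset.range N, (jacobiSym (M + k) D : ℝ)
          - ∑ k ∈ Finset.range N, (jacobiSym (M + k + (a * b : ℕ)) D : ℝ)| ≤ 2 * A * B := by
          intro b hb
          have h2 := sum_shift_le (fun k => (jacobiSym (M + k) D : ℝ))
            (fun k => by exact_mod_cast jacobi_abs_le _ D) N (a * b)
          push_cast at h2 ⊢
          simp only [add_assoc] at h2 ⊢
          refine h2.trans ?_
          have : (b : ℝ) ≤ B := by exact_mod_cast (Finset.mem_range.mp hb).le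
          have : (a : ℝ) ≤ A := by exact_mod_cast haA
          rw [mul_assoc]; gcongr
        refine (Finset.sum_le_card_nsmul _ _ _ this).trans ?_
        simp
      rw [Finset.sum_sub_distrib, Finset.sum_const, Finset.card_range, nsmul_eq_mul] at e3
      have e4 : B * S = |B * ∑ k ∈ Finset.range N, (jacobiSym (M + k) D : ℝ)| := by
        rw [abs_mul, Nat.abs_cast]
      rw [e4]
      have := abs_sub_abs_le_abs_sub (B * ∑ k ∈ Finset.range N, (jacobiSym (M + k) D : ℝ))
        (∑ b ∈ Finset.range B, ∑ k ∈ Finset.range N, (jacobiSym (M + k + (a * b : ℕ)) D : ℝ))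
      linarith
    have h2 := Finset.card_nsmul_le_sum 𝒜 _ _ h1
    rw [Finset.sum_add_distrib, Finset.sum_const, nsmul_eq_mul, nsmul_eq_mul] at h2
    linarith
  · have h1 := burgess_holder (Finset.range D) (fun x => (reps D M N 𝒜 x : ℝ)) F
      (fun _ _ => by positivity) (fun _ _ => abs_nonneg _) n
    refine h1.trans ?_
    have h2 : ∑ x ∈ Finset.range D, F x ^ (2 * (n + 1)) ≤ X := by
      refine le_trans (le_of_eq ?_) hX
      push_cast
      refine Finset.sum_congr rfl fun x _ => ?_
      simp only [hF]
      rw [Even.pow_abs (by simp)]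
    have h3 := sum_reps_sq hD M A N 𝒜 hAN hA hA1 hA0
    rw [sum_reps hD]
    have hX0 : 0 ≤ X := le_trans (Finset.sum_nonneg fun x _ => by positivity) h2
    calc _ ≤ ((𝒜.card : ℝ) * N) ^ (2 * n) * (𝒜.card * N * (3 + Real.log A)) * X := by
          gcongr
      _ = _ := by rw [pow_succ]; ring

/-! ### Prime factors and a supply of primes -/

/-- A number has few prime factors, in the multiplicative form `K ^ ω(D) ≪ D ^ η`. -/
theorem pow_omega_le (K η : ℝ) (hK : 1 ≤ K) (hη : 0 < η) :
    ∃ C : ℝ, 1 ≤ C ∧ ∀ D : ℕ, 0 < D → K ^ D.primeFactors.card ≤ C * (D : ℝ) ^ η := by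
  set T := ⌈K ^ (1 / η)⌉₊ with hT
  have hTK : ∀ p : ℕ, T ≤ p → K ≤ (p : ℝ) ^ η := by
    intro p hp
    have h1 : K ^ (1 / η) ≤ p := (Nat.le_ceil _).trans (by exact_mod_cast hp)
    calc K = (K ^ (1 / η)) ^ η := by
          rw [← Real.rpow_mul (by linarith), one_div, inv_mul_cancel₀ hη.ne', Real.rpow_one]
      _ ≤ _ := Real.rpow_le_rpow (by positivity) h1 hη.le
  refine ⟨K ^ T, one_le_pow₀ hK, fun D hD => ?_⟩
  have h1 : ∀ p ∈ D.primeFactors, K ≤ (if p < T then K else 1) * (p : ℝ) ^ η := by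
    intro p hp
    have hp1 : 1 ≤ (p : ℝ) ^ η :=
      Real.one_le_rpow (by exact_mod_cast (Nat.prime_of_mem_primeFactors hp).one_lt.le) hη.le
    split_ifs with h
    · nlinarith
    · rw [one_mul]; exact hTK p (not_lt.mp h)
  calc K ^ D.primeFactors.card = ∏ p ∈ D.primeFactors, K := by rw [Finset.prod_const]
    _ ≤ ∏ p ∈ D.primeFactors, ((if p < T then K else 1) * (p : ℝ) ^ η) :=
        Finset.prod_le_prod (fun _ _ => by linarith) h1
    _ = (∏ p ∈ D.primeFactors, if p < T then K else 1) * ∏ p ∈ D.primeFactors, (p : ℝ) ^ η :=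
        Finset.prod_mul_distrib
    _ ≤ K ^ T * (D : ℝ) ^ η := by
        have e1 : (∏ p ∈ D.primeFactors, if p < T then K else 1) ≤ K ^ T := by
          rw [← Finset.prod_filter, Finset.prod_const]
          refine pow_le_pow_right₀ hK ?_
          have : D.primeFactors.filter (· < T) ⊆ Finset.range T := by
            intro p hp; simpa using (Finset.mem_filter.mp hp).2
          simpa using Finset.card_le_card this
        have e2 : ∏ p ∈ D.primeFactors, (p : ℝ) ^ η ≤ (D : ℝ) ^ η := by
          rw [Real.finsetProd_rpow _ _ fun _ _ => by positivity]
          refine Real.rpow_le_rpow (by positivity) ?_ hη.le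
          have := Nat.le_of_dvd hD (Nat.prod_primeFactors_dvd D)
          rw [← Nat.cast_prod]
          exact Nat.cast_le.mpr this
        gcongr

theorem card_divisors_squarefree (D : ℕ) (hD : Squarefree D) :
    D.divisors.card = 2 ^ D.primeFactors.card := by
  rw [Nat.card_divisors hD.ne_zero]
  rw [Finset.prod_congr rfl (g := fun _ => 2), Finset.prod_const]
  intro p hp
  have h1 := hD.natFactorization_le_one p
  have h2 := (Nat.prime_of_mem_primeFactors hp).factorization_pos_of_dvd hD.ne_zero
    (Nat.dvd_of_mem_primeFactors hp)
  omega

/-- The integer part `Y` of `D ^ (1 / m)` satisfies these bounds. -/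
theorem exists_root (m D : ℕ) (hm : 0 < m) (hD : 0 < D) :
    ∃ Y : ℕ, 1 ≤ Y ∧ Y ^ m ≤ D ∧ D ≤ 2 ^ m * Y ^ m := by
  have hex : (1 : ℕ) ^ m ≤ D := by rw [one_pow]; exact hD
  set Y := Nat.findGreatest (fun Y => Y ^ m ≤ D) D with hY
  have h1 : 1 ≤ Y := Nat.le_findGreatest hD hex
  refine ⟨Y, h1, Nat.findGreatest_spec (P := fun Y => Y ^ m ≤ D) hD hex, ?_⟩
  have h2 : D ≤ (Y + 1) ^ m := by
    by_cases h : Y + 1 ≤ D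
    · have := Nat.findGreatest_is_greatest (P := fun Y => Y ^ m ≤ D) (Nat.lt_succ_self Y) h
      exact (not_le.mp this).le
    · exact (by omega : D ≤ Y + 1).trans (Nat.le_self_pow hm.ne' _)
  rw [← mul_pow]
  exact h2.trans (Nat.pow_le_pow_left (by omega) m)

/-- Many primes up to `Y ^ e` do not divide a given number of size a power of `Y`. -/
theorem primes_supply (e m : ℕ) (he : 3 ≤ e) : ∃ Y₀ : ℕ, 2 ≤ Y₀ ∧ ∀ Y : ℕ, Y₀ ≤ Y → ∀ D : ℕ, 0 < D →
    D ≤ 2 ^ m * Y ^ m →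
    (Y : ℝ) ^ (e - 1) ≤ (((Finset.range (Y ^ e + 1)).filter fun a => a.Prime ∧ a.Coprime D).card : ℝ) := by
  have hev : ∀ᶠ x : ℝ in Filter.atTop, Real.log x ≤ (1 / (4 * e)) * x := by
    have h := (Real.isLittleO_log_id_atTop).bound (c := 1 / (4 * e))
      (by have : (0 : ℝ) < e := by exact_mod_cast (by omega : 0 < e)
          positivity)
    filter_upwards [h, Filter.eventually_ge_atTop 1] with x hx hx1
    simpa [abs_of_nonneg (Real.log_nonneg hx1), abs_of_nonneg (zero_le_one.trans hx1)] using hx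
  obtain ⟨x₀, hx₀⟩ := Filter.eventually_atTop.mp hev
  refine ⟨max ⌈x₀⌉₊ (m + 3), by omega, fun Y hY D hD hDY => ?_⟩
  have he0 : (0 : ℝ) < e := by exact_mod_cast (by omega : 0 < e)
  have hYm : m + 3 ≤ Y := le_trans (le_max_right _ _) hY
  have hYx : x₀ ≤ (Y : ℝ) := (Nat.le_ceil x₀).trans
    (by exact_mod_cast le_trans (le_max_left _ _) hY)
  have hlog := hx₀ Y hYx
  set A := Y ^ e with hA
  have hY1 : (1 : ℝ) < Y := by exact_mod_cast (by omega : 1 < Y)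
  have hA2 : 2 ≤ A := (by omega : 2 ≤ Y).trans (Nat.le_self_pow (by omega) _)
  have hAR : (2 : ℝ) ≤ A := by exact_mod_cast hA2
  have hL0 : 0 < Real.log A := Real.log_pos (by linarith)
  have hLA : Real.log A ≤ Y / 4 := by
    rw [hA]; push_cast; rw [Real.log_pow]
    calc (e : ℝ) * Real.log Y ≤ e * (1 / (4 * e) * Y) := by gcongr
      _ = Y / 4 := by field_simp
  have hlogA1 : Real.log (A + 1) ≤ 2 * Real.log A := by
    rw [← Real.log_rpow (by linarith)]
    apply Real.log_le_log (by linarith)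
    norm_cast
    nlinarith
  have hpi := Chebyshev.pi_ge A
  have h1 : 2 * (Y : ℝ) ^ (e - 1) - 2 ≤ (Nat.primeCounting A : ℝ) := by
    refine le_trans ?_ hpi
    rw [le_div_iff₀ hL0]
    have e1 : (Y : ℝ) ^ (e - 1) * Y = A := by
      rw [hA, ← pow_succ, Nat.sub_add_cancel (by omega)]; push_cast; rfl
    have e2 : 2 * (Y : ℝ) ^ (e - 1) * Real.log A ≤ A / 2 := by
      calc _ ≤ 2 * (Y : ℝ) ^ (e - 1) * (Y / 4) := by gcongr
        _ = A / 2 := by rw [← e1]; ring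
    have e3 : (A : ℝ) / 2 ≤ A * Real.log 2 := by
      have := Real.log_two_gt_d9
      nlinarith
    linarith
  have homega : D.primeFactors.card ≤ m * (1 + Y) := by
    have h2 : 2 ^ D.primeFactors.card ≤ D := by
      refine le_trans ?_ (Nat.le_of_dvd hD (Nat.prod_primeFactors_dvd D))
      exact Finset.pow_card_le_prod _ _ _ fun p hp => (Nat.prime_of_mem_primeFactors hp).two_le
    have h3 : 2 ^ m * Y ^ m ≤ 2 ^ (m * (1 + Y)) := by
      rw [← mul_pow, mul_comm m, pow_mul]
      refine Nat.pow_le_pow_left ?_ m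
      rw [pow_add, pow_one]
      exact Nat.mul_le_mul_left 2 Nat.lt_two_pow_self.le
    exact (Nat.pow_le_pow_iff_right (by norm_num)).mp (h2.trans (hDY.trans h3))
  have hcard : Nat.primeCounting A ≤
      ((Finset.range (A + 1)).filter fun a => a.Prime ∧ a.Coprime D).card + D.primeFactors.card := by
    rw [Nat.primeCounting, Nat.primeCounting', Nat.count_eq_card_filter_range]
    refine le_trans (Finset.card_le_card ?_) (Finset.card_union_le _ _)
    intro p hp
    rw [Finset.mem_filter] at hp
    rw [Finset.mem_union, Finset.mem_filter]
    by_cases hpD : p ∣ D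
    · right; exact Nat.mem_primeFactors.mpr ⟨hp.2, hpD, hD.ne'⟩
    · left; exact ⟨hp.1, hp.2, (Nat.Prime.coprime_iff_not_dvd hp.2).mpr hpD⟩
  have hcR : (Nat.primeCounting A : ℝ) ≤
      (((Finset.range (A + 1)).filter fun a => a.Prime ∧ a.Coprime D).card : ℝ)
        + D.primeFactors.card := by exact_mod_cast hcard
  have hoR : (D.primeFactors.card : ℝ) ≤ m * (1 + Y) := by exact_mod_cast homega
  have hYp : (Y : ℝ) ^ 2 ≤ Y ^ (e - 1) := pow_le_pow_right₀ hY1.le (by omega)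
  have hYmR : (m : ℝ) + 3 ≤ Y := by exact_mod_cast hYm
  nlinarith

theorem le_of_pow_mul_le (m : ℕ) (hm : 0 < m) (x y C Y : ℝ) (hy : 0 ≤ y) (hC : 1 ≤ C)
    (hY : 0 < Y) (h : x ^ m * Y ≤ C * y ^ m) : x ≤ C * y * Y ^ (-(1 / m : ℝ)) := by
  refine le_of_pow_le_pow_left₀ hm.ne' (by positivity) ?_
  have e1 : (Y ^ (-(1 / m : ℝ))) ^ m = Y⁻¹ := by
    rw [← Real.rpow_natCast, ← Real.rpow_mul hY.le, ← Real.rpow_neg_one]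
    congr 1
    field_simp
  rw [mul_pow, mul_pow, e1, ← div_eq_mul_inv, le_div_iff₀ hY]
  refine h.trans ?_
  gcongr
  exact le_self_pow₀ hC hm.ne.symm

/-! ### Burgess's bound for squarefree moduli -/

/-- For shifts of length `Y ≈ D ^ (1 / (2r))` the two terms of `moment_bound` have the same order of
magnitude `Y ^ (3r)`, up to divisor functions, which the additional factor `Y` absorbs. -/
theorem moment_asymp (r : ℕ) (hr : 0 < r) : ∃ Cx : ℝ, 1 ≤ Cx ∧ ∀ Y D : ℕ, 1 ≤ Y → Squarefree D →
    Odd D → D ≤ 2 ^ (2 * r) * Y ^ (2 * r) →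
    ((∑ x ∈ Finset.range D, (∑ b ∈ Finset.range Y, jacobiSym ((x : ℤ) + b) D) ^ (2 * r) : ℤ) : ℝ)
      ≤ Cx * (Y : ℝ) ^ (3 * r + 1) := by
  obtain ⟨Cη, hC1, hCη⟩ := pow_omega_le ((130 * r + 40) * 2 ^ (2 * r - 1)) (1 / (2 * r : ℕ))
    (by have : (1 : ℝ) ≤ 2 ^ (2 * r - 1) := one_le_pow₀ (by norm_num)
        have : (0 : ℝ) ≤ r := Nat.cast_nonneg r
        nlinarith) (by positivity)
  refine ⟨r ^ (2 * r) * 2 ^ (2 * r) + 2 * r * 2 ^ r * Cη * 2 + 1, ?_, ?_⟩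
  · have : (0 : ℝ) ≤ r ^ (2 * r) * 2 ^ (2 * r) + 2 * r * 2 ^ r * Cη * 2 := by positivity
    linarith
  intro Y D hY hsq hodd hDY
  have hD0 : 0 < D := hodd.pos
  have hY1 : (1 : ℝ) ≤ Y := by exact_mod_cast hY
  have hDR : (D : ℝ) ≤ (2 * Y) ^ (2 * r) := by
    rw [mul_pow]; exact_mod_cast hDY
  have hDη : (D : ℝ) ^ (1 / (2 * r : ℕ) : ℝ) ≤ 2 * Y := by
    refine (Real.rpow_le_rpow (by positivity) hDR (by positivity)).trans_eq ?_
    rw [one_div]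
    exact Real.pow_rpow_inv_natCast (by positivity) (by omega)
  have hsD : √(D : ℝ) ≤ 2 ^ r * Y ^ r := by
    rw [← mul_pow]
    refine Real.sqrt_le_iff.mpr ⟨by positivity, ?_⟩
    rw [← pow_mul, mul_comm r]; exact hDR
  have hK := hCη D hD0
  refine (moment_bound D Y r hr hsq hodd).trans ?_
  rw [card_divisors_squarefree D hsq]
  have e1 : (Y : ℝ) ^ r * r ^ (2 * r) * D ≤ r ^ (2 * r) * 2 ^ (2 * r) * Y ^ (3 * r + 1) := by
    calc (Y : ℝ) ^ r * r ^ (2 * r) * D ≤ Y ^ r * r ^ (2 * r) * (2 * Y) ^ (2 * r) := by gcongr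
      _ = r ^ (2 * r) * 2 ^ (2 * r) * Y ^ (3 * r) := by
        rw [mul_pow, show 3 * r = r + 2 * r by ring, pow_add (Y : ℝ) r]; ring
      _ ≤ _ := by gcongr; omega
  have e2 : 2 * (r : ℝ) * ((130 * r + 40) ^ D.primeFactors.card * √D *
          (Y * (Y * ((2 ^ D.primeFactors.card : ℕ) : ℝ)) ^ (2 * r - 1)))
      = 2 * r * √D * Y ^ (2 * r) * ((130 * r + 40) * 2 ^ (2 * r - 1)) ^ D.primeFactors.card := by
    have : (Y : ℝ) ^ (2 * r) = Y * Y ^ (2 * r - 1) := by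
      rw [← pow_succ', Nat.sub_add_cancel (by omega)]
    rw [this, mul_pow, mul_pow]
    push_cast
    rw [← pow_mul, ← pow_mul, mul_comm (2 * r - 1)]
    ring
  rw [e2]
  have e3 : 2 * r * √D * Y ^ (2 * r) * ((130 * r + 40) * 2 ^ (2 * r - 1)) ^ D.primeFactors.card
      ≤ 2 * r * 2 ^ r * Cη * 2 * (Y : ℝ) ^ (3 * r + 1) := by
    calc _ ≤ 2 * r * (2 ^ r * Y ^ r) * Y ^ (2 * r) * (Cη * (2 * (Y : ℝ))) := by
          gcongr
          exact hK.trans (by gcongr)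
      _ = _ := by
        rw [show 3 * r + 1 = r + 2 * r + 1 by ring, pow_succ, pow_add (Y : ℝ) r]; ring
  have e4 : (0 : ℝ) ≤ (Y : ℝ) ^ (3 * r + 1) := by positivity
  nlinarith

/-- Burgess's bound for an interval whose length is a power of the parameter `Y ≈ D ^ (1 / (2r))`. -/
theorem burgess_block (r e : ℕ) (he : 3 ≤ e) (hre : 2 * e + 3 ≤ 2 * r) (hre2 : r + 2 ≤ 2 * e) :
    ∃ C : ℝ, ∃ Y₀ : ℕ, 1 ≤ C ∧ ∀ Y D : ℕ, Y₀ ≤ Y → Squarefree D → Odd D → Y ^ (2 * r) ≤ D →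
      D ≤ 2 ^ (2 * r) * Y ^ (2 * r) → ∀ M : ℤ,
      |∑ k ∈ Finset.range (Y ^ (e + 2)), (jacobiSym (M + k) D : ℝ)|
        ≤ C * Y ^ (e + 2) * (Y : ℝ) ^ (-(1 / (2 * r : ℕ) : ℝ)) := by
  obtain ⟨Y₀, hY₀, hsup⟩ := primes_supply e (2 * r) he
  obtain ⟨Cx, hCx, hmom⟩ := moment_asymp r (by omega)
  refine ⟨2 + Cx * (3 + e), Y₀, ?_, ?_⟩
  · have : 0 ≤ Cx * (3 + e : ℝ) := by positivity
    linarith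
  intro Y D hY hsq hodd hYD hDY M
  have hD0 := hodd.pos
  have hY2 : 2 ≤ Y := hY₀.trans hY
  have hYR : (1 : ℝ) ≤ Y := by exact_mod_cast (by omega : 1 ≤ Y)
  have hYpos : (0 : ℝ) < Y := by linarith
  set 𝒜 := (Finset.range (Y ^ e + 1)).filter fun a => a.Prime ∧ a.Coprime D with h𝒜
  have hcard := hsup Y hY D hD0 hDY
  have hA : ∀ a ∈ 𝒜, a.Prime ∧ a ≤ Y ^ e ∧ a.Coprime D := by
    intro a ha
    rw [h𝒜, Finset.mem_filter, Finset.mem_range] at ha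
    exact ⟨ha.2.1, by omega, ha.2.2⟩
  have hAN : 2 * Y ^ e * Y ^ (e + 2) ≤ D := by
    calc 2 * Y ^ e * Y ^ (e + 2) ≤ Y * Y ^ e * Y ^ (e + 2) := by gcongr
      _ = Y ^ (2 * e + 3) := by ring
      _ ≤ Y ^ (2 * r) := Nat.pow_le_pow_right (by omega) hre
      _ ≤ D := hYD
  obtain ⟨n, rfl⟩ : ∃ n, r = n + 1 := ⟨r - 1, by omega⟩
  obtain ⟨T, hT0, hT1, hT2⟩ := burgess_core hD0 M (Y ^ e) (Y ^ (e + 2)) Y 𝒜 hAN hA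
    (Nat.pow_le_pow_right (by omega) (by omega)) (by positivity) n _ (hmom Y D (by omega) hsq hodd hDY)
  push_cast at hT1 hT2
  set a : ℝ := (𝒜.card : ℝ) with ha
  have ha0 : 0 < a := lt_of_lt_of_le (by positivity) hcard
  have hlog : 3 + Real.log ((Y : ℝ) ^ e) ≤ (3 + e) * Y := by
    rw [Real.log_pow]
    have := Real.log_le_sub_one_of_pos hYpos
    have : (e : ℝ) * Real.log Y ≤ e * Y := by gcongr; linarith
    linarith
  have hT3 : T ≤ (Cx * (3 + e)) * (a * Y * Y ^ (e + 2)) * (Y : ℝ) ^ (-(1 / (2 * (n + 1) : ℕ) : ℝ)) := by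
    refine le_of_pow_mul_le _ (by omega) _ _ _ _ (by positivity) ?_ hYpos ?_
    · have : (0 : ℝ) ≤ e := by positivity
      nlinarith
    have hgap : (Y : ℝ) ^ (n + 4) ≤ a * Y ^ (e + 2) := by
      calc (Y : ℝ) ^ (n + 4) ≤ Y ^ (e - 1 + (e + 2)) := pow_le_pow_right₀ hYR (by omega)
        _ = Y ^ (e - 1) * Y ^ (e + 2) := pow_add _ _ _
        _ ≤ _ := by gcongr
    calc T ^ (2 * (n + 1)) * Y
        ≤ ((a * Y ^ (e + 2)) ^ (2 * n + 1) * (3 + Real.log ((Y : ℝ) ^ e))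
          * (Cx * Y ^ (3 * (n + 1) + 1))) * Y := by gcongr
      _ ≤ ((a * Y ^ (e + 2)) ^ (2 * n + 1) * ((3 + e) * Y)
          * (Cx * Y ^ (3 * (n + 1) + 1))) * Y := by gcongr
      _ = Cx * (3 + e) * ((a * Y ^ (e + 2)) ^ (2 * n + 1) * Y ^ (n + 4) * Y ^ (2 * (n + 1))) := by
        ring
      _ ≤ Cx * (3 + e) * ((a * Y ^ (e + 2)) ^ (2 * n + 1) * (a * Y ^ (e + 2)) * Y ^ (2 * (n + 1))) := by
        gcongr
      _ = _ := by ring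
  set S := |∑ k ∈ Finset.range (Y ^ (e + 2)), (jacobiSym (M + k) D : ℝ)| with hS
  have haY : 0 < a * Y := by positivity
  set w : ℝ := (Y : ℝ) ^ (-(1 / (2 * (n + 1) : ℕ) : ℝ)) with hw
  have hw1 : 1 ≤ Y * w := by
    have h1 : (Y : ℝ) ^ (-1 : ℝ) ≤ w := by
      refine Real.rpow_le_rpow_of_exponent_le hYR ?_
      rw [neg_le_neg_iff, div_le_one (by positivity)]
      exact_mod_cast (by omega : 1 ≤ 2 * (n + 1))
    calc (1 : ℝ) = Y * (Y : ℝ) ^ (-1 : ℝ) := by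
          rw [Real.rpow_neg_one, mul_inv_cancel₀ hYpos.ne']
      _ ≤ _ := by gcongr
  have hT4 : 2 * (Y : ℝ) ^ e * Y ≤ 2 * Y ^ (e + 2) * w := by
    calc 2 * (Y : ℝ) ^ e * Y ≤ 2 * (Y : ℝ) ^ e * Y * (Y * w) :=
          le_mul_of_one_le_right (by positivity) hw1
      _ = _ := by ring
  refine le_of_mul_le_mul_left ?_ haY
  calc a * Y * S ≤ a * Y * (2 * Y ^ e * Y) + T := hT1
    _ ≤ a * Y * (2 * Y ^ (e + 2) * w) + Cx * (3 + e) * (a * Y * Y ^ (e + 2)) * w := by gcongr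
    _ = _ := by ring

theorem sum_blocks_le (f : ℤ → ℝ) (hf : ∀ k, |f k| ≤ 1) (L : ℕ) (hL : 0 < L) (E : ℝ)
    (h : ∀ M : ℤ, |∑ k ∈ Finset.range L, f (M + k)| ≤ E) (M : ℤ) (N : ℕ) :
    |∑ k ∈ Finset.range N, f (M + k)| ≤ (N / L : ℕ) * E + L := by
  have h1 : ∀ Q : ℕ, |∑ k ∈ Finset.range (L * Q), f (M + k)| ≤ Q * E := by
    intro Q
    induction Q with
    | zero => simp
    | succ Q ih =>
      rw [mul_add, mul_one, Finset.sum_range_add]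
      refine (abs_add_le _ _).trans ?_
      have h2 := h (M + (L * Q : ℕ))
      have h3 : ∑ k ∈ Finset.range L, f (M + (L * Q + k : ℕ))
          = ∑ k ∈ Finset.range L, f (M + (L * Q : ℕ) + k) :=
        Finset.sum_congr rfl fun k _ => by push_cast; rw [add_assoc]
      rw [h3]
      push_cast at *
      linarith
  have h4 := h1 (N / L)
  conv_lhs => rw [← Nat.div_add_mod N L]
  rw [Finset.sum_range_add]
  refine (abs_add_le _ _).trans (add_le_add h4 ?_)
  refine (Finset.abs_sum_le_sum_abs _ _).trans ((Finset.sum_le_sum fun k _ => hf _).trans ?_)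
  simp only [Finset.sum_const, Finset.card_range, nsmul_eq_mul, mul_one]
  exact_mod_cast (Nat.mod_lt N hL).le

/-- Burgess's bound for Jacobi symbols to odd squarefree moduli, with exponent slightly above
`1 / 4`. -/
theorem burgess : ∃ C δ : ℝ, 1 ≤ C ∧ 0 < δ ∧ ∀ D : ℕ, Squarefree D → Odd D → ∀ (M : ℤ) (N : ℕ),
    |∑ k ∈ Finset.range N, (jacobiSym (M + k) D : ℝ)|
      ≤ C * (N * (D : ℝ) ^ (-δ) + (D : ℝ) ^ (0.255 : ℝ)) := by
  -- with `r = 500` and `e = 253` the blocks have length `Y ^ 255`, where `Y ≈ D ^ (1 / 1000)`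
  obtain ⟨C, Y₀, hC, hb⟩ := burgess_block 500 253 (by norm_num) (by norm_num) (by norm_num)
  obtain ⟨m, hm⟩ : ∃ m : ℕ, m = 2 * 500 := ⟨_, rfl⟩
  rw [← hm] at hb
  have hm0 : 0 < m := by omega
  have hmR : (m : ℝ) = 1000 := by rw [hm]; norm_num
  refine ⟨2 * C + 2 * Y₀, (1 / m) * (1 / m), ?_, by positivity, ?_⟩
  · have : (0 : ℝ) ≤ Y₀ := Nat.cast_nonneg _
    linarith
  intro D hsq hodd M N
  have hD0 := hodd.pos
  have hDpos : (0 : ℝ) < D := by exact_mod_cast hD0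
  obtain ⟨Y, hY1, hYD, hDY⟩ := exists_root m D hm0 hD0
  have hYR : (1 : ℝ) ≤ Y := by exact_mod_cast hY1
  have hYD' : (Y : ℝ) ≤ (D : ℝ) ^ (1 / m : ℝ) := by
    have : ((Y : ℝ) ^ m) ≤ D := by exact_mod_cast hYD
    calc (Y : ℝ) = ((Y : ℝ) ^ m) ^ (1 / m : ℝ) := by
          rw [one_div, Real.pow_rpow_inv_natCast (by positivity) hm0.ne']
      _ ≤ _ := by gcongr
  have hDY' : (D : ℝ) ^ (1 / m : ℝ) ≤ 2 * Y := by
    have : (D : ℝ) ≤ (2 * Y) ^ m := by rw [mul_pow]; exact_mod_cast hDY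
    calc (D : ℝ) ^ (1 / m : ℝ) ≤ ((2 * (Y : ℝ)) ^ m) ^ (1 / m : ℝ) := by gcongr
      _ = _ := by rw [one_div, Real.pow_rpow_inv_natCast (by positivity) hm0.ne']
  have hm1 : (1 / m : ℝ) ≤ 1 := by rw [hmR]; norm_num
  -- `Y ^ (-1/m)` is at most `2 * D ^ (-δ)`
  have hYδ : (Y : ℝ) ^ (-(1 / m : ℝ)) ≤ 2 * (D : ℝ) ^ (-((1 / m : ℝ) * (1 / m))) := by
    have h1 : ((D : ℝ) ^ (1 / m : ℝ)) ^ (1 / m : ℝ) ≤ 2 * (Y : ℝ) ^ (1 / m : ℝ) := by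
      calc _ ≤ (2 * (Y : ℝ)) ^ (1 / m : ℝ) := by gcongr
        _ = 2 ^ (1 / m : ℝ) * (Y : ℝ) ^ (1 / m : ℝ) := Real.mul_rpow (by norm_num) (by positivity)
        _ ≤ 2 ^ (1 : ℝ) * (Y : ℝ) ^ (1 / m : ℝ) := by
          gcongr
          norm_num
        _ = _ := by rw [Real.rpow_one]
    rw [← Real.rpow_mul hDpos.le] at h1
    rw [Real.rpow_neg (by positivity), Real.rpow_neg (by positivity), ← div_eq_mul_inv,
      le_div_iff₀ (by positivity), inv_mul_le_iff₀ (by positivity)]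
    linarith
  have hYL : (Y : ℝ) ^ 255 ≤ (D : ℝ) ^ (0.255 : ℝ) := by
    calc (Y : ℝ) ^ 255 ≤ ((D : ℝ) ^ (1 / m : ℝ)) ^ 255 := by gcongr
      _ = _ := by
        rw [← Real.rpow_natCast, ← Real.rpow_mul hDpos.le, hmR]
        norm_num
  set δ : ℝ := (1 / m) * (1 / m) with hδ
  have hDδ : 0 < (D : ℝ) ^ (-δ) := by positivity
  have hDL : 0 < (D : ℝ) ^ (0.255 : ℝ) := by positivity
  have hN0 : (0 : ℝ) ≤ N := Nat.cast_nonneg N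
  have hY00 : (0 : ℝ) ≤ Y₀ := Nat.cast_nonneg _
  have hf : ∀ k : ℤ, |(jacobiSym k D : ℝ)| ≤ 1 := fun k => by exact_mod_cast jacobi_abs_le k D
  by_cases hY : Y₀ ≤ Y
  · have h1 := sum_blocks_le (fun k => (jacobiSym k D : ℝ)) hf (Y ^ (253 + 2)) (by positivity) _
      (hb Y D hY hsq hodd hYD hDY) M N
    refine h1.trans ?_
    have h2 : ((N / Y ^ (253 + 2) : ℕ) : ℝ) * (Y : ℝ) ^ (253 + 2) ≤ N := by
      have := Nat.div_mul_le_self N (Y ^ (253 + 2))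
      exact_mod_cast this
    have h3 : ((N / Y ^ (253 + 2) : ℕ) : ℝ) * (C * (Y : ℝ) ^ (253 + 2) * (Y : ℝ) ^ (-(1 / m : ℝ)))
        ≤ 2 * C * (N * (D : ℝ) ^ (-δ)) := by
      calc _ = C * (((N / Y ^ (253 + 2) : ℕ) : ℝ) * (Y : ℝ) ^ (253 + 2)) * (Y : ℝ) ^ (-(1 / m : ℝ)) := by
            ring
        _ ≤ C * N * (2 * (D : ℝ) ^ (-δ)) := by gcongr
        _ = _ := by ring
    have h4 : ((Y ^ (253 + 2) : ℕ) : ℝ) ≤ (D : ℝ) ^ (0.255 : ℝ) := by push_cast; exact hYL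
    have h5 : 0 ≤ Y₀ * (N * (D : ℝ) ^ (-δ)) := by positivity
    have h6 : (D : ℝ) ^ (0.255 : ℝ) ≤ (2 * C + 2 * Y₀) * (D : ℝ) ^ (0.255 : ℝ) :=
      le_mul_of_one_le_left hDL.le (by linarith)
    linarith
  · have h1 : |∑ k ∈ Finset.range N, (jacobiSym (M + k) D : ℝ)| ≤ N := by
      refine (Finset.abs_sum_le_sum_abs _ _).trans ((Finset.sum_le_sum fun k _ => hf _).trans ?_)
      simp
    have h2 : 1 ≤ 2 * Y₀ * (D : ℝ) ^ (-δ) := by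
      rw [Real.rpow_neg hDpos.le, ← div_eq_mul_inv, one_le_div (by positivity), hδ,
        Real.rpow_mul hDpos.le]
      calc _ ≤ (2 * (Y : ℝ)) ^ (1 / m : ℝ) := by gcongr
        _ ≤ (2 * (Y : ℝ)) ^ (1 : ℝ) := Real.rpow_le_rpow_of_exponent_le (by linarith) hm1
        _ = 2 * Y := Real.rpow_one _
        _ ≤ 2 * Y₀ := by
          have : (Y : ℝ) ≤ Y₀ := by exact_mod_cast (not_le.mp hY).le
          linarith
    have h3 : (N : ℝ) ≤ 2 * Y₀ * (D : ℝ) ^ (-δ) * N := le_mul_of_one_le_left hN0 h2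
    have h4 : 0 ≤ 2 * C * (N * (D : ℝ) ^ (-δ)) := by positivity
    have h5 : 0 ≤ (2 * C + 2 * Y₀) * (D : ℝ) ^ (0.255 : ℝ) := by positivity
    linarith

/-! ### Bonferroni inequalities and sieve sums -/

/-- The `k`-th elementary symmetric function of the values `x p`, `p ∈ P`. -/
def elemSym (x : ℕ → ℝ) (P : Finset ℕ) (k : ℕ) : ℝ := ∑ S ∈ P.powersetCard k, ∏ p ∈ S, x p

/-- The expansion of `∏ p ∈ P, (1 - x p)` truncated after the terms of degree `b`. -/
def truncProd (x : ℕ → ℝ) (P : Finset ℕ) (b : ℕ) : ℝ :=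
  ∑ k ∈ Finset.range (b + 1), (-1) ^ k * elemSym x P k

theorem elemSym_zero (x : ℕ → ℝ) (P : Finset ℕ) : elemSym x P 0 = 1 := by
  simp [elemSym]

theorem elemSym_empty_succ (x : ℕ → ℝ) (k : ℕ) : elemSym x ∅ (k + 1) = 0 := by
  unfold elemSym
  rw [Finset.powersetCard_eq_empty.2 (by simp), Finset.sum_empty]

theorem elemSym_insert (x : ℕ → ℝ) (P : Finset ℕ) (q : ℕ) (hq : q ∉ P) (k : ℕ) :
    elemSym x (insert q P) (k + 1) = elemSym x P (k + 1) + x q * elemSym x P k := by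
  unfold elemSym
  rw [Finset.powersetCard_succ_insert hq, Finset.sum_union, Finset.sum_image, Finset.mul_sum]
  · congr 1
    refine Finset.sum_congr rfl fun S hS => ?_
    rw [Finset.prod_insert]
    exact fun h => hq ((Finset.mem_powersetCard.1 hS).1 h)
  · intro S hS T hT h
    have h1 : q ∉ S := fun h => hq ((Finset.mem_powersetCard.1 hS).1 h)
    have h2 : q ∉ T := fun h => hq ((Finset.mem_powersetCard.1 hT).1 h)
    rw [← Finset.erase_insert h1, ← Finset.erase_insert h2, h]
  · rw [Finset.disjoint_left]
    intro S hS hS'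
    obtain ⟨T, hT, rfl⟩ := Finset.mem_image.1 hS'
    exact hq ((Finset.mem_powersetCard.1 hS).1 (Finset.mem_insert_self _ _))

theorem truncProd_insert (x : ℕ → ℝ) (P : Finset ℕ) (q : ℕ) (hq : q ∉ P) (b : ℕ) :
    truncProd x (insert q P) (b + 1) = truncProd x P (b + 1) - x q * truncProd x P b := by
  unfold truncProd
  rw [Finset.sum_range_succ' _ (b + 1), Finset.sum_range_succ' _ (b + 1), Finset.mul_sum]
  simp only [elemSym_insert x P q hq, elemSym_zero]
  have : ∀ k, (-1 : ℝ) ^ (k + 1) * (elemSym x P (k + 1) + x q * elemSym x P k)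
      = (-1) ^ (k + 1) * elemSym x P (k + 1) - x q * ((-1) ^ k * elemSym x P k) := by
    intro k; ring
  simp only [this, Finset.sum_sub_distrib]
  ring

theorem elemSym_nonneg (x : ℕ → ℝ) (P : Finset ℕ) (hx : ∀ p ∈ P, 0 ≤ x p) (k : ℕ) :
    0 ≤ elemSym x P k :=
  Finset.sum_nonneg fun _ hS => Finset.prod_nonneg fun p hp =>
    hx p ((Finset.mem_powersetCard.1 hS).1 hp)

/-- Bonferroni: the truncated expansion errs on the side of its last term, by at most the first
omitted term. -/
theorem bonferroni (x : ℕ → ℝ) (P : Finset ℕ) (hx : ∀ p ∈ P, 0 ≤ x p ∧ x p ≤ 1) : ∀ b : ℕ,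
    0 ≤ (-1) ^ b * (truncProd x P b - ∏ p ∈ P, (1 - x p)) ∧
    (-1) ^ b * (truncProd x P b - ∏ p ∈ P, (1 - x p)) ≤ elemSym x P (b + 1) := by
  induction P using Finset.induction_on with
  | empty =>
    intro b
    have h : truncProd x ∅ b = 1 := by
      unfold truncProd
      rw [Finset.sum_range_succ']
      simp [elemSym_empty_succ, elemSym_zero]
    simp only [h, Finset.prod_empty, sub_self, mul_zero, le_refl, true_and]
    exact elemSym_nonneg x ∅ (by simp) _
  | insert q P hq ih =>
    have ih := ih fun p hp => hx p (Finset.mem_insert_of_mem hp)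
    have hxq := hx q (Finset.mem_insert_self _ _)
    have hV0 : 0 ≤ ∏ p ∈ P, (1 - x p) := Finset.prod_nonneg fun p hp => by
      have := (hx p (Finset.mem_insert_of_mem hp)).2; linarith
    have hV1 : ∏ p ∈ P, (1 - x p) ≤ 1 := by
      have := (ih 0).1
      simp [truncProd, elemSym_zero] at this
      exact this
    intro b
    rw [Finset.prod_insert hq]
    cases b with
    | zero =>
      have h0 := ih 0
      rw [elemSym_insert x P q hq]
      simp only [truncProd, elemSym_zero] at h0 ⊢
      norm_num [elemSym_zero] at h0 ⊢
      constructor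
      · nlinarith
      · nlinarith
    | succ b =>
      rw [truncProd_insert x P q hq, elemSym_insert x P q hq]
      obtain ⟨h1, h2⟩ := ih (b + 1)
      obtain ⟨h3, h4⟩ := ih b
      have e : (-1 : ℝ) ^ (b + 1) * (truncProd x P (b + 1) - x q * truncProd x P b
          - (1 - x q) * ∏ p ∈ P, (1 - x p))
          = (-1) ^ (b + 1) * (truncProd x P (b + 1) - ∏ p ∈ P, (1 - x p))
            + x q * ((-1) ^ b * (truncProd x P b - ∏ p ∈ P, (1 - x p))) := by ring
      rw [e]
      constructor
      · have := mul_nonneg hxq.1 h3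
        linarith
      · have := mul_le_mul_of_nonneg_left h4 hxq.1
        linarith

theorem elemSym_le (x : ℕ → ℝ) (P : Finset ℕ) (hx : ∀ p ∈ P, 0 ≤ x p) : ∀ k : ℕ,
    elemSym x P k ≤ (∑ p ∈ P, x p) ^ k / k.factorial := by
  induction P using Finset.induction_on with
  | empty =>
    intro k
    cases k with
    | zero => simp [elemSym]
    | succ k => simp [elemSym_empty_succ]
  | insert q P hq ih =>
    have ih := ih fun p hp => hx p (Finset.mem_insert_of_mem hp)
    have hxq := hx q (Finset.mem_insert_self _ _)
    have hL : 0 ≤ ∑ p ∈ P, x p := Finset.sum_nonneg fun p hp => hx p (Finset.mem_insert_of_mem hp)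
    intro k
    rw [Finset.sum_insert hq]
    cases k with
    | zero => simp [elemSym]
    | succ k =>
      rw [elemSym_insert x P q hq]
      set L := ∑ p ∈ P, x p
      have h1 := ih (k + 1)
      have h2 := mul_le_mul_of_nonneg_left (ih k) hxq
      have h3 : L ^ (k + 1) + (k + 1) * x q * L ^ k ≤ (x q + L) ^ (k + 1) := by
        clear h1 h2
        induction k with
        | zero => simp; linarith
        | succ k ihk =>
          have := mul_le_mul_of_nonneg_right ihk (add_nonneg hxq hL)
          have e : (x q + L) ^ (k + 1) * (x q + L) = (x q + L) ^ (k + 1 + 1) := by ring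
          rw [e] at this
          refine le_trans ?_ this
          have h5 : 0 ≤ L ^ k := by positivity
          have : 0 ≤ (k + 1 : ℝ) * x q * L ^ k * x q := by positivity
          push_cast
          ring_nf at this ⊢
          nlinarith
      have hf : (0 : ℝ) < k.factorial := by positivity
      have e1 : ((k + 1).factorial : ℝ) = (k + 1) * k.factorial := by
        rw [Nat.factorial_succ]; push_cast; ring
      calc _ ≤ L ^ (k + 1) / (k + 1).factorial + x q * (L ^ k / k.factorial) := by linarith
        _ = (L ^ (k + 1) + (k + 1) * x q * L ^ k) / (k + 1).factorial := by
            rw [e1]; field_simp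
        _ ≤ _ := by gcongr

/-- `T` is a linear combination of the indicators of divisibility by divisors `d ≤ D` of `Q`, with
coefficients of total size at most `U`, and `v` is its mean value: the same combination of
the `1 / d`. -/
def SieveSum (Q : ℕ) (D U : ℝ) (T : ℕ → ℝ) (v : ℝ) : Prop :=
  ∃ (ι : Type) (s : Finset ι) (d : ι → ℕ) (c : ι → ℝ),
    (∀ i ∈ s, d i ∣ Q ∧ (d i : ℝ) ≤ D) ∧ ∑ i ∈ s, |c i| ≤ U ∧
    (∀ n, T n = ∑ i ∈ s, c i * (if d i ∣ n then 1 else 0)) ∧ v = ∑ i ∈ s, c i / d i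

theorem SieveSum.mono {Q : ℕ} {D U D' U' : ℝ} {T : ℕ → ℝ} {v : ℝ} (h : SieveSum Q D U T v)
    (hD : D ≤ D') (hU : U ≤ U') : SieveSum Q D' U' T v := by
  obtain ⟨ι, s, d, c, h1, h2, h3, h4⟩ := h
  exact ⟨ι, s, d, c, fun i hi => ⟨(h1 i hi).1, (h1 i hi).2.trans hD⟩, h2.trans hU, h3, h4⟩

theorem SieveSum.one : SieveSum 1 1 1 (fun _ => 1) 1 :=
  ⟨Unit, Finset.univ, fun _ => 1, fun _ => 1, by simp, by simp, by simp, by simp⟩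

theorem SieveSum.mul {Q Q' : ℕ} {D U D' U' : ℝ} {T T' : ℕ → ℝ} {v v' : ℝ} (hQ : Q.Coprime Q')
    (hD : 0 ≤ D) (hU : 0 ≤ U)
    (h : SieveSum Q D U T v) (h' : SieveSum Q' D' U' T' v') :
    SieveSum (Q * Q') (D * D') (U * U') (fun n => T n * T' n) (v * v') := by
  obtain ⟨ι, s, d, c, h1, h2, h3, h4⟩ := h
  obtain ⟨ι', s', d', c', h1', h2', h3', h4'⟩ := h'
  refine ⟨ι × ι', s ×ˢ s', fun x => d x.1 * d' x.2, fun x => c x.1 * c' x.2, ?_, ?_, ?_, ?_⟩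
  · rintro ⟨i, j⟩ hij
    obtain ⟨hi, hj⟩ := Finset.mem_product.1 hij
    refine ⟨mul_dvd_mul (h1 i hi).1 (h1' j hj).1, ?_⟩
    push_cast
    exact mul_le_mul (h1 i hi).2 (h1' j hj).2 (Nat.cast_nonneg _) hD
  · simp only [abs_mul]
    rw [Finset.sum_product]
    dsimp only
    rw [← Finset.sum_mul_sum]
    exact mul_le_mul h2 h2' (Finset.sum_nonneg fun _ _ => abs_nonneg _) hU
  · intro n
    beta_reduce
    rw [h3, h3', Finset.sum_mul_sum, ← Finset.sum_product']
    refine Finset.sum_congr rfl fun x hx => ?_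
    obtain ⟨hi, hj⟩ := Finset.mem_product.1 hx
    have hc : (d x.1).Coprime (d' x.2) :=
      Nat.Coprime.coprime_dvd_left (h1 _ hi).1 (Nat.Coprime.coprime_dvd_right (h1' _ hj).1 hQ)
    have : d x.1 * d' x.2 ∣ n ↔ d x.1 ∣ n ∧ d' x.2 ∣ n :=
      ⟨fun h => ⟨dvd_of_mul_right_dvd h, dvd_of_mul_left_dvd h⟩,
        fun h => hc.mul_dvd_of_dvd_of_dvd h.1 h.2⟩
    simp only [this]
    by_cases a : d x.1 ∣ n <;> by_cases b : d' x.2 ∣ n <;> simp [a, b]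
  · rw [h4, h4', Finset.sum_mul_sum, ← Finset.sum_product']
    refine Finset.sum_congr rfl fun x _ => ?_
    push_cast
    rw [div_mul_div_comm]

theorem SieveSum.add {Q : ℕ} {D U U' : ℝ} {T T' : ℕ → ℝ} {v v' : ℝ}
    (h : SieveSum Q D U T v) (h' : SieveSum Q D U' T' v') :
    SieveSum Q D (U + U') (fun n => T n + T' n) (v + v') := by
  obtain ⟨ι, s, d, c, h1, h2, h3, h4⟩ := h
  obtain ⟨ι', s', d', c', h1', h2', h3', h4'⟩ := h'
  refine ⟨ι ⊕ ι', s.disjSum s', Sum.elim d d', Sum.elim c c', ?_, ?_, ?_, ?_⟩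
  · rintro (i | i) hi
    · exact h1 i (by simpa using hi)
    · exact h1' i (by simpa using hi)
  · rw [Finset.sum_disjSum]; exact add_le_add h2 h2'
  · intro n; beta_reduce; rw [Finset.sum_disjSum, h3, h3']; rfl
  · rw [Finset.sum_disjSum, h4, h4']; rfl

theorem SieveSum.neg_pow {Q : ℕ} {D U : ℝ} {T : ℕ → ℝ} {v : ℝ} (h : SieveSum Q D U T v) (k : ℕ) :
    SieveSum Q D U (fun n => (-1) ^ k * T n) ((-1) ^ k * v) := by
  obtain ⟨ι, s, d, c, h1, h2, h3, h4⟩ := h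
  refine ⟨ι, s, d, fun i => (-1) ^ k * c i, h1, ?_, ?_, ?_⟩
  · simpa [abs_mul] using h2
  · intro n; beta_reduce; rw [h3, Finset.mul_sum]; simp only [mul_assoc]
  · rw [h4, Finset.mul_sum]; simp only [mul_div_assoc]

theorem SieveSum.elemSym (P : Finset ℕ) (hP : ∀ p ∈ P, p.Prime) (w : ℝ)
    (hw : ∀ p ∈ P, (p : ℝ) ≤ w) (k : ℕ) :
    SieveSum (∏ p ∈ P, p) (w ^ k) ((P.card : ℝ) ^ k)
      (fun n => elemSym (fun p => if p ∣ n then 1 else 0) P k)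
      (elemSym (fun p => 1 / (p : ℝ)) P k) := by
  refine ⟨Finset ℕ, P.powersetCard k, fun S => ∏ p ∈ S, p, fun _ => 1, ?_, ?_, ?_, ?_⟩
  · intro S hS
    obtain ⟨h1, h2⟩ := Finset.mem_powersetCard.1 hS
    refine ⟨Finset.prod_dvd_prod_of_subset _ _ _ h1, ?_⟩
    push_cast
    calc (∏ p ∈ S, (p : ℝ)) ≤ ∏ _p ∈ S, w :=
          Finset.prod_le_prod (fun _ _ => Nat.cast_nonneg _) fun p hp => hw p (h1 hp)
      _ = w ^ k := by rw [Finset.prod_const, h2]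
  · simp only [abs_one, Finset.sum_const, Finset.card_powersetCard, nsmul_eq_mul, mul_one]
    exact_mod_cast Nat.choose_le_pow _ _
  · intro n
    refine Finset.sum_congr rfl fun S hS => ?_
    obtain ⟨h1, h2⟩ := Finset.mem_powersetCard.1 hS
    have : ∏ p ∈ S, p ∣ n ↔ ∀ p ∈ S, p ∣ n := by
      constructor
      · exact fun h p hp => (Finset.dvd_prod_of_mem _ hp).trans h
      · intro h
        exact Finset.prod_primes_dvd _ (fun p hp => (hP p (h1 hp)).prime) h
    rw [Finset.prod_ite_zero, one_mul]
    simp [this]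
  · refine Finset.sum_congr rfl fun S hS => ?_
    push_cast
    rw [Finset.prod_div_distrib]
    simp

theorem SieveSum.truncProd (P : Finset ℕ) (hP : ∀ p ∈ P, p.Prime) (w : ℝ) (hw1 : 1 ≤ w)
    (hw : ∀ p ∈ P, (p : ℝ) ≤ w) (hc : (P.card : ℝ) + 1 ≤ w) (b : ℕ) :
    SieveSum (∏ p ∈ P, p) (w ^ b) (w ^ b)
      (fun n => truncProd (fun p => if p ∣ n then 1 else 0) P b)
      (truncProd (fun p => 1 / (p : ℝ)) P b) := by
  have key : SieveSum (∏ p ∈ P, p) (w ^ b) (∑ k ∈ Finset.range (b + 1), (P.card : ℝ) ^ k)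
      (fun n => _root_.truncProd (fun p => if p ∣ n then 1 else 0) P b)
      (_root_.truncProd (fun p => 1 / (p : ℝ)) P b) := by
    unfold _root_.truncProd
    have : ∀ m, m ≤ b → SieveSum (∏ p ∈ P, p) (w ^ b) (∑ k ∈ Finset.range (m + 1), (P.card : ℝ) ^ k)
      (fun n => ∑ k ∈ Finset.range (m + 1), (-1) ^ k *
        _root_.elemSym (fun p => if p ∣ n then 1 else 0) P k)
      (∑ k ∈ Finset.range (m + 1), (-1) ^ k * _root_.elemSym (fun p => 1 / (p : ℝ)) P k) := by
      intro m
      induction m with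
      | zero =>
        intro hm
        simp only [zero_add, Finset.sum_range_one]
        exact ((SieveSum.elemSym P hP w hw 0).neg_pow 0).mono
          (pow_le_pow_right₀ hw1 (Nat.zero_le _)) le_rfl
      | succ m ih =>
        intro hm
        simp only [Finset.sum_range_succ _ (m + 1)]
        exact (ih (by omega)).add (((SieveSum.elemSym P hP w hw (m + 1)).neg_pow (m + 1)).mono
          (pow_le_pow_right₀ hw1 hm) le_rfl)
    exact this b le_rfl
  refine key.mono le_rfl ?_
  have h2 : ∀ m : ℕ, ∑ k ∈ Finset.range (m + 1), (P.card : ℝ) ^ k ≤ ((P.card : ℝ) + 1) ^ m := by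
    intro m
    induction m with
    | zero => simp
    | succ m ih =>
      rw [Finset.sum_range_succ, pow_succ ((P.card : ℝ) + 1)]
      have : (P.card : ℝ) ^ (m + 1) ≤ ((P.card : ℝ) + 1) ^ m * P.card := by
        rw [pow_succ]; gcongr; linarith
      linarith
  exact (h2 b).trans (by gcongr)

theorem SieveSum.prod (t : ℕ) (Q : ℕ → ℕ) (hQ : ∀ i j, i < t → j < t → i ≠ j → (Q i).Coprime (Q j))
    (D U : ℕ → ℝ) (hD : ∀ i, 0 ≤ D i) (hU : ∀ i, 0 ≤ U i) (T : ℕ → ℕ → ℝ) (v : ℕ → ℝ)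
    (h : ∀ i < t, SieveSum (Q i) (D i) (U i) (T i) (v i)) :
    SieveSum (∏ i ∈ Finset.range t, Q i) (∏ i ∈ Finset.range t, D i) (∏ i ∈ Finset.range t, U i)
      (fun n => ∏ i ∈ Finset.range t, T i n) (∏ i ∈ Finset.range t, v i) := by
  induction t with
  | zero => simpa using SieveSum.one
  | succ t ih =>
    simp only [Finset.prod_range_succ]
    refine SieveSum.mul ?_ (Finset.prod_nonneg fun i _ => hD i) (Finset.prod_nonneg fun i _ => hU i)
      (ih (fun i j hi hj => hQ i j (by omega) (by omega)) fun i hi => h i (by omega))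
      (h t (by omega))
    refine Nat.Coprime.prod_left fun i hi => ?_
    have := Finset.mem_range.1 hi
    exact hQ i t (by omega) (by omega) (by omega)

theorem SieveSum.apply {Q : ℕ} (hQ : Q ≠ 0) {D U : ℝ} {T : ℕ → ℝ} {v : ℝ}
    (h : SieveSum Q D U T v) (s : Finset ℕ) (a : ℕ → ℝ) (X r : ℝ) (hr : 0 ≤ r)
    (ha : ∀ d : ℕ, 1 ≤ d → (d : ℝ) ≤ D → |∑ n ∈ s.filter (d ∣ ·), a n - X / d| ≤ r) :
    |∑ n ∈ s, a n * T n - X * v| ≤ U * r := by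
  obtain ⟨ι, I, d, c, h1, h2, h3, h4⟩ := h
  have e : ∑ n ∈ s, a n * T n - X * v
      = ∑ i ∈ I, c i * (∑ n ∈ s.filter (d i ∣ ·), a n - X / d i) := by
    simp only [h3, h4, Finset.mul_sum, mul_sub, Finset.sum_sub_distrib]
    congr 1
    · rw [Finset.sum_comm]
      refine Finset.sum_congr rfl fun i _ => ?_
      rw [Finset.sum_filter]
      refine Finset.sum_congr rfl fun n _ => ?_
      split_ifs <;> ring
    · refine Finset.sum_congr rfl fun i _ => ?_
      ring
  rw [e]
  calc _ ≤ ∑ i ∈ I, |c i * (∑ n ∈ s.filter (d i ∣ ·), a n - X / d i)| :=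
        Finset.abs_sum_le_sum_abs _ _
    _ ≤ ∑ i ∈ I, |c i| * r := by
        refine Finset.sum_le_sum fun i hi => ?_
        rw [abs_mul]
        refine mul_le_mul_of_nonneg_left (ha _ ?_ (h1 i hi).2) (abs_nonneg _)
        exact Nat.pos_of_ne_zero fun h0 => hQ (by simpa [h0] using (h1 i hi).1)
    _ = (∑ i ∈ I, |c i|) * r := by rw [Finset.sum_mul]
    _ ≤ U * r := by gcongr

/-! ### The Brun–Hooley sieve -/

/-- If `0 ≤ x i ≤ T i ≤ x i + E i`, replacing one factor `T j` at a time by `E j` bounds the defect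
of `∏ T i` as an approximation to `∏ x i`. -/
theorem prod_lower (t : ℕ) (x T E : ℕ → ℝ) (hx : ∀ i, 0 ≤ x i) (h1 : ∀ i, x i ≤ T i)
    (h2 : ∀ i, T i ≤ x i + E i) (hE : ∀ i, 0 ≤ E i) :
    ∏ i ∈ Finset.range t, T i -
      ∑ j ∈ Finset.range t, ∏ i ∈ Finset.range t, (if i = j then E i else T i)
      ≤ ∏ i ∈ Finset.range t, x i := by
  induction t with
  | zero => simp
  | succ t ih =>
    have e : ∑ j ∈ Finset.range (t + 1), ∏ i ∈ Finset.range (t + 1), (if i = j then E i else T i)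
        = (∑ j ∈ Finset.range t, ∏ i ∈ Finset.range t, (if i = j then E i else T i)) * T t
          + (∏ i ∈ Finset.range t, T i) * E t := by
      rw [Finset.sum_range_succ, Finset.sum_mul]
      congr 1
      · refine Finset.sum_congr rfl fun j hj => ?_
        have := Finset.mem_range.1 hj
        rw [Finset.prod_range_succ, if_neg (by omega)]
      · rw [Finset.prod_range_succ, if_pos rfl]
        congr 1
        refine Finset.prod_congr rfl fun i hi => ?_
        have := Finset.mem_range.1 hi
        rw [if_neg (by omega)]
    rw [e, Finset.prod_range_succ, Finset.prod_range_succ]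
    set A := ∏ i ∈ Finset.range t, T i
    set S := ∑ j ∈ Finset.range t, ∏ i ∈ Finset.range t, (if i = j then E i else T i)
    set I := ∏ i ∈ Finset.range t, x i
    have hI : 0 ≤ I := Finset.prod_nonneg fun i _ => hx i
    have hA : I ≤ A := Finset.prod_le_prod (fun i _ => hx i) fun i _ => h1 i
    have hT : 0 ≤ T t := (hx t).trans (h1 t)
    nlinarith [mul_le_mul_of_nonneg_right ih hT, mul_le_mul_of_nonneg_right hA (hE t),
      mul_le_mul_of_nonneg_left (h2 t) hI]

/-- The Brun–Hooley sieve: the truncation `b i` is applied to each block `P i` of primes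
separately. -/
theorem block_sieve (t : ℕ) (P : ℕ → Finset ℕ) (hP : ∀ i, ∀ p ∈ P i, p.Prime)
    (hdisj : ∀ i j, i < t → j < t → i ≠ j → Disjoint (P i) (P j)) (b : ℕ → ℕ)
    (hb : ∀ i, Even (b i)) (W : ℕ → ℝ) (hW1 : ∀ i, 1 ≤ W i)
    (hWp : ∀ i < t, ∀ p ∈ P i, (p : ℝ) ≤ W i) (hWc : ∀ i < t, ((P i).card : ℝ) + 1 ≤ W i)
    (ρ : ℕ → ℝ) (hρ0 : ∀ i, 0 ≤ ρ i)
    (hρ : ∀ i < t, elemSym (fun p => 1 / (p : ℝ)) (P i) (b i + 1)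
      ≤ ρ i * ∏ p ∈ P i, (1 - 1 / (p : ℝ)))
    (σ : ℝ) (hσ : ∑ i ∈ Finset.range t, ρ i ≤ σ) (hσ1 : σ ≤ 1) (Y : ℝ)
    (hY : ∏ i ∈ Finset.range t, W i ^ (b i + 1) ≤ Y)
    (s : Finset ℕ) (a : ℕ → ℝ) (ha0 : ∀ n ∈ s, 0 ≤ a n) (X r : ℝ) (hX : 0 ≤ X) (hr : 0 ≤ r)
    (ha : ∀ d : ℕ, 1 ≤ d → (d : ℝ) ≤ Y → |∑ n ∈ s.filter (d ∣ ·), a n - X / d| ≤ r) :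
    |∑ n ∈ s, a n * ∏ i ∈ Finset.range t, ∏ p ∈ P i, (1 - (if p ∣ n then (1 : ℝ) else 0))
      - X * ∏ i ∈ Finset.range t, ∏ p ∈ P i, (1 - 1 / (p : ℝ))|
      ≤ 3 * σ * (X * ∏ i ∈ Finset.range t, ∏ p ∈ P i, (1 - 1 / (p : ℝ))) + (t + 1) * (Y * r) := by
  set x : ℕ → ℕ → ℝ := fun n p => if p ∣ n then (1 : ℝ) else 0 with hxdef
  have hx : ∀ n p, 0 ≤ x n p ∧ x n p ≤ 1 := by
    intro n p; simp only [hxdef]; split_ifs <;> norm_num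
  set I : ℕ → ℕ → ℝ := fun n i => ∏ p ∈ P i, (1 - x n p) with hI
  set T : ℕ → ℕ → ℝ := fun i n => truncProd (x n) (P i) (b i) with hT
  set E : ℕ → ℕ → ℝ := fun i n => elemSym (x n) (P i) (b i + 1) with hE
  set V : ℕ → ℝ := fun i => ∏ p ∈ P i, (1 - 1 / (p : ℝ)) with hV
  set v : ℕ → ℝ := fun i => truncProd (fun p => 1 / (p : ℝ)) (P i) (b i) with hv
  set e : ℕ → ℝ := fun i => elemSym (fun p => 1 / (p : ℝ)) (P i) (b i + 1) with he
  have hxp : ∀ i, ∀ p ∈ P i, 0 ≤ 1 / (p : ℝ) ∧ 1 / (p : ℝ) ≤ 1 := by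
    intro i p hp
    have : (1 : ℝ) ≤ p := by exact_mod_cast (hP i p hp).one_le
    exact ⟨by positivity, by rw [div_le_one (by linarith)]; exact this⟩
  have hI0 : ∀ n i, 0 ≤ I n i := fun n i => Finset.prod_nonneg fun p _ => by
    have := (hx n p).2; linarith
  have hIT : ∀ n i, I n i ≤ T i n ∧ T i n ≤ I n i + E i n := by
    intro n i
    have := bonferroni (x n) (P i) (fun p _ => hx n p) (b i)
    rw [(hb i).neg_one_pow] at this
    constructor <;> [linarith [this.1]; linarith [this.2]]
  have hE0 : ∀ n i, 0 ≤ E i n := fun n i => elemSym_nonneg _ _ (fun p _ => (hx n p).1) _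
  have hV0 : ∀ i, 0 ≤ V i := fun i => Finset.prod_nonneg fun p hp => by
    have := (hxp i p hp).2; linarith
  have hVv : ∀ i, V i ≤ v i ∧ v i ≤ V i + e i := by
    intro i
    have := bonferroni (fun p => 1 / (p : ℝ)) (P i) (hxp i) (b i)
    rw [(hb i).neg_one_pow] at this
    constructor <;> [linarith [this.1]; linarith [this.2]]
  have he0 : ∀ i, 0 ≤ e i := fun i => elemSym_nonneg _ _ (fun p hp => (hxp i p hp).1) _
  set VV := ∏ i ∈ Finset.range t, V i with hVV
  have hVV0 : 0 ≤ VV := Finset.prod_nonneg fun i _ => hV0 i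
  have hW0 : ∀ i, 0 ≤ W i := fun i => by linarith [hW1 i]
  set Q : ℕ → ℕ := fun i => ∏ p ∈ P i, p
  have hQ : ∀ i j, i < t → j < t → i ≠ j → (Q i).Coprime (Q j) := by
    intro i j hi hj hij
    refine Nat.Coprime.prod_left fun p hp => Nat.Coprime.prod_right fun p' hp' => ?_
    rw [Nat.coprime_primes (hP i p hp) (hP j p' hp')]
    rintro rfl
    exact Finset.disjoint_left.1 (hdisj i j hi hj hij) hp hp'
  have hQ0 : ∏ i ∈ Finset.range t, Q i ≠ 0 :=
    Finset.prod_ne_zero_iff.2 fun i _ => Finset.prod_ne_zero_iff.2 fun p hp => (hP i p hp).ne_zero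
  have sT : ∀ i < t, SieveSum (Q i) (W i ^ (b i + 1)) (W i ^ (b i + 1)) (T i) (v i) := fun i hi =>
    (SieveSum.truncProd (P i) (hP i) (W i) (hW1 i) (hWp i hi) (hWc i hi) (b i)).mono
      (pow_le_pow_right₀ (hW1 i) (by omega)) (pow_le_pow_right₀ (hW1 i) (by omega))
  have sE : ∀ i < t, SieveSum (Q i) (W i ^ (b i + 1)) (W i ^ (b i + 1)) (E i) (e i) := fun i hi =>
    (SieveSum.elemSym (P i) (hP i) (W i) (hWp i hi) (b i + 1)).mono le_rfl
      (pow_le_pow_left₀ (Nat.cast_nonneg _) (by linarith [hWc i hi]) _)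
  have hWb : ∀ i, 0 ≤ W i ^ (b i + 1) := fun i => pow_nonneg (hW0 i) _
  have uT : |∑ n ∈ s, a n * ∏ i ∈ Finset.range t, T i n - X * ∏ i ∈ Finset.range t, v i|
      ≤ Y * r := by
    refine ((SieveSum.prod t Q hQ _ _ hWb hWb T v sT).apply hQ0 s a X r hr
      fun d hd hdY => ha d hd (hdY.trans hY)).trans ?_
    gcongr
  have uE : ∀ j, |∑ n ∈ s, a n * ∏ i ∈ Finset.range t, (if i = j then E i n else T i n)
      - X * ∏ i ∈ Finset.range t, (if i = j then e i else v i)| ≤ Y * r := by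
    intro j
    refine ((SieveSum.prod t Q hQ _ _ hWb hWb (fun i n => if i = j then E i n else T i n)
      (fun i => if i = j then e i else v i) ?_).apply hQ0 s a X r hr
      fun d hd hdY => ha d hd (hdY.trans hY)).trans ?_
    · intro i hi
      by_cases h : i = j
      · simpa [h] using sE j (h ▸ hi)
      · simpa [h] using sT i hi
    · gcongr
  -- the truncated products have mean value close to `∏ v i`, since `∏ (1 + ρ i) ≤ exp σ`
  have hexp : ∏ i ∈ Finset.range t, (1 + ρ i) ≤ Real.exp σ := by
    calc _ ≤ ∏ i ∈ Finset.range t, Real.exp (ρ i) := by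
          refine Finset.prod_le_prod (fun i _ => by linarith [hρ0 i]) fun i _ => ?_
          linarith [Real.add_one_le_exp (ρ i)]
      _ = Real.exp (∑ i ∈ Finset.range t, ρ i) := (Real.exp_sum _ _).symm
      _ ≤ _ := Real.exp_le_exp.2 hσ
  have hσ0 : 0 ≤ σ := (Finset.sum_nonneg fun i _ => hρ0 i).trans hσ
  have hexp2 : Real.exp σ ≤ 1 + 2 * σ := by
    have := Real.abs_exp_sub_one_le (x := σ) (by rw [abs_of_nonneg hσ0]; exact hσ1)
    rw [abs_of_nonneg hσ0] at this
    linarith [le_abs_self (Real.exp σ - 1)]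
  have hvle : ∀ i < t, v i ≤ V i * (1 + ρ i) := by
    intro i hi
    have h1 := (hVv i).2
    have h2 := hρ i hi
    change e i ≤ ρ i * V i at h2
    linarith
  have hv0 : ∀ i, 0 ≤ v i := fun i => (hV0 i).trans (hVv i).1
  have dens1 : ∏ i ∈ Finset.range t, v i ≤ VV * (1 + 2 * σ) := by
    calc _ ≤ ∏ i ∈ Finset.range t, (V i * (1 + ρ i)) :=
          Finset.prod_le_prod (fun i _ => hv0 i) fun i hi => hvle i (Finset.mem_range.1 hi)
      _ = VV * ∏ i ∈ Finset.range t, (1 + ρ i) := Finset.prod_mul_distrib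
      _ ≤ _ := by gcongr; exact hexp.trans hexp2
  have dens2 : VV ≤ ∏ i ∈ Finset.range t, v i :=
    Finset.prod_le_prod (fun i _ => hV0 i) fun i _ => (hVv i).1
  have dens3 : ∀ j ∈ Finset.range t, ∏ i ∈ Finset.range t, (if i = j then e i else v i)
      ≤ 3 * ρ j * VV := by
    intro j hj
    calc _ ≤ ∏ i ∈ Finset.range t, (V i * ((if i = j then ρ j else 1) * (1 + ρ i))) := by
          refine Finset.prod_le_prod (fun i _ => ?_) fun i hi => ?_
          · split_ifs <;> [exact he0 i; exact hv0 i]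
          · split_ifs with h
            · subst h
              have h2 : e i ≤ ρ i * V i := hρ i (Finset.mem_range.1 hi)
              have := mul_nonneg (mul_nonneg (hV0 i) (hρ0 i)) (hρ0 i)
              nlinarith
            · rw [one_mul]; exact hvle i (Finset.mem_range.1 hi)
      _ = VV * (ρ j * ∏ i ∈ Finset.range t, (1 + ρ i)) := by
          rw [Finset.prod_mul_distrib, Finset.prod_mul_distrib, Finset.prod_ite_eq', if_pos hj]
      _ ≤ VV * (ρ j * 3) := by
          have := hρ0 j
          gcongr
          linarith
      _ = _ := by ring
  have upper : ∑ n ∈ s, a n * ∏ i ∈ Finset.range t, I n i ≤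
      ∑ n ∈ s, a n * ∏ i ∈ Finset.range t, T i n := by
    refine Finset.sum_le_sum fun n hn => mul_le_mul_of_nonneg_left ?_ (ha0 n hn)
    exact Finset.prod_le_prod (fun i _ => hI0 n i) fun i _ => (hIT n i).1
  have lower : ∑ n ∈ s, a n * ∏ i ∈ Finset.range t, T i n -
      ∑ j ∈ Finset.range t, ∑ n ∈ s, a n * ∏ i ∈ Finset.range t, (if i = j then E i n else T i n)
      ≤ ∑ n ∈ s, a n * ∏ i ∈ Finset.range t, I n i := by
    rw [Finset.sum_comm, ← Finset.sum_sub_distrib]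
    refine Finset.sum_le_sum fun n hn => ?_
    rw [← Finset.mul_sum, ← mul_sub]
    exact mul_le_mul_of_nonneg_left (prod_lower t (I n) (fun i => T i n) (fun i => E i n) (hI0 n)
      (fun i => (hIT n i).1) (fun i => (hIT n i).2) (hE0 n)) (ha0 n hn)
  have lower2 : ∑ j ∈ Finset.range t, ∑ n ∈ s,
      a n * ∏ i ∈ Finset.range t, (if i = j then E i n else T i n)
      ≤ X * (3 * σ * VV) + t * (Y * r) := by
    calc _ ≤ ∑ j ∈ Finset.range t, (X * (3 * ρ j * VV) + Y * r) := by
          refine Finset.sum_le_sum fun j hj => ?_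
          have h1 := (abs_le.1 (uE j)).2
          have h2 := mul_le_mul_of_nonneg_left (dens3 j hj) hX
          linarith
      _ = X * (3 * (∑ j ∈ Finset.range t, ρ j) * VV) + t * (Y * r) := by
          rw [Finset.sum_add_distrib, ← Finset.mul_sum, ← Finset.sum_mul, ← Finset.mul_sum]
          simp
      _ ≤ _ := by gcongr
  have hYr : 0 ≤ Y * r :=
    mul_nonneg ((Finset.prod_nonneg fun i _ => hWb i).trans hY) hr
  have ht : (0 : ℝ) ≤ t * (Y * r) := by positivity
  obtain ⟨u1, u2⟩ := abs_le.1 uT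
  have d1 := mul_le_mul_of_nonneg_left dens1 hX
  have d2 := mul_le_mul_of_nonneg_left dens2 hX
  have d3 : 0 ≤ σ * (X * VV) := by positivity
  rw [abs_le]
  constructor
  · linarith
  · linarith

/-! ### Mertens-type estimates and the sieve for rough numbers -/

/-- The primes `p < z`. -/
def primesLT (z : ℝ) : Finset ℕ := (Finset.range ⌈z⌉₊).filter Nat.Prime

theorem mem_primesLT {z : ℝ} {p : ℕ} : p ∈ primesLT z ↔ p.Prime ∧ (p : ℝ) < z := by
  simp [primesLT, Nat.lt_ceil, and_comm]

/-- Mertens: `n!` is divisible by `∏ p ^ ⌊n / p⌋`, and at most `n ^ n`. -/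
theorem mertens (n : ℕ) (hn : 1 ≤ n) :
    ∑ p ∈ n.primesLE, Real.log p / p ≤ Real.log n + Real.log 4 := by
  have hp : ∀ p ∈ n.primesLE, p.Prime ∧ p ≤ n := by
    intro p hp
    simpa [Nat.mem_primesLE, and_comm] using hp
  have hdvd : ∏ p ∈ n.primesLE, p ^ (n / p) ∣ n.factorial := by
    refine Finset.prod_dvd_of_isRelPrime ?_ ?_
    · intro p hp1 p' hp2 hne
      simp only [Function.onFun]
      rw [← Nat.coprime_iff_isRelPrime]
      exact Nat.Coprime.pow _ _ ((Nat.coprime_primes (hp p hp1).1 (hp p' hp2).1).2 hne)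
    · intro p hp1
      obtain ⟨h1, h2⟩ := hp p hp1
      rw [h1.pow_dvd_factorial_iff (b := Nat.log p n + 1) (Nat.lt_succ_self _)]
      have : 1 ∈ Finset.Ico 1 (Nat.log p n + 1) := by
        have := Nat.log_pos h1.one_lt h2
        rw [Finset.mem_Ico]; omega
      have h3 := Finset.single_le_sum (f := fun i => n / p ^ i) (fun _ _ => Nat.zero_le _) this
      simpa using h3
  have hle : ∏ p ∈ n.primesLE, p ^ (n / p) ≤ n ^ n :=
    (Nat.le_of_dvd (Nat.factorial_pos n) hdvd).trans (Nat.factorial_le_pow n)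
  have hlog : ∑ p ∈ n.primesLE, ((n / p : ℕ) : ℝ) * Real.log p ≤ n * Real.log n := by
    have h1 : (∏ p ∈ n.primesLE, (p : ℝ) ^ (n / p)) ≤ (n : ℝ) ^ n := by exact_mod_cast hle
    have h2 := Real.log_le_log (Finset.prod_pos fun p hp1 =>
      pow_pos (by exact_mod_cast (hp p hp1).1.pos) _) h1
    rw [Real.log_prod (fun p hp1 => pow_ne_zero _ (by exact_mod_cast (hp p hp1).1.ne_zero)),
      Real.log_pow] at h2
    simpa [Real.log_pow] using h2
  have hth : ∑ p ∈ n.primesLE, Real.log p ≤ Real.log 4 * n := by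
    rw [← Chebyshev.theta_eq_sum_primesLE_log]
    exact Chebyshev.theta_le_log4_mul_x (Nat.cast_nonneg n)
  have hn0 : (0 : ℝ) < n := by exact_mod_cast hn
  have key : n * ∑ p ∈ n.primesLE, Real.log p / p ≤ n * (Real.log n + Real.log 4) := by
    calc _ ≤ ∑ p ∈ n.primesLE, (((n / p : ℕ) : ℝ) * Real.log p + Real.log p) := by
          rw [Finset.mul_sum]
          refine Finset.sum_le_sum fun p hp1 => ?_
          obtain ⟨h1, h2⟩ := hp p hp1
          have hlog0 : 0 ≤ Real.log p := Real.log_natCast_nonneg p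
          have hp0 : (0 : ℝ) < p := by exact_mod_cast h1.pos
          have : (n : ℝ) / p ≤ ((n / p : ℕ) : ℝ) + 1 := by
            rw [div_le_iff₀ hp0]
            have := Nat.lt_div_mul_add (a := n) h1.pos
            have h4 : (n : ℝ) < (n / p : ℕ) * p + p := by exact_mod_cast this
            linarith
          calc (n : ℝ) * (Real.log p / p) = (n / p : ℝ) * Real.log p := by ring
            _ ≤ (((n / p : ℕ) : ℝ) + 1) * Real.log p := by gcongr
            _ = _ := by ring
      _ ≤ _ := by rw [Finset.sum_add_distrib]; linarith
  exact le_of_mul_le_mul_left key hn0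

/-- By `mertens` the sum of `log p / p` over the block is `O(log w)`, and `log p ≥ log w` on it. -/
theorem sum_inv_block (w : ℝ) (hw : 1 ≤ w) :
    ∑ p ∈ (primesLT (w ^ 2)).filter (fun p : ℕ => w ≤ (p : ℝ)), 1 / (p : ℝ) ≤ 6 := by
  by_cases h2 : w ^ 2 ≤ 2
  · rw [Finset.sum_eq_zero]
    · norm_num
    intro p hp
    exfalso
    obtain ⟨h1, h3⟩ := mem_primesLT.1 (Finset.mem_filter.1 hp).1
    have : (2 : ℝ) ≤ p := by exact_mod_cast h1.two_le
    linarith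
  push Not at h2
  have hlog : Real.log 2 < 2 * Real.log w := by
    have := Real.log_lt_log (by norm_num) h2
    rwa [Real.log_pow] at this
  have hl2 : 0 < Real.log 2 := Real.log_pos (by norm_num)
  have hl : 0 < Real.log w := by linarith
  have h1 : ∑ p ∈ (primesLT (w ^ 2)).filter (fun p : ℕ => w ≤ (p : ℝ)), Real.log w * (1 / (p : ℝ))
      ≤ ∑ p ∈ (⌊w ^ 2⌋₊).primesLE, Real.log p / p := by
    calc _ ≤ ∑ p ∈ (primesLT (w ^ 2)).filter (fun p : ℕ => w ≤ (p : ℝ)), Real.log p / p := by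
          refine Finset.sum_le_sum fun p hp => ?_
          have := (Finset.mem_filter.1 hp).2
          rw [mul_one_div]
          gcongr
      _ ≤ _ := by
          refine Finset.sum_le_sum_of_subset_of_nonneg ?_ ?_
          · intro p hp
            obtain ⟨h1, h3⟩ := mem_primesLT.1 (Finset.mem_filter.1 hp).1
            rw [Nat.mem_primesLE]
            exact ⟨Nat.le_floor h3.le, h1⟩
          · intro p _ _
            exact div_nonneg (Real.log_natCast_nonneg p) (Nat.cast_nonneg _)
  have hfl : 1 ≤ ⌊w ^ 2⌋₊ := Nat.le_floor (by rw [Nat.cast_one]; linarith)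
  have h3 := mertens _ hfl
  have h4 : Real.log (⌊w ^ 2⌋₊ : ℝ) ≤ 2 * Real.log w := by
    have := Real.log_le_log (by exact_mod_cast hfl) (Nat.floor_le (by positivity : 0 ≤ w ^ 2))
    rwa [Real.log_pow] at this
  have h5 : Real.log 4 = 2 * Real.log 2 := by
    rw [show (4 : ℝ) = 2 ^ 2 by norm_num, Real.log_pow]; norm_num
  rw [← Finset.mul_sum] at h1
  have : Real.log w * ∑ p ∈ (primesLT (w ^ 2)).filter (fun p : ℕ => w ≤ (p : ℝ)), 1 / (p : ℝ)
      ≤ Real.log w * 6 := by linarith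
  exact le_of_mul_le_mul_left this hl

theorem exp_neg_le_one_sub (p : ℕ) (hp : 2 ≤ p) :
    Real.exp (-(2 * (1 / (p : ℝ)))) ≤ 1 - 1 / (p : ℝ) := by
  have h2 : (2 : ℝ) ≤ p := by exact_mod_cast hp
  have h1 : 1 / ((p : ℝ) - 1) + 1 ≤ Real.exp (2 * (1 / (p : ℝ))) := by
    refine (Real.add_one_le_exp _).trans (Real.exp_le_exp.2 ?_)
    rw [mul_one_div, div_le_div_iff₀ (by linarith) (by linarith)]
    linarith
  rw [Real.exp_neg, inv_le_comm₀ (Real.exp_pos _)]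
  · refine le_trans (le_of_eq ?_) h1
    have : (p : ℝ) - 1 ≠ 0 := by linarith
    have : (p : ℝ) ≠ 0 := by linarith
    field_simp
    ring
  · rw [sub_pos, div_lt_one (by linarith)]; linarith

theorem prod_block_lower (w : ℝ) (hw : 1 ≤ w) :
    Real.exp (-12) ≤ ∏ p ∈ (primesLT (w ^ 2)).filter (fun p : ℕ => w ≤ (p : ℝ)), (1 - 1 / (p : ℝ)) := by
  calc Real.exp (-12) ≤ Real.exp (∑ p ∈ (primesLT (w ^ 2)).filter (fun p : ℕ => w ≤ (p : ℝ)),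
        (-(2 * (1 / (p : ℝ))))) := by
        rw [Real.exp_le_exp, Finset.sum_neg_distrib, ← Finset.mul_sum]
        linarith [sum_inv_block w hw]
    _ = ∏ p ∈ (primesLT (w ^ 2)).filter (fun p : ℕ => w ≤ (p : ℝ)),
        Real.exp (-(2 * (1 / (p : ℝ)))) := Real.exp_sum _ _
    _ ≤ _ := by
        refine Finset.prod_le_prod (fun _ _ => (Real.exp_pos _).le) fun p hp => ?_
        exact exp_neg_le_one_sub p (mem_primesLT.1 (Finset.mem_filter.1 hp).1).1.two_le

/-- The sum of `1 / p` over a block is at most `6`, so its `k`-th elementary symmetric function is at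
most `6 ^ k / k!`, which `24 ^ k / k! ≤ exp 24` bounds by `exp 24 * 4 ^ (-k)`; the product over the
block is at least `exp (-12)` (`prod_block_lower`). -/
theorem elemSym_block_le (w : ℝ) (hw : 1 ≤ w) (k : ℕ) :
    elemSym (fun p => 1 / (p : ℝ)) ((primesLT (w ^ 2)).filter (fun p : ℕ => w ≤ (p : ℝ))) k ≤
      Real.exp 36 * (1 / 4) ^ k *
        ∏ p ∈ (primesLT (w ^ 2)).filter (fun p : ℕ => w ≤ (p : ℝ)), (1 - 1 / (p : ℝ)) := by
  have h1 := elemSym_le (fun p => 1 / (p : ℝ)) ((primesLT (w ^ 2)).filter (fun p : ℕ => w ≤ (p : ℝ)))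
    (fun p _ => by positivity) k
  have h2 : (∑ p ∈ (primesLT (w ^ 2)).filter (fun p : ℕ => w ≤ (p : ℝ)), 1 / (p : ℝ)) ^ k
      / k.factorial ≤ 6 ^ k / k.factorial := by
    gcongr
    exact sum_inv_block w hw
  have h3 : (6 : ℝ) ^ k / k.factorial = (1 / 4) ^ k * (24 ^ k / k.factorial) := by
    rw [mul_div_assoc', ← mul_pow]; norm_num
  have h4 : (24 : ℝ) ^ k / k.factorial ≤ Real.exp 24 := Real.pow_div_factorial_le_exp 24 (by norm_num) k
  have h5 := prod_block_lower w hw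
  calc _ ≤ (1 / 4) ^ k * Real.exp 24 := by
        refine h1.trans (h2.trans ?_)
        rw [h3]; gcongr
    _ = Real.exp 36 * (1 / 4) ^ k * Real.exp (-12) := by
        rw [show (24 : ℝ) = 36 + (-12) by norm_num, Real.exp_add]; ring
    _ ≤ _ := by gcongr

/-- The iterated square roots of `z`. -/
def sqrtSeq (z : ℝ) : ℕ → ℝ
  | 0 => z
  | n + 1 => Real.sqrt (sqrtSeq z n)

theorem sqrtSeq_ge (z : ℝ) (hz : 1 ≤ z) (i : ℕ) : 1 ≤ sqrtSeq z i := by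
  induction i with
  | zero => exact hz
  | succ i ih => exact Real.one_le_sqrt.2 ih

theorem sqrtSeq_sq (z : ℝ) (hz : 1 ≤ z) (i : ℕ) : sqrtSeq z (i + 1) ^ 2 = sqrtSeq z i :=
  Real.sq_sqrt (by linarith [sqrtSeq_ge z hz i])

theorem sqrtSeq_pow (z : ℝ) (hz : 1 ≤ z) (i : ℕ) : sqrtSeq z i ^ (2 ^ i) = z := by
  induction i with
  | zero => simp [sqrtSeq]
  | succ i ih => rw [pow_succ', pow_mul, sqrtSeq_sq z hz, ih]

theorem sqrtSeq_anti (z : ℝ) (hz : 1 ≤ z) : Antitone (sqrtSeq z) := by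
  refine antitone_nat_of_succ_le fun i => ?_
  have h1 := sqrtSeq_sq z hz i
  have h2 := sqrtSeq_ge z hz (i + 1)
  nlinarith

/-- The primes in `[z ^ (1 / 2 ^ (i + 1)), z ^ (1 / 2 ^ i))`. -/
def primeBlock (z : ℝ) (i : ℕ) : Finset ℕ :=
  (primesLT (sqrtSeq z i)).filter (fun p : ℕ => sqrtSeq z (i + 1) ≤ (p : ℝ))

theorem prod_blocks (z : ℝ) (hz : 1 ≤ z) (f : ℕ → ℝ) (t : ℕ) :
    (∏ i ∈ Finset.range t, ∏ p ∈ primeBlock z i, f p) * ∏ p ∈ primesLT (sqrtSeq z t), f p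
      = ∏ p ∈ primesLT z, f p := by
  induction t with
  | zero => simp [sqrtSeq]
  | succ t ih =>
    rw [← ih, Finset.prod_range_succ, mul_assoc]
    congr 1
    rw [← Finset.prod_filter_mul_prod_filter_not (primesLT (sqrtSeq z t))
      (fun p : ℕ => sqrtSeq z (t + 1) ≤ (p : ℝ))]
    congr 1
    refine Finset.prod_congr ?_ fun _ _ => rfl
    ext p
    simp only [Finset.mem_filter, mem_primesLT, not_le]
    have := sqrtSeq_anti z hz (Nat.le_succ t)
    constructor
    · rintro ⟨h1, h2⟩; exact ⟨⟨h1, by linarith⟩, h2⟩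
    · rintro ⟨⟨h1, _⟩, h2⟩; exact ⟨h1, h2⟩

/-- Once `z ^ (1 / 2 ^ t) ≤ 2`, the first `t` blocks contain all primes below `z`. -/
theorem prod_blocks' (z : ℝ) (hz : 1 ≤ z) (f : ℕ → ℝ) (t : ℕ) (ht : z ≤ 2 ^ (2 ^ t)) :
    ∏ i ∈ Finset.range t, ∏ p ∈ primeBlock z i, f p = ∏ p ∈ primesLT z, f p := by
  rw [← prod_blocks z hz f t]
  have h2 : sqrtSeq z t ≤ 2 := by
    rw [← sqrtSeq_pow z hz t] at ht
    exact le_of_pow_le_pow_left₀ (by positivity) (by norm_num) ht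
  have : primesLT (sqrtSeq z t) = ∅ := by
    ext p
    simp only [mem_primesLT, Finset.notMem_empty, iff_false, not_and, not_lt]
    intro hp
    exact h2.trans (by exact_mod_cast hp.two_le)
  rw [this, Finset.prod_empty, mul_one]

/-- The sieve for the primes below `z`. Block `i` is truncated at degree `2 * (B + i)`; as its primes are
less than `z ^ (1 / 2 ^ i)`, all blocks together involve divisors up to `z ^ (4 * B + 6)` only. -/
theorem sieve (B t : ℕ) (z : ℝ) (hz : 1 ≤ z) (ht : z ≤ 2 ^ (2 ^ t))
    (hB : Real.exp 36 * (1 / 16) ^ B ≤ 1)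
    (s : Finset ℕ) (a : ℕ → ℝ) (ha0 : ∀ n ∈ s, 0 ≤ a n) (X r : ℝ) (hX : 0 ≤ X) (hr : 0 ≤ r)
    (ha : ∀ d : ℕ, 1 ≤ d → (d : ℝ) ≤ z ^ (4 * B + 6) → |∑ n ∈ s.filter (d ∣ ·), a n - X / d| ≤ r) :
    |∑ n ∈ s.filter (fun n => ∀ p ∈ primesLT z, ¬ p ∣ n), a n
      - X * ∏ p ∈ primesLT z, (1 - 1 / (p : ℝ))|
      ≤ 3 * (Real.exp 36 * (1 / 16) ^ B) * (X * ∏ p ∈ primesLT z, (1 - 1 / (p : ℝ)))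
        + (t + 1) * (z ^ (4 * B + 6) * r) := by
  have hw1 := sqrtSeq_ge z hz
  have hblock : ∀ i, primeBlock z i = (primesLT (sqrtSeq z (i + 1) ^ 2)).filter
      (fun p : ℕ => sqrtSeq z (i + 1) ≤ (p : ℝ)) := by
    intro i; rw [sqrtSeq_sq z hz]; rfl
  have hlt : ∀ i, ∀ p ∈ primeBlock z i, p.Prime ∧ (p : ℝ) < sqrtSeq z i := fun i p hp =>
    mem_primesLT.1 (Finset.mem_filter.1 hp).1
  have main := block_sieve t (primeBlock z) (fun i p hp => (hlt i p hp).1) ?_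
    (fun i => 2 * (B + i)) (fun i => even_two_mul _) (sqrtSeq z) hw1
    (fun i _ p hp => (hlt i p hp).2.le) ?_ (fun i => Real.exp 36 * (1 / 4) ^ (2 * (B + i) + 1))
    (fun i => by positivity) (fun i _ => by
      rw [hblock]; exact elemSym_block_le _ (hw1 _) _)
    (Real.exp 36 * (1 / 16) ^ B) ?_ hB (z ^ (4 * B + 6)) ?_ s a ha0 X r hX hr ha
  · have e1 : ∀ n, ∏ i ∈ Finset.range t, ∏ p ∈ primeBlock z i, (1 - (if p ∣ n then (1 : ℝ) else 0))
        = if ∀ p ∈ primesLT z, ¬ p ∣ n then 1 else 0 := by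
      intro n
      rw [prod_blocks' z hz (fun p => 1 - (if p ∣ n then (1 : ℝ) else 0)) t ht]
      split_ifs with h
      · exact Finset.prod_eq_one fun p hp => by simp [h p hp]
      · push Not at h
        obtain ⟨p, hp, hd⟩ := h
        exact Finset.prod_eq_zero hp (by simp [hd])
    simp only [e1, mul_ite, mul_one, mul_zero] at main
    rw [← Finset.sum_filter, prod_blocks' z hz (fun p => 1 - 1 / (p : ℝ)) t ht] at main
    exact main
  · have : ∀ i j, i < j → Disjoint (primeBlock z i) (primeBlock z j) := by
      intro i j hij
      rw [Finset.disjoint_left]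
      intro p hp hp'
      have h1 := (Finset.mem_filter.1 hp).2
      have h2 := (hlt j p hp').2
      have h3 := sqrtSeq_anti z hz (Nat.succ_le_of_lt hij)
      have : sqrtSeq z (i + 1) < sqrtSeq z j := h1.trans_lt h2
      exact absurd h3 (not_le.2 this)
    intro i j _ _ hij
    rcases lt_or_gt_of_ne hij with h | h
    · exact this i j h
    · exact (this j i h).symm
  · intro i _
    have hsub : primeBlock z i ⊆ Finset.Ico 2 ⌈sqrtSeq z i⌉₊ := by
      intro p hp
      obtain ⟨h1, h2⟩ := hlt i p hp
      exact Finset.mem_Ico.2 ⟨h1.two_le, Nat.lt_ceil.2 h2⟩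
    have hc := Finset.card_le_card hsub
    rw [Nat.card_Ico] at hc
    rcases Nat.lt_or_ge ⌈sqrtSeq z i⌉₊ 2 with h | h
    · have : (primeBlock z i).card = 0 := by omega
      rw [this]; simpa using hw1 i
    · have h3 : ((primeBlock z i).card : ℝ) + 2 ≤ ⌈sqrtSeq z i⌉₊ := by exact_mod_cast (by omega)
      have h4 := Nat.ceil_lt_add_one (show 0 ≤ sqrtSeq z i by linarith [hw1 i])
      linarith
  · have : ∀ m : ℕ, ∑ i ∈ Finset.range m, Real.exp 36 * (1 / 4) ^ (2 * (B + i) + 1)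
        ≤ Real.exp 36 * (1 / 16) ^ B * (1 - (1 / 16) ^ m) := by
      intro m
      induction m with
      | zero => simp
      | succ m ih =>
        rw [Finset.sum_range_succ]
        have e : (1 / 4 : ℝ) ^ (2 * (B + m) + 1) = (1 / 16) ^ B * (1 / 16) ^ m * (1 / 4) := by
          rw [pow_succ, pow_mul, pow_add]; norm_num
        rw [e, pow_succ]
        have : 0 ≤ Real.exp 36 * (1 / 16) ^ B * (1 / 16) ^ m := by positivity
        nlinarith
    refine (this t).trans ?_
    have h1 : 0 ≤ Real.exp 36 * (1 / 16 : ℝ) ^ B := by positivity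
    have h2 : (0 : ℝ) ≤ (1 / 16) ^ t := by positivity
    nlinarith
  · have : ∀ m : ℕ, (∏ i ∈ Finset.range m, sqrtSeq z i ^ (2 * (B + i) + 1))
        * sqrtSeq z m ^ (4 * B + 4 * m + 6) = z ^ (4 * B + 6) := by
      intro m
      induction m with
      | zero => simp [sqrtSeq]
      | succ m ih =>
        rw [← ih, Finset.prod_range_succ, mul_assoc]
        congr 1
        have : sqrtSeq z (m + 1) ^ (4 * B + 4 * (m + 1) + 6) = sqrtSeq z m ^ (2 * B + 2 * m + 5) := by
          rw [← sqrtSeq_sq z hz m, ← pow_mul]; congr 1; ring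
        rw [this, ← pow_add]; congr 1; ring
    rw [← this t]
    refine le_mul_of_one_le_right (Finset.prod_nonneg fun i _ => ?_) (one_le_pow₀ (hw1 t))
    exact pow_nonneg (by linarith [hw1 i]) _

theorem prod_primes_lower (t : ℕ) (z : ℝ) (hz : 1 ≤ z) (ht : z ≤ 2 ^ (2 ^ t)) :
    Real.exp (-12) ^ t ≤ ∏ p ∈ primesLT z, (1 - 1 / (p : ℝ)) := by
  rw [← prod_blocks' z hz _ t ht]
  calc Real.exp (-12) ^ t = ∏ _i ∈ Finset.range t, Real.exp (-12) := by simp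
    _ ≤ _ := by
      refine Finset.prod_le_prod (fun _ _ => (Real.exp_pos _).le) fun i _ => ?_
      have := prod_block_lower (sqrtSeq z (i + 1)) (sqrtSeq_ge z hz _)
      rwa [sqrtSeq_sq z hz] at this

/-! ### Quadratic characters modulo `q` -/

/-- The quadratic character `φ` of `(ℤ/qℤ)ˣ` is, on odd integers, the product of a character `ψ`
modulo `8` and a Jacobi symbol with squarefree odd denominator `D ∣ q`. -/
def JacobiForm (q : ℕ) (φ : (ZMod q)ˣ →* ℤˣ) : Prop :=
  ∃ (D : ℕ) (ψ : (ZMod 8)ˣ →* ℤˣ), Odd D ∧ Squarefree D ∧ D ∣ q ∧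
    ∀ (n : ℤ) (u : (ZMod q)ˣ) (v : (ZMod 8)ˣ), (u : ZMod q) = n → (v : ZMod 8) = n →
      ((φ u : ℤˣ) : ℤ) = (ψ v : ℤˣ) * jacobiSym n D

theorem jacobiForm_one (q : ℕ) (φ : (ZMod q)ˣ →* ℤˣ) (h : φ = 1) : JacobiForm q φ := by
  refine ⟨1, 1, odd_one, squarefree_one, one_dvd _, fun n u v _ _ => ?_⟩
  simp [h]

/-- By the Chinese remainder theorem a character modulo `a * b` is a product of characters modulo `a`
and `b`. -/
theorem jacobiForm_mul (a b : ℕ) (hab : a.Coprime b)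
    (ha : ∀ φ, JacobiForm a φ) (hb : ∀ φ, JacobiForm b φ) (φ : (ZMod (a * b))ˣ →* ℤˣ) :
    JacobiForm (a * b) φ := by
  let e : (ZMod (a * b))ˣ ≃* (ZMod a)ˣ × (ZMod b)ˣ :=
    (Units.mapEquiv (ZMod.chineseRemainder hab).toMulEquiv).trans MulEquiv.prodUnits
  obtain ⟨D1, ψ1, o1, s1, d1, h1⟩ :=
    ha ((φ.comp e.symm.toMonoidHom).comp (MonoidHom.inl (ZMod a)ˣ (ZMod b)ˣ))
  obtain ⟨D2, ψ2, o2, s2, d2, h2⟩ :=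
    hb ((φ.comp e.symm.toMonoidHom).comp (MonoidHom.inr (ZMod a)ˣ (ZMod b)ˣ))
  have hc : D1.Coprime D2 := Nat.Coprime.coprime_dvd_left d1 (Nat.Coprime.coprime_dvd_right d2 hab)
  refine ⟨D1 * D2, ψ1 * ψ2, o1.mul o2, (Nat.squarefree_mul hc).2 ⟨s1, s2⟩, mul_dvd_mul d1 d2,
    fun n u v hu hv => ?_⟩
  have hcrt : ZMod.chineseRemainder hab (u : ZMod (a * b)) = (n : ZMod a × ZMod b) := by
    rw [hu, map_intCast]
  have e1 : (((e u).1 : (ZMod a)ˣ) : ZMod a) = n := by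
    have : (((e u).1 : (ZMod a)ˣ) : ZMod a) = (ZMod.chineseRemainder hab (u : ZMod (a * b))).1 := rfl
    rw [this, hcrt]; simp
  have e2 : (((e u).2 : (ZMod b)ˣ) : ZMod b) = n := by
    have : (((e u).2 : (ZMod b)ˣ) : ZMod b) = (ZMod.chineseRemainder hab (u : ZMod (a * b))).2 := rfl
    rw [this, hcrt]; simp
  have k1 := h1 n _ v e1 hv
  have k2 := h2 n _ v e2 hv
  have hu2 : u = e.symm ((e u).1, 1) * e.symm (1, (e u).2) := by
    rw [← map_mul, Prod.mk_mul_mk, mul_one, one_mul, MulEquiv.symm_apply_apply]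
  have : φ u = φ (e.symm ((e u).1, 1)) * φ (e.symm (1, (e u).2)) := by
    rw [← map_mul, ← hu2]
  have : NeZero D1 := ⟨o1.pos.ne'⟩
  have : NeZero D2 := ⟨o2.pos.ne'⟩
  rw [jacobiSym.mul_right, ‹φ u = _›]
  simp only [MonoidHom.comp_apply, MonoidHom.inl_apply, MonoidHom.inr_apply] at k1 k2
  simp only [Units.val_mul, MonoidHom.mul_apply]
  change ((φ (e.symm ((e u).1, 1)) : ℤˣ) : ℤ) = _ at k1
  change ((φ (e.symm (1, (e u).2)) : ℤˣ) : ℤ) = _ at k2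
  rw [k1, k2]; ring

theorem int_units_ne_one (x : ℤˣ) (h : x ≠ 1) : x = -1 := (Int.units_eq_one_or x).resolve_left h

/-- A cyclic group has at most one nontrivial character with values `±1`. -/
theorem cyclic_hom_unique {G : Type*} [Group G] [IsCyclic G] (φ χ : G →* ℤˣ) (h1 : φ ≠ 1)
    (h2 : χ ≠ 1) : φ = χ := by
  obtain ⟨g, hg⟩ := IsCyclic.exists_generator (α := G)
  have key : ∀ φ : G →* ℤˣ, φ ≠ 1 → φ g = -1 := by
    intro φ h
    refine int_units_ne_one _ fun h' => h ?_
    ext x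
    obtain ⟨k, rfl⟩ := Subgroup.mem_zpowers_iff.1 (hg x)
    simp [h']
  ext x
  obtain ⟨k, rfl⟩ := Subgroup.mem_zpowers_iff.1 (hg x)
  simp [key φ h1, key χ h2]

/-- The unit group is cyclic, so its only nontrivial quadratic character is the Legendre symbol. -/
theorem jacobiForm_odd (p n : ℕ) (hp : p.Prime) (hn : n ≠ 0) (hp2 : p ≠ 2)
    (φ : (ZMod (p ^ n))ˣ →* ℤˣ) : JacobiForm (p ^ n) φ := by
  by_cases h : φ = 1
  · exact jacobiForm_one _ φ h
  have : Fact p.Prime := ⟨hp⟩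
  have hd : p ∣ p ^ n := dvd_pow_self p hn
  have : IsCyclic (ZMod (p ^ n))ˣ := ZMod.isCyclic_units_of_prime_pow p hp hp2 n
  set χ : (ZMod (p ^ n))ˣ →* ℤˣ :=
    (quadraticChar (ZMod p)).toUnitHom.comp (ZMod.unitsMap hd) with hχ
  have hχ1 : χ ≠ 1 := by
    have : NeZero (p ^ n) := ⟨pow_ne_zero _ hp.ne_zero⟩
    obtain ⟨a, ha⟩ := quadraticChar_exists_neg_one' (F := ZMod p) (by rwa [ZMod.ringChar_zmod_n])
    obtain ⟨u, rfl⟩ := ZMod.unitsMap_surjective hd a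
    intro h1
    have h2 : ((χ u : ℤˣ) : ℤ) = quadraticChar (ZMod p) (ZMod.unitsMap hd u : (ZMod p)ˣ) := rfl
    rw [h1, ha] at h2
    norm_num at h2
  refine ⟨p, 1, hp.odd_of_ne_two hp2, hp.prime.squarefree, hd, fun m u v hu _ => ?_⟩
  rw [cyclic_hom_unique φ χ h hχ1, ← jacobiSym.legendreSym.to_jacobiSym]
  have h2 : ((χ u : ℤˣ) : ℤ) = quadraticChar (ZMod p) (ZMod.unitsMap hd u : (ZMod p)ˣ) := rfl
  rw [h2, legendreSym, ZMod.unitsMap_val, hu]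
  simp [ZMod.cast_intCast hd]

/-- Hensel: an integer that is `1` modulo `8` is a square modulo every power of `2`. -/
theorem exists_sq_two_pow (a : ℤ) (ha : a % 8 = 1) (n : ℕ) : ∃ x : ℤ, x % 2 = 1 ∧
    (2 : ℤ) ^ (n + 3) ∣ x ^ 2 - a := by
  induction n with
  | zero => exact ⟨1, by norm_num, by norm_num; omega⟩
  | succ n ih =>
    obtain ⟨x, hx, k, hk⟩ := ih
    rcases Int.even_or_odd' k with ⟨m, rfl | rfl⟩
    · exact ⟨x, hx, m, by rw [hk]; ring⟩
    · obtain ⟨y, hy⟩ : ∃ y, x = 2 * y + 1 := ⟨x / 2, by omega⟩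
      refine ⟨x + 2 ^ (n + 2), ?_, m + y + 1 + 2 ^ n, ?_⟩
      · have : (2 : ℤ) ^ (n + 2) = 2 * 2 ^ (n + 1) := by ring
        omega
      · have e : (x + 2 ^ (n + 2)) ^ 2 - a = (x ^ 2 - a) + 2 ^ (n + 3) * x + 2 ^ (2 * n + 4) := by ring
        rw [e, hk, hy]; ring

/-- Units that are `1` modulo `8` are squares, so the character factors through `ZMod 8`. -/
theorem jacobiForm_two (n : ℕ) (φ : (ZMod (2 ^ n))ˣ →* ℤˣ) : JacobiForm (2 ^ n) φ := by
  rcases Nat.lt_or_ge n 3 with h | h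
  · have hd : 2 ^ n ∣ 8 := by
      rw [show 8 = 2 ^ 3 by norm_num]; exact pow_dvd_pow 2 h.le
    refine ⟨1, φ.comp (ZMod.unitsMap hd), odd_one, squarefree_one, one_dvd _, fun m u v hu hv => ?_⟩
    have : ZMod.unitsMap hd v = u := by
      ext
      rw [ZMod.unitsMap_val, hv, hu, ZMod.cast_intCast hd]
    rw [MonoidHom.comp_apply, this]
    simp
  · obtain ⟨k, rfl⟩ : ∃ k, n = k + 3 := ⟨n - 3, by omega⟩
    have hd : 8 ∣ 2 ^ (k + 3) := by
      rw [show 8 = 2 ^ 3 by norm_num]; exact pow_dvd_pow 2 h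
    have : NeZero (2 ^ (k + 3)) := ⟨by positivity⟩
    have hker : (ZMod.unitsMap hd).ker ≤ φ.ker := by
      intro u hu
      rw [MonoidHom.mem_ker] at hu ⊢
      obtain ⟨a, ha⟩ := ZMod.intCast_surjective (u : ZMod (2 ^ (k + 3)))
      have h1 : ((a : ℤ) : ZMod 8) = 1 := by
        have := congrArg (Units.val) hu
        rw [ZMod.unitsMap_val, ← ha, ZMod.cast_intCast hd] at this
        simpa using this
      have h2 : a % 8 = 1 := by
        have : ((a : ℤ) : ZMod 8) = ((1 : ℤ) : ZMod 8) := by simpa using h1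
        exact (ZMod.intCast_eq_intCast_iff a 1 8).1 this
      obtain ⟨x, hx, hdvd⟩ := exists_sq_two_pow a h2 k
      have h3 : (x : ZMod (2 ^ (k + 3))) * x = u := by
        rw [← ha, ← sub_eq_zero]
        have := (ZMod.intCast_zmod_eq_zero_iff_dvd (x ^ 2 - a) (2 ^ (k + 3))).2 (by exact_mod_cast hdvd)
        push_cast at this
        rw [← this]; ring
      have h4 : IsUnit (x : ZMod (2 ^ (k + 3))) := isUnit_of_mul_isUnit_left (h3 ▸ u.isUnit)
      obtain ⟨y, hy⟩ := h4
      have : u = y * y := by ext; rw [← h3, ← hy]; rfl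
      rw [this, map_mul, Int.units_mul_self]
    refine ⟨1, MonoidHom.liftOfSurjective _ (ZMod.unitsMap_surjective hd) ⟨φ, hker⟩, odd_one,
      squarefree_one, one_dvd _, fun m u v hu hv => ?_⟩
    have : ZMod.unitsMap hd u = v := by
      ext
      rw [ZMod.unitsMap_val, hv, hu, ZMod.cast_intCast hd]
    rw [← this, MonoidHom.liftOfRightInverse_comp_apply]
    simp

theorem jacobiForm_all (q : ℕ) (hq : q ≠ 0) : ∀ φ, JacobiForm q φ := by
  induction q using Nat.recOnPosPrimePosCoprime with
  | zero => exact absurd rfl hq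
  | one =>
    intro φ
    refine jacobiForm_one _ φ ?_
    ext u
    rw [Subsingleton.elim u 1, map_one, map_one]
  | prime_pow p n hp hn =>
    intro φ
    by_cases h2 : p = 2
    · subst h2; exact jacobiForm_two n φ
    · exact jacobiForm_odd p n hp hn.ne' h2 φ
  | coprime a b ha hb hab iha ihb =>
    exact jacobiForm_mul a b hab (iha (by omega)) (ihb (by omega))

/-- The shape of a nontrivial quadratic character modulo `q` on odd integers. -/
theorem quadratic_structure (q : ℕ) (hq : q ≠ 0) (φ : (ZMod q)ˣ →* ℤˣ) (hφ : φ ≠ 1) :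
    ∃ (D : ℕ) (ψ : MulChar (ZMod 8) ℤ), Odd D ∧ Squarefree D ∧ D ∣ q ∧ (D ≠ 1 ∨ ψ ≠ 1) ∧
    ∀ (n : ℤ) (u : (ZMod q)ˣ), (u : ZMod q) = n → IsUnit (n : ZMod 8) →
      ((φ u : ℤˣ) : ℤ) = ψ n * jacobiSym n D := by
  obtain ⟨D, ψ, h1, h2, h3, h4⟩ := jacobiForm_all q hq φ
  refine ⟨D, MulChar.ofUnitHom ψ, h1, h2, h3, ?_, ?_⟩
  · by_contra! hc
    obtain ⟨rfl, hψ⟩ := hc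
    apply hφ
    ext u
    have : NeZero q := ⟨hq⟩
    -- an odd integer in the residue class of `u`
    obtain ⟨n, hn, hn2⟩ : ∃ n : ℤ, (u : ZMod q) = n ∧ IsUnit (n : ZMod 8) := by
      have hodd : ∀ m : ℕ, Odd m → IsUnit (m : ZMod 8) := by
        intro m hm
        rw [ZMod.isUnit_iff_coprime, show 8 = 2 ^ 3 by norm_num]
        exact (Nat.coprime_two_right.2 hm).pow_right 3
      set m := (u : ZMod q).val
      have hm : ((m : ℕ) : ZMod q) = u := ZMod.natCast_zmod_val _
      have hcop : m.Coprime q := ZMod.val_coe_unit_coprime u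
      rcases Nat.even_or_odd m with he | ho
      · refine ⟨((m + q : ℕ) : ℤ), by push_cast; rw [hm]; simp, ?_⟩
        rw [Int.cast_natCast]
        refine hodd _ ?_
        refine he.add_odd ?_
        rw [← Nat.not_even_iff_odd]
        intro hqe
        have := Nat.dvd_gcd he.two_dvd hqe.two_dvd
        rw [hcop] at this
        norm_num at this
      · exact ⟨(m : ℤ), by rw [Int.cast_natCast, hm], by rw [Int.cast_natCast]; exact hodd _ ho⟩
    obtain ⟨v, hv⟩ := hn2
    have h5 := h4 n u v hn hv
    have h6 : MulChar.ofUnitHom ψ (v : ZMod 8) = 1 := by rw [hψ]; simp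
    rw [MulChar.ofUnitHom_coe] at h6
    rw [h6] at h5
    simpa using h5
  · intro n u hu hn
    obtain ⟨v, hv⟩ := hn
    rw [h4 n u v hu hv, ← hv, MulChar.ofUnitHom_coe]

/-! ### Sums of quadratic characters over initial segments -/

/-- The function `n ↦ ψ(n) (n / D)`. -/
def octJacobi (D : ℕ) (ψ : MulChar (ZMod 8) ℤ) (n : ℕ) : ℤ := ψ (n : ZMod 8) * jacobiSym n D

theorem octJacobi_mul (D : ℕ) (ψ : MulChar (ZMod 8) ℤ) (m n : ℕ) :
    octJacobi D ψ (m * n) = octJacobi D ψ m * octJacobi D ψ n := by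
  unfold octJacobi
  push_cast
  rw [map_mul, jacobiSym.mul_left]
  ring

theorem mulChar_abs_le (ψ : MulChar (ZMod 8) ℤ) (x : ZMod 8) : |ψ x| ≤ 1 := by
  by_cases h : IsUnit x
  · have := h.map ψ
    rcases Int.isUnit_iff.1 this with h | h <;> simp [h]
  · rw [ψ.map_nonunit h]; simp

theorem octJacobi_abs_le (D : ℕ) (ψ : MulChar (ZMod 8) ℤ) (n : ℕ) : |octJacobi D ψ n| ≤ 1 := by
  unfold octJacobi
  rw [abs_mul]
  calc _ ≤ 1 * 1 := mul_le_mul (mulChar_abs_le _ _) (jacobi_abs_le _ _) (abs_nonneg _) zero_le_one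
    _ = 1 := one_mul 1

theorem jacobi_sum_zero (D : ℕ) (hodd : Odd D) (hsq : Squarefree D) (h1 : D ≠ 1) :
    ∑ x ∈ Finset.range D, jacobiSym (x : ℤ) D = 0 := by
  have hmod : ∀ (E x : ℕ), jacobiSym ((x % E : ℕ) : ℤ) E = jacobiSym (x : ℤ) E := by
    intro E x
    push_cast
    rw [← jacobiSym.mod_left]
  obtain ⟨p, hp, E, rfl⟩ := Nat.exists_prime_and_dvd h1
  have hp2 : p ≠ 2 := by
    rintro rfl
    exact (Nat.not_even_iff_odd.2 hodd) ⟨E, by ring⟩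
  have hE : E ≠ 0 := by rintro rfl; simp at hsq
  have hc : p.Coprime E := Nat.coprime_of_squarefree_mul hsq
  have : NeZero p := ⟨hp.ne_zero⟩
  have : NeZero E := ⟨hE⟩
  have : Fact p.Prime := ⟨hp⟩
  simp only [jacobiSym.mul_right]
  rw [sum_range_mul_coprime p E hp.pos (Nat.pos_of_ne_zero hE) hc (fun x => jacobiSym (x : ℤ) p)
    (fun x => jacobiSym (x : ℤ) E) (hmod p) (hmod E)]
  have h0 : ∑ x ∈ Finset.range p, jacobiSym (x : ℤ) p = 0 := by
    have := quadraticChar_sum_zero (F := ZMod p) (by rwa [ZMod.ringChar_zmod_n])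
    rw [sum_zmod_eq_range] at this
    rw [← this]
    refine Finset.sum_congr rfl fun x _ => ?_
    rw [← jacobiSym.legendreSym.to_jacobiSym]
    simp [legendreSym]
  rw [h0, zero_mul]

theorem octJacobi_period_sum (D : ℕ) (ψ : MulChar (ZMod 8) ℤ) (hodd : Odd D) (hsq : Squarefree D)
    (h : D ≠ 1 ∨ ψ ≠ 1) : ∑ n ∈ Finset.range (8 * D), octJacobi D ψ n = 0 := by
  unfold octJacobi
  have hc : Nat.Coprime 8 D := by
    rw [show 8 = 2 ^ 3 by norm_num]
    exact (Nat.coprime_two_left.2 hodd).pow_left 3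
  rw [sum_range_mul_coprime 8 D (by norm_num) hodd.pos hc (fun n => ψ (n : ZMod 8))
    (fun n => jacobiSym n D) (by intro x; simp) (by intro x; push_cast; rw [← jacobiSym.mod_left])]
  rcases h with h | h
  · rw [jacobi_sum_zero D hodd hsq h, mul_zero]
  · have := MulChar.sum_eq_zero_of_ne_one h
    rw [sum_zmod_eq_range] at this
    rw [this, zero_mul]

/-- Splitting an initial segment of length `8 * M` into residue classes modulo `8`. -/
theorem sum_range_mod (M : ℕ) (f : ℕ → ℤ) :
    ∑ n ∈ Finset.range (8 * M), f n
      = ∑ a ∈ Finset.range 8, ∑ k ∈ Finset.range M, f (8 * k + a) := by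
  rw [Finset.sum_comm]
  induction M with
  | zero => simp
  | succ M ih =>
    rw [Finset.sum_range_succ, ← ih, Nat.mul_succ, Finset.sum_range_add]

theorem octJacobi_period (D : ℕ) (ψ : MulChar (ZMod 8) ℤ) (k j : ℕ) :
    octJacobi D ψ (8 * D * k + j) = octJacobi D ψ j := by
  unfold octJacobi
  congr 1
  · congr 1
    push_cast
    rw [show (8 : ZMod 8) = 0 from rfl]
    ring
  · apply jacobiSym.mod_left'
    push_cast
    rw [show (8 * D * k + j : ℤ) = j + D * (8 * k) by ring, Int.add_mul_emod_self_left]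

/-- `octJacobi` has period `8 * D`, and its sum over a period vanishes. -/
theorem octJacobi_sum_small (D : ℕ) (ψ : MulChar (ZMod 8) ℤ) (hodd : Odd D) (hsq : Squarefree D)
    (h : D ≠ 1 ∨ ψ ≠ 1) (N : ℕ) : |∑ n ∈ Finset.range N, octJacobi D ψ n| ≤ 8 * D := by
  have hz : ∀ M, ∑ n ∈ Finset.range (8 * D * M), octJacobi D ψ n = 0 := by
    intro M
    induction M with
    | zero => simp
    | succ M ih =>
      rw [Nat.mul_succ, Finset.sum_range_add, ih, zero_add]
      simp only [octJacobi_period]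
      exact octJacobi_period_sum D ψ hodd hsq h
  have hD : 0 < 8 * D := by have := hodd.pos; omega
  rw [← Nat.div_add_mod N (8 * D), Finset.sum_range_add, hz, zero_add]
  simp only [octJacobi_period]
  calc _ ≤ ∑ n ∈ Finset.range (N % (8 * D)), |octJacobi D ψ n| := Finset.abs_sum_le_sum_abs _ _
    _ ≤ ∑ n ∈ Finset.range (N % (8 * D)), (1 : ℤ) :=
        Finset.sum_le_sum fun n _ => octJacobi_abs_le D ψ n
    _ ≤ 8 * D := by
        have := (Nat.mod_lt N hD).le
        simp only [Finset.sum_const, Finset.card_range, nsmul_eq_mul, mul_one]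
        exact_mod_cast this

/-- On each residue class modulo `8` the character `ψ` is constant, and since `8` is invertible modulo
`D` what remains is, up to a sign or zero, a sum of Jacobi symbols over consecutive integers. -/
theorem octJacobi_sum_large (C δ : ℝ) (hC : 1 ≤ C) (D : ℕ) (hodd : Odd D)
    (hb : ∀ (M : ℤ) (N : ℕ), |∑ k ∈ Finset.range N, (jacobiSym (M + k) D : ℝ)|
      ≤ C * (N * (D : ℝ) ^ (-δ) + (D : ℝ) ^ (0.255 : ℝ)))
    (ψ : MulChar (ZMod 8) ℤ) (N : ℕ) :
    |∑ n ∈ Finset.range N, (octJacobi D ψ n : ℝ)|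
      ≤ 16 * C * (N * (D : ℝ) ^ (-δ) + (D : ℝ) ^ (0.255 : ℝ)) := by
  obtain ⟨c, hc⟩ : ∃ c : ℤ, (D : ℤ) ∣ 8 * c - 1 := by
    have hcop : IsCoprime (8 : ℤ) D := by
      rw [show (8 : ℤ) = 2 ^ 3 by norm_num]
      refine IsCoprime.pow_left ?_
      exact_mod_cast Nat.isCoprime_iff_coprime.2 (Nat.coprime_two_left.2 hodd)
    obtain ⟨x, y, hxy⟩ := hcop
    exact ⟨x, -y, by linarith⟩
  set Bd := C * (N * (D : ℝ) ^ (-δ) + (D : ℝ) ^ (0.255 : ℝ)) with hBd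
  have hD1 : (1 : ℝ) ≤ D := by exact_mod_cast hodd.pos
  have hB1 : 1 ≤ Bd := by
    have h1 : (1 : ℝ) ≤ (D : ℝ) ^ (0.255 : ℝ) := Real.one_le_rpow hD1 (by norm_num)
    have h2 : (0 : ℝ) ≤ N * (D : ℝ) ^ (-δ) := by positivity
    nlinarith
  -- `8k + a ≡ 8 (k + c a)` modulo `D`
  have hin : ∀ a : ℕ, |∑ k ∈ Finset.range (N / 8), (octJacobi D ψ (8 * k + a) : ℝ)| ≤ Bd := by
    intro a
    have e : ∀ k : ℕ, octJacobi D ψ (8 * k + a)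
        = (ψ (a : ZMod 8) * jacobiSym 8 D) * jacobiSym (c * a + k) D := by
      intro k
      unfold octJacobi
      rw [mul_assoc, ← jacobiSym.mul_left]
      congr 1
      · congr 1; push_cast; rw [show (8 : ZMod 8) = 0 from rfl]; ring
      · apply jacobiSym.mod_left'
        push_cast
        refine Int.modEq_iff_dvd.2 ?_
        have : (8 * (c * a + k) - (8 * k + a) : ℤ) = (8 * c - 1) * a := by ring
        rw [this]
        exact hc.mul_right _
    have hcoef : |(((ψ (a : ZMod 8) * jacobiSym 8 D : ℤ)) : ℝ)| ≤ 1 := by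
      rw [← Int.cast_abs]
      have : |ψ (a : ZMod 8) * jacobiSym 8 D| ≤ 1 := by
        rw [abs_mul]
        calc _ ≤ 1 * 1 := mul_le_mul (mulChar_abs_le _ _) (jacobi_abs_le _ _) (abs_nonneg _) zero_le_one
          _ = 1 := one_mul 1
      exact_mod_cast this
    simp only [e]
    push_cast at hcoef ⊢
    rw [← Finset.mul_sum, abs_mul]
    have h1 := hb (c * a) (N / 8)
    have h2 : C * (((N / 8 : ℕ) : ℝ) * (D : ℝ) ^ (-δ) + (D : ℝ) ^ (0.255 : ℝ)) ≤ Bd := by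
      rw [hBd]
      gcongr
      exact Nat.div_le_self _ _
    calc _ ≤ 1 * Bd := mul_le_mul hcoef (h1.trans h2) (abs_nonneg _) zero_le_one
      _ = Bd := one_mul _
  have hsplit : ∑ n ∈ Finset.range N, (octJacobi D ψ n : ℝ)
      = ∑ a ∈ Finset.range 8, ∑ k ∈ Finset.range (N / 8), (octJacobi D ψ (8 * k + a) : ℝ)
        + ∑ j ∈ Finset.range (N % 8), (octJacobi D ψ (8 * (N / 8) + j) : ℝ) := by
    have h1 := sum_range_mod (N / 8) (octJacobi D ψ)
    conv_lhs => rw [← Nat.div_add_mod N 8, Finset.sum_range_add]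
    congr 1
    exact_mod_cast h1
  rw [hsplit]
  have hrest : |∑ j ∈ Finset.range (N % 8), (octJacobi D ψ (8 * (N / 8) + j) : ℝ)| ≤ 8 := by
    calc _ ≤ ∑ j ∈ Finset.range (N % 8), |(octJacobi D ψ (8 * (N / 8) + j) : ℝ)| :=
          Finset.abs_sum_le_sum_abs _ _
      _ ≤ ∑ j ∈ Finset.range (N % 8), (1 : ℝ) := by
          refine Finset.sum_le_sum fun j _ => ?_
          rw [← Int.cast_abs]
          exact_mod_cast octJacobi_abs_le D ψ _
      _ ≤ 8 := by
          have := (Nat.mod_lt N (show 0 < 8 by norm_num)).le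
          simp only [Finset.sum_const, Finset.card_range, nsmul_eq_mul, mul_one]
          exact_mod_cast this
  have hmain : |∑ a ∈ Finset.range 8, ∑ k ∈ Finset.range (N / 8),
      (octJacobi D ψ (8 * k + a) : ℝ)| ≤ 8 * Bd := by
    calc _ ≤ ∑ a ∈ Finset.range 8, |∑ k ∈ Finset.range (N / 8), (octJacobi D ψ (8 * k + a) : ℝ)| :=
          Finset.abs_sum_le_sum_abs _ _
      _ ≤ ∑ a ∈ Finset.range 8, Bd := Finset.sum_le_sum fun a _ => hin a
      _ = 8 * Bd := by simp
  have := abs_add_le (∑ a ∈ Finset.range 8, ∑ k ∈ Finset.range (N / 8),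
      (octJacobi D ψ (8 * k + a) : ℝ)) (∑ j ∈ Finset.range (N % 8), (octJacobi D ψ (8 * (N / 8) + j) : ℝ))
  rw [hBd] at *
  linarith

/-- Cancellation in sums of length `N ≥ q ^ 0.259`, from Burgess's bound when the conductor is at
least `q ^ 0.1` and from periodicity otherwise. -/
theorem char_sum_bound : ∃ C δ : ℝ, 1 ≤ C ∧ 0 < δ ∧ ∀ (q D : ℕ) (ψ : MulChar (ZMod 8) ℤ), 1 ≤ q →
    Odd D → Squarefree D → D ≤ q → (D ≠ 1 ∨ ψ ≠ 1) → ∀ N : ℕ, (q : ℝ) ^ (0.259 : ℝ) ≤ N →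
    |∑ n ∈ Finset.range N, (octJacobi D ψ n : ℝ)| ≤ C * N * (q : ℝ) ^ (-δ) := by
  obtain ⟨C, δ, hC, hδ, hb⟩ := burgess
  refine ⟨32 * C, min (0.1 * δ) 0.004, by linarith, by positivity, ?_⟩
  intro q D ψ hq hodd hsq hDq hne N hN
  have hq1 : (1 : ℝ) ≤ q := by exact_mod_cast hq
  have hq0 : (0 : ℝ) < q := by linarith
  set δ' := min (0.1 * δ) 0.004 with hδ'
  have hN0 : (0 : ℝ) ≤ N := Nat.cast_nonneg N
  have hD1 : (1 : ℝ) ≤ D := by exact_mod_cast hodd.pos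
  have hDqR : (D : ℝ) ≤ q := by exact_mod_cast hDq
  -- a power of `q` below `q ^ 0.255` is at most `N q ^ (-δ')`
  have hpow : (q : ℝ) ^ (0.255 : ℝ) ≤ N * (q : ℝ) ^ (-δ') := by
    calc (q : ℝ) ^ (0.255 : ℝ) ≤ (q : ℝ) ^ ((0.259 : ℝ) + -δ') := by
          apply Real.rpow_le_rpow_of_exponent_le hq1
          have := min_le_right (0.1 * δ) 0.004
          rw [hδ']; linarith
      _ = (q : ℝ) ^ (0.259 : ℝ) * (q : ℝ) ^ (-δ') := Real.rpow_add hq0 _ _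
      _ ≤ _ := by gcongr
  rcases le_or_gt (D : ℝ) ((q : ℝ) ^ (0.1 : ℝ)) with h | h
  · have h1 : |∑ n ∈ Finset.range N, (octJacobi D ψ n : ℝ)| ≤ 8 * D := by
      exact_mod_cast octJacobi_sum_small D ψ hodd hsq hne N
    have h2 : (q : ℝ) ^ (0.1 : ℝ) ≤ (q : ℝ) ^ (0.255 : ℝ) :=
      Real.rpow_le_rpow_of_exponent_le hq1 (by norm_num)
    have h3 : 0 ≤ N * (q : ℝ) ^ (-δ') := by positivity
    nlinarith
  · have h1 := octJacobi_sum_large C δ hC D hodd (hb D hsq hodd) ψ N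
    have h2 : (D : ℝ) ^ (-δ) ≤ (q : ℝ) ^ (-δ') := by
      calc (D : ℝ) ^ (-δ) ≤ ((q : ℝ) ^ (0.1 : ℝ)) ^ (-δ) :=
            Real.rpow_le_rpow_of_nonpos (by positivity) h.le (by linarith)
        _ = (q : ℝ) ^ (-(0.1 * δ)) := by rw [← Real.rpow_mul hq0.le]; congr 1; ring
        _ ≤ _ := by
          apply Real.rpow_le_rpow_of_exponent_le hq1
          have := min_le_left (0.1 * δ) 0.004
          rw [hδ']; linarith
    have h3 : (D : ℝ) ^ (0.255 : ℝ) ≤ (q : ℝ) ^ (0.255 : ℝ) := by gcongr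
    have h4 : N * (D : ℝ) ^ (-δ) ≤ N * (q : ℝ) ^ (-δ') := by gcongr
    calc _ ≤ 16 * C * (N * (D : ℝ) ^ (-δ) + (D : ℝ) ^ (0.255 : ℝ)) := h1
      _ ≤ 16 * C * (N * (q : ℝ) ^ (-δ') + N * (q : ℝ) ^ (-δ')) := by gcongr; linarith
      _ = _ := by ring

/-! ### Parameters -/

/-- The least `t` with `⌈log₂ q⌉ ≤ 2 ^ t`: the number of blocks used for the sieve. -/
def numBlocks (q : ℕ) : ℕ := Nat.clog 2 (Nat.clog 2 q)

theorem le_numBlocks (q : ℕ) : (q : ℝ) ≤ 2 ^ (2 ^ numBlocks q) := by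
  have h1 := Nat.le_pow_clog (b := 2) (by norm_num) q
  have h2 := Nat.le_pow_clog (b := 2) (by norm_num) (Nat.clog 2 q)
  have h3 : q ≤ 2 ^ (2 ^ numBlocks q) := h1.trans (Nat.pow_le_pow_right (by norm_num) h2)
  exact_mod_cast h3

/-- `exp` of a multiple of `numBlocks q` is only a power of `log q`. -/
theorem exp_numBlocks_le (q : ℕ) (hq : 3 ≤ q) :
    Real.exp (13 * numBlocks q) ≤ (8 * Real.log q) ^ 26 := by
  set L := Nat.clog 2 q with hL
  have hL2 : 1 < L := by
    rw [hL, Nat.lt_clog_iff_pow_lt (by norm_num)]; omega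
  have ht0 : 0 < numBlocks q := Nat.clog_pos (by norm_num) hL2
  have h1 : 2 ^ (numBlocks q - 1) < L := Nat.pow_pred_clog_lt_self (by norm_num) hL2
  have h2 : 2 ^ (L - 1) < q := Nat.pow_pred_clog_lt_self (by norm_num) (by omega)
  have h3 : ((L : ℝ) - 1) * Real.log 2 ≤ Real.log q := by
    have : ((2 : ℝ) ^ (L - 1)) ≤ q := by exact_mod_cast h2.le
    have := Real.log_le_log (by positivity) this
    rw [Real.log_pow] at this
    rwa [Nat.cast_sub (by omega), Nat.cast_one] at this
  have hlog2 : 1 / 2 ≤ Real.log 2 := by linarith [Real.log_two_gt_d9]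
  have hlogq : 1 ≤ Real.log q := by
    rw [Real.le_log_iff_exp_le (by positivity)]
    have : (3 : ℝ) ≤ q := by exact_mod_cast hq
    linarith [Real.exp_one_lt_d9]
  have hL1 : (1 : ℝ) ≤ L := by exact_mod_cast hL2.le
  have h4 : (L : ℝ) ≤ 4 * Real.log q := by nlinarith
  have h5 : (2 : ℝ) ^ numBlocks q ≤ 8 * Real.log q := by
    have : (2 : ℝ) ^ numBlocks q = 2 * 2 ^ (numBlocks q - 1) := by
      rw [← pow_succ']; congr 1; omega
    rw [this]
    have : (2 : ℝ) ^ (numBlocks q - 1) ≤ L := by exact_mod_cast h1.le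
    linarith
  have he : Real.exp 1 ≤ 2 ^ 2 := by linarith [Real.exp_one_lt_d9]
  calc Real.exp (13 * numBlocks q) = Real.exp 1 ^ (13 * numBlocks q) := by
        rw [← Real.exp_nat_mul]; push_cast; rw [mul_one]
    _ ≤ (2 ^ 2) ^ (13 * numBlocks q) := by gcongr
    _ = ((2 : ℝ) ^ numBlocks q) ^ 26 := by rw [← pow_mul, ← pow_mul]; congr 1; ring
    _ ≤ _ := by gcongr

theorem eventually_numBlocks (K c : ℝ) (hK : 0 < K) (hc : 0 < c) :
    ∀ᶠ q : ℕ in Filter.atTop, K * Real.exp (13 * numBlocks q) ≤ (q : ℝ) ^ c := by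
  have h1 := (isLittleO_log_rpow_atTop (show 0 < c / 26 by positivity)).def
    (show (0 : ℝ) < 1 / (8 * (K + 1)) by positivity)
  have h2 := tendsto_natCast_atTop_atTop (R := ℝ) |>.eventually h1
  filter_upwards [h2, Filter.eventually_ge_atTop 3] with q hq hq3
  have hqR : (3 : ℝ) ≤ q := by exact_mod_cast hq3
  have hlog : 0 ≤ Real.log q := Real.log_natCast_nonneg q
  rw [Real.norm_of_nonneg hlog, Real.norm_of_nonneg (by positivity)] at hq
  have h3 : 8 * Real.log q ≤ (q : ℝ) ^ (c / 26) / (K + 1) := by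
    rw [le_div_iff₀ (by linarith)]
    rw [one_div, inv_mul_eq_div, le_div_iff₀ (by linarith)] at hq
    linarith
  have h4 : K ≤ (K + 1) ^ 26 := by
    have := le_self_pow₀ (show 1 ≤ K + 1 by linarith) (show 26 ≠ 0 by norm_num)
    linarith
  calc K * Real.exp (13 * numBlocks q) ≤ (K + 1) ^ 26 * (8 * Real.log q) ^ 26 := by
        gcongr; exact exp_numBlocks_le q hq3
    _ ≤ (K + 1) ^ 26 * ((q : ℝ) ^ (c / 26) / (K + 1)) ^ 26 := by gcongr
    _ = ((q : ℝ) ^ (c / 26)) ^ 26 := by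
        rw [← mul_pow]; congr 1; field_simp
    _ = (q : ℝ) ^ c := by
        rw [← Real.rpow_natCast, ← Real.rpow_mul (by linarith)]; congr 1; push_cast; ring

/-- With `B` of order `1 / √ε` the sieve level stays below `q ^ η`, while its error `16 ^ (-B)` is
exponentially small in `1 / √ε`, hence below `ε`. -/
theorem choose_B (η : ℝ) (hη : 0 < η) : ∃ ε₀ : ℝ, 0 < ε₀ ∧ ε₀ ≤ 1 ∧ ∀ ε : ℝ, 0 < ε → ε < ε₀ →
    ∃ B : ℕ, Real.sqrt ε * (4 * B + 6) ≤ η ∧ 12 * (Real.exp 36 * (1 / 16) ^ B) ≤ ε := by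
  set Y0 := 9600 * Real.exp 36 / η ^ 2 + 2 with hY0
  have hY0pos : 2 ≤ Y0 := by
    have : 0 ≤ 9600 * Real.exp 36 / η ^ 2 := by positivity
    linarith
  refine ⟨min 1 ((η / (10 * Y0)) ^ 2), by positivity, min_le_left _ _, fun ε hε hε0 => ?_⟩
  have hs0 : 0 < Real.sqrt ε := Real.sqrt_pos.2 hε
  have hs : Real.sqrt ε ≤ η / (10 * Y0) := by
    rw [Real.sqrt_le_left (by positivity)]
    exact (hε0.trans_le (min_le_right _ _)).le
  set y := η / (10 * Real.sqrt ε) with hy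
  have hyY : Y0 ≤ y := by
    rw [hy, le_div_iff₀ (by positivity)]
    rw [le_div_iff₀ (by positivity)] at hs
    linarith
  have hyη : 10 * Real.sqrt ε * y = η := by rw [hy]; field_simp
  have hfl : (⌊y⌋₊ : ℝ) ≤ y := Nat.floor_le (by linarith)
  have hfl2 : y < ⌊y⌋₊ + 1 := Nat.lt_floor_add_one y
  set B := ⌊y⌋₊ with hB
  refine ⟨B, ?_, ?_⟩
  · have h1 : (4 * B + 6 : ℝ) ≤ 10 * y := by linarith
    calc _ ≤ Real.sqrt ε * (10 * y) := by gcongr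
      _ = η := by rw [← hyη]; ring
  · have h2 : y / 2 ≤ B := by linarith
    have h3 : ((B : ℝ)) ^ 3 ≤ 16 ^ B := by
      have : B ≤ 2 ^ B := Nat.lt_two_pow_self.le
      have h4 : (B : ℝ) ≤ 2 ^ B := by exact_mod_cast this
      calc (B : ℝ) ^ 3 ≤ (2 ^ B) ^ 3 := by gcongr
        _ = 8 ^ B := by rw [← pow_mul, mul_comm, pow_mul]; norm_num
        _ ≤ 16 ^ B := by gcongr; norm_num
    have h4 : y ^ 3 / 8 ≤ 16 ^ B := by
      calc y ^ 3 / 8 = (y / 2) ^ 3 := by ring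
        _ ≤ (B : ℝ) ^ 3 := by gcongr
        _ ≤ _ := h3
    have h5 : ε = η ^ 2 / (100 * y ^ 2) := by
      have : Real.sqrt ε = η / (10 * y) := by
        rw [eq_div_iff (by positivity)]; linarith
      rw [← Real.sq_sqrt hε.le, this]; ring
    have h6 : 9600 * Real.exp 36 ≤ y * η ^ 2 := by
      have : 9600 * Real.exp 36 / η ^ 2 ≤ y := by linarith
      rwa [div_le_iff₀ (by positivity)] at this
    have h7 : 12 * Real.exp 36 ≤ ε * 16 ^ B := by
      calc 12 * Real.exp 36 ≤ y * η ^ 2 / 800 := by linarith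
        _ = ε * (y ^ 3 / 8) := by rw [h5]; field_simp; ring
        _ ≤ _ := by gcongr
    rw [one_div, inv_pow]
    rw [← mul_assoc, ← div_eq_mul_inv, div_le_iff₀ (by positivity)]
    exact h7

theorem card_filter_dvd (N d : ℕ) : ((Finset.Icc 1 N).filter (d ∣ ·)).card = N / d := by
  have := Nat.card_multiples N d
  rw [← Nat.Ioc_filter_dvd_card_eq_div]
  rfl

/-- Few integers without prime factors below `z` share a factor with `q`. -/
theorem bad_card (q N : ℕ) (hq : q ≠ 0) (z : ℝ) (hz : 0 < z) :
    ((((Finset.Icc 1 N).filter (fun n => ∀ p ∈ primesLT z, ¬ p ∣ n)).filter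
      (fun n => ¬ n.Coprime q)).card : ℝ) ≤ q.primeFactors.card * (N / z) := by
  have hsub : ((Finset.Icc 1 N).filter (fun n => ∀ p ∈ primesLT z, ¬ p ∣ n)).filter
      (fun n => ¬ n.Coprime q) ⊆ (q.primeFactors.filter (fun p : ℕ => z ≤ p)).biUnion
        (fun p => (Finset.Icc 1 N).filter (p ∣ ·)) := by
    intro n hn
    simp only [Finset.mem_filter] at hn
    obtain ⟨⟨h1, h2⟩, h3⟩ := hn
    obtain ⟨p, hp, hpn, hpq⟩ := Nat.Prime.not_coprime_iff_dvd.1 h3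
    refine Finset.mem_biUnion.2 ⟨p, Finset.mem_filter.2 ⟨Nat.mem_primeFactors.2 ⟨hp, hpq, hq⟩, ?_⟩,
      Finset.mem_filter.2 ⟨h1, hpn⟩⟩
    by_contra! h
    exact h2 p (mem_primesLT.2 ⟨hp, h⟩) hpn
  calc _ ≤ (((q.primeFactors.filter (fun p : ℕ => z ≤ p)).biUnion
        (fun p => (Finset.Icc 1 N).filter (p ∣ ·))).card : ℝ) := by
        exact_mod_cast Finset.card_le_card hsub
    _ ≤ ∑ p ∈ q.primeFactors.filter (fun p : ℕ => z ≤ p),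
        (((Finset.Icc 1 N).filter (p ∣ ·)).card : ℝ) := by exact_mod_cast Finset.card_biUnion_le
    _ ≤ ∑ p ∈ q.primeFactors.filter (fun p : ℕ => z ≤ p), (N / z : ℝ) := by
        refine Finset.sum_le_sum fun p hp => ?_
        rw [card_filter_dvd]
        refine Nat.cast_div_le.trans ?_
        have := (Finset.mem_filter.1 hp).2
        gcongr
    _ ≤ ∑ p ∈ q.primeFactors, (N / z : ℝ) :=
        Finset.sum_le_sum_of_subset_of_nonneg (Finset.filter_subset _ _) fun _ _ _ => by positivity
    _ = _ := by simp

/-! ### Rough numbers in a coset -/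

/-- The positive integers up to `N` without prime factors below `z`. -/
def roughs (N : ℕ) (z : ℝ) : Finset ℕ :=
  (Finset.Icc 1 N).filter (fun n => ∀ p ∈ primesLT z, ¬ p ∣ n)

theorem sum_filter_dvd (N d : ℕ) (hd : 1 ≤ d) (f : ℕ → ℝ) :
    ∑ n ∈ (Finset.Icc 1 N).filter (d ∣ ·), f n = ∑ m ∈ Finset.Icc 1 (N / d), f (d * m) := by
  symm
  refine Finset.sum_bij (fun m _ => d * m) ?_ ?_ ?_ ?_
  · intro m hm
    rw [Finset.mem_Icc] at hm
    refine Finset.mem_filter.2 ⟨Finset.mem_Icc.2 ⟨Nat.mul_pos hd hm.1, ?_⟩, dvd_mul_right _ _⟩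
    exact (Nat.mul_le_mul_left d hm.2).trans (Nat.mul_div_le N d)
  · intro a _ b _ h
    exact Nat.eq_of_mul_eq_mul_left hd h
  · intro n hn
    obtain ⟨h1, k, rfl⟩ := Finset.mem_filter.1 hn
    rw [Finset.mem_Icc] at h1
    refine ⟨k, Finset.mem_Icc.2 ⟨?_, ?_⟩, rfl⟩
    · by_contra h
      have : k = 0 := by omega
      subst this; simp at h1
    · rw [Nat.le_div_iff_mul_le hd, mul_comm]; exact h1.2
  · intro _ _; rfl

theorem floor_div_sub (N d : ℕ) (hd : 1 ≤ d) : |((N / d : ℕ) : ℝ) - (N : ℝ) / d| ≤ 1 := by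
  have hd' : (0 : ℝ) < d := by exact_mod_cast hd
  have h1 : ((N / d : ℕ) : ℝ) ≤ (N : ℝ) / d := Nat.cast_div_le
  have h2 : (N : ℝ) / d ≤ (N / d : ℕ) + 1 := by
    rw [div_le_iff₀ hd']
    have := (Nat.lt_mul_div_succ N hd).le
    have h : (N : ℝ) ≤ d * ((N / d : ℕ) + 1) := by exact_mod_cast this
    linarith
  rw [abs_le]; constructor <;> linarith

theorem upper_remainder (N d : ℕ) (hd : 1 ≤ d) :
    |∑ _n ∈ (Finset.Icc 1 N).filter (d ∣ ·), (1 : ℝ) - (N : ℝ) / d| ≤ 1 := by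
  rw [Finset.sum_const, card_filter_dvd, nsmul_eq_mul, mul_one]
  exact floor_div_sub N d hd

theorem octJacobi_zero (D : ℕ) (ψ : MulChar (ZMod 8) ℤ) : octJacobi D ψ 0 = 0 := by
  unfold octJacobi
  rw [Nat.cast_zero, MulChar.map_nonunit ψ (by rw [isUnit_zero_iff]; decide), zero_mul]

/-- By multiplicativity the sum of `octJacobi` over the multiples of `d` up to `N` is, up to a sign or
zero, a sum over an initial segment of length `N / d`. -/
theorem lower_remainder (N d D : ℕ) (ψ : MulChar (ZMod 8) ℤ) (hd : 1 ≤ d) (σ E : ℝ) (hσ : |σ| ≤ 1)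
    (hE : |∑ m ∈ Finset.range (N / d + 1), (octJacobi D ψ m : ℝ)| ≤ E) :
    |∑ n ∈ (Finset.Icc 1 N).filter (d ∣ ·), (1 + σ * octJacobi D ψ n) / 2 - ((N : ℝ) / 2) / d|
      ≤ 1 + E := by
  have hE0 : 0 ≤ E := (abs_nonneg _).trans hE
  have h1 : ∑ n ∈ (Finset.Icc 1 N).filter (d ∣ ·), (1 + σ * octJacobi D ψ n) / 2 =
      ((N / d : ℕ) : ℝ) / 2 + σ * octJacobi D ψ d *
        (∑ m ∈ Finset.range (N / d + 1), (octJacobi D ψ m : ℝ)) / 2 := by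
    rw [sum_filter_dvd N d hd]
    have h2 : ∑ m ∈ Finset.range (N / d + 1), (octJacobi D ψ m : ℝ) =
        ∑ m ∈ Finset.Icc 1 (N / d), (octJacobi D ψ m : ℝ) := by
      rw [Finset.sum_range_succ', octJacobi_zero, Int.cast_zero, add_zero]
      refine Finset.sum_bij (fun i _ => i + 1) ?_ ?_ ?_ ?_
      · intro i hi
        rw [Finset.mem_range] at hi
        exact Finset.mem_Icc.2 ⟨by omega, by omega⟩
      · intro a _ b _ h; exact Nat.succ_injective h
      · intro i hi
        rw [Finset.mem_Icc] at hi
        exact ⟨i - 1, Finset.mem_range.2 (by omega), by omega⟩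
      · intro _ _; rfl
    rw [h2, ← Finset.sum_div, Finset.sum_add_distrib, Finset.sum_const, Nat.card_Icc,
      Finset.mul_sum, nsmul_eq_mul, mul_one, Nat.add_sub_cancel, add_div]
    congr 2
    refine Finset.sum_congr rfl fun m _ => ?_
    rw [octJacobi_mul]; push_cast; ring
  rw [h1]
  set S := ∑ m ∈ Finset.range (N / d + 1), (octJacobi D ψ m : ℝ)
  have h3 := floor_div_sub N d hd
  have h4 : |σ * octJacobi D ψ d * S| ≤ E := by
    have hg : |(octJacobi D ψ d : ℝ)| ≤ 1 := by exact_mod_cast octJacobi_abs_le D ψ d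
    rw [abs_mul, abs_mul]
    calc |σ| * |(octJacobi D ψ d : ℝ)| * |S| ≤ 1 * 1 * E := by gcongr
      _ = E := by ring
  have h5 : ((N : ℝ) / 2) / d = ((N : ℝ) / d) / 2 := by ring
  rw [h5]
  rw [abs_le] at *
  constructor <;> linarith [h3.1, h3.2, h4.1, h4.2]

/-- The numerical comparison: both sieve counts are `T` and `T / 2` up to a proportion `ε`. -/
theorem final_ineq (ε T ρ e S₁ S₂ w : ℝ) (hε : 0 < ε) (hε1 : ε ≤ 1 / 2) (hT : 0 ≤ T)
    (hρ : ρ ≤ ε / 4) (he : e ≤ ε / 4 * T) (hw : w ≤ ε / 4 * T)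
    (h1 : |S₁ - T| ≤ ρ * T + e) (h2 : |S₂ - T / 2| ≤ ρ * (T / 2) + e) :
    (1 / 2 - ε) * S₁ ≤ S₂ - w := by
  have hρT : ρ * T ≤ ε / 4 * T := by gcongr
  have h3 : S₁ ≤ T * (1 + ε / 2) := by linarith [(abs_le.1 h1).2]
  have h4 : T * (1 / 2 - 3 * ε / 8) ≤ S₂ := by linarith [(abs_le.1 h2).1]
  have h5 : (1 / 2 - ε) * S₁ ≤ (1 / 2 - ε) * (T * (1 + ε / 2)) :=
    mul_le_mul_of_nonneg_left h3 (by linarith)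
  have h6 : 0 ≤ ε * T := by positivity
  nlinarith [mul_nonneg hε.le h6]

/-- The sieve applied to the weights `1` and `(1 + σ g(n)) / 2`, with `g` a real character given
by a Jacobi symbol; the integers sharing a factor with `q` are discarded. -/
theorem rough_char : ∃ ε₀ : ℝ, 0 < ε₀ ∧ ∀ ε : ℝ, 0 < ε → ε < ε₀ →
    ∀ᶠ q : ℕ in Filter.atTop, 2 ≤ (q : ℝ) ^ (0.0005 : ℝ) ∧ 2 < (q : ℝ) ^ Real.sqrt ε ∧
      ∀ (D : ℕ) (ψ : MulChar (ZMod 8) ℤ) (σ : ℝ) (N : ℕ), Odd D → Squarefree D → D ≤ q →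
        (D ≠ 1 ∨ ψ ≠ 1) → |σ| ≤ 1 → (q : ℝ) ^ (0.2595 : ℝ) ≤ N →
        (1 / 2 - ε) * ((roughs N ((q : ℝ) ^ Real.sqrt ε)).card : ℝ) ≤
          ∑ n ∈ roughs N ((q : ℝ) ^ Real.sqrt ε), (1 + σ * octJacobi D ψ n) / 2 -
            (((roughs N ((q : ℝ) ^ Real.sqrt ε)).filter (fun n => ¬ n.Coprime q)).card : ℝ) := by
  obtain ⟨C, δ, hC, hδ, hchar⟩ := char_sum_bound
  set δ' := min δ 0.1 with hδ'
  have hδ'0 : 0 < δ' := lt_min hδ (by norm_num)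
  set η := min 0.0005 (δ' / 2) with hη
  have hη0 : 0 < η := lt_min (by norm_num) (by positivity)
  obtain ⟨ε₀, hε₀, hε₀1, hB⟩ := choose_B η hη0
  refine ⟨min ε₀ (1 / 2), lt_min hε₀ (by norm_num), fun ε hε hεlt => ?_⟩
  obtain ⟨B, hB1, hB2⟩ := hB ε hε (hεlt.trans_le (min_le_left _ _))
  have hεhalf : ε ≤ 1 / 2 := (hεlt.trans_le (min_le_right _ _)).le
  set s := Real.sqrt ε with hs
  have hs0 : 0 < s := Real.sqrt_pos.2 hε
  have hs1 : s ≤ 1 := Real.sqrt_le_one.2 (by linarith)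
  obtain ⟨C₁, hC₁, hω⟩ := pow_omega_le 2 (s / 2) (by norm_num) (by positivity)
  have hev : ∀ c : ℝ, 0 < c → ∀ᶠ q : ℕ in Filter.atTop, 3 ≤ (q : ℝ) ^ c := fun c hc =>
    ((tendsto_rpow_atTop hc).comp tendsto_natCast_atTop_atTop).eventually_ge_atTop 3
  filter_upwards [hev 0.0005 (by norm_num), hev s hs0, Filter.eventually_ge_atTop 1,
    eventually_numBlocks ((2 + 2 * C) * (4 / ε)) (δ' / 2) (by positivity) (by positivity),
    eventually_numBlocks (C₁ * (4 / ε)) (s / 2) (by positivity) (by positivity)]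
    with q hq1 hq2 hq3 hq4 hq5
  refine ⟨by linarith, by linarith, fun D ψ σ N hodd hsq hDq hne hσ hN => ?_⟩
  have hq0 : (0 : ℝ) < q := by exact_mod_cast hq3
  have hqone : (1 : ℝ) ≤ q := by exact_mod_cast hq3
  set z := (q : ℝ) ^ s with hz
  set t := numBlocks q with ht
  have hz1 : 1 ≤ z := by linarith
  have hzt : z ≤ 2 ^ (2 ^ t) := by
    refine le_trans ?_ (le_numBlocks q)
    calc z ≤ (q : ℝ) ^ (1 : ℝ) := Real.rpow_le_rpow_of_exponent_le hqone hs1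
      _ = q := Real.rpow_one _
  have hlevel : z ^ (4 * B + 6) ≤ (q : ℝ) ^ η := by
    rw [hz, ← Real.rpow_natCast, ← Real.rpow_mul hq0.le]
    refine Real.rpow_le_rpow_of_exponent_le hqone ?_
    push_cast; exact hB1
  set V := ∏ p ∈ primesLT z, (1 - 1 / (p : ℝ)) with hV
  have hVlow : Real.exp (-12) ^ t ≤ V := prod_primes_lower t z hz1 hzt
  have hV0 : 0 < V := lt_of_lt_of_le (by positivity) hVlow
  have hN1 : (1 : ℝ) ≤ N := le_trans (Real.one_le_rpow hqone (by norm_num)) hN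
  have hNpos : (0 : ℝ) < N := by linarith
  have hBexp : Real.exp 36 * (1 / 16) ^ B ≤ 1 := by
    have : 0 ≤ Real.exp 36 * (1 / 16) ^ B := by positivity
    linarith
  set r := 1 + C * (2 * N) * (q : ℝ) ^ (-δ) with hr
  have hr0 : 0 ≤ r := by positivity
  have hd : ∀ d : ℕ, 1 ≤ d → (d : ℝ) ≤ z ^ (4 * B + 6) →
      |∑ m ∈ Finset.range (N / d + 1), (octJacobi D ψ m : ℝ)| ≤ C * (2 * N) * (q : ℝ) ^ (-δ) := by
    intro d hd1 hd2
    have hd0 : (0 : ℝ) < d := by exact_mod_cast hd1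
    have h1 : (N : ℝ) / d ≤ (N / d : ℕ) + 1 := by
      linarith [(abs_le.1 (floor_div_sub N d hd1)).1]
    have h2 : (q : ℝ) ^ (0.259 : ℝ) ≤ ((N / d + 1 : ℕ) : ℝ) := by
      push_cast
      refine le_trans ?_ h1
      rw [le_div_iff₀ hd0]
      calc (q : ℝ) ^ (0.259 : ℝ) * d ≤ (q : ℝ) ^ (0.259 : ℝ) * (q : ℝ) ^ (0.0005 : ℝ) := by
            gcongr
            refine hd2.trans (hlevel.trans ?_)
            exact Real.rpow_le_rpow_of_exponent_le hqone (min_le_left _ _)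
        _ = (q : ℝ) ^ (0.2595 : ℝ) := by rw [← Real.rpow_add hq0]; norm_num
        _ ≤ N := hN
    refine (hchar q D ψ hq3 hodd hsq hDq hne _ h2).trans ?_
    gcongr
    have h3 : ((N / d : ℕ) : ℝ) ≤ N := by exact_mod_cast Nat.div_le_self N d
    push_cast; linarith
  have hsieve1 := sieve B t z hz1 hzt hBexp (Finset.Icc 1 N) (fun _ => 1)
    (fun _ _ => zero_le_one) N r hNpos.le hr0 (fun d hd1 hd2 => (upper_remainder N d hd1).trans
      (by rw [hr]; have : 0 ≤ C * (2 * N) * (q : ℝ) ^ (-δ) := by positivity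
          linarith))
  have hsieve2 := sieve B t z hz1 hzt hBexp (Finset.Icc 1 N)
    (fun n => (1 + σ * octJacobi D ψ n) / 2) (fun n _ => by
      have hg : |(octJacobi D ψ n : ℝ)| ≤ 1 := by exact_mod_cast octJacobi_abs_le D ψ n
      have : |σ * octJacobi D ψ n| ≤ 1 := by
        rw [abs_mul]; exact mul_le_one₀ hσ (abs_nonneg _) hg
      linarith [(abs_le.1 this).1]) (N / 2) r (by positivity) hr0
    (fun d hd1 hd2 => lower_remainder N d D ψ hd1 σ _ hσ (hd d hd1 hd2))
  have hexp : Real.exp (-12) ^ t = (Real.exp (13 * t))⁻¹ * Real.exp t := by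
    rw [← Real.exp_nat_mul, ← Real.exp_neg, ← Real.exp_add]; congr 1; ring
  have ht1 : (t : ℝ) + 1 ≤ Real.exp t := Real.add_one_le_exp _
  have ht0 : (1 : ℝ) ≤ Real.exp t := Real.one_le_exp (by positivity)
  have hrle : r ≤ (2 + 2 * C) * N * (q : ℝ) ^ (-δ') := by
    have h1 : (q : ℝ) ^ (-δ) ≤ (q : ℝ) ^ (-δ') :=
      Real.rpow_le_rpow_of_exponent_le hqone (by linarith [min_le_left δ 0.1])
    have h2 : 1 ≤ N * (q : ℝ) ^ (-δ') := by
      rw [Real.rpow_neg hq0.le, ← div_eq_mul_inv, one_le_div (by positivity)]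
      refine le_trans (Real.rpow_le_rpow_of_exponent_le hqone ?_) hN
      exact (min_le_right _ _).trans (by norm_num)
    have h3 : C * (2 * N) * (q : ℝ) ^ (-δ) ≤ C * (2 * N) * (q : ℝ) ^ (-δ') := by gcongr
    rw [hr]; nlinarith
  refine final_ineq ε (N * V) (3 * (Real.exp 36 * (1 / 16) ^ B)) ((t + 1) * (z ^ (4 * B + 6) * r))
    _ _ _ hε hεhalf (by positivity) (by linarith) ?_ ?_ ?_ ?_
  · -- the remainder term saves `q ^ (δ' / 2)`, more than any power of `exp t`
    have h1 : (q : ℝ) ^ η * (q : ℝ) ^ (-δ') ≤ ((q : ℝ) ^ (δ' / 2))⁻¹ := by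
      rw [← Real.rpow_add hq0, ← Real.rpow_neg hq0.le]
      refine Real.rpow_le_rpow_of_exponent_le hqone ?_
      linarith [min_le_right 0.0005 (δ' / 2)]
    have h2 : (2 + 2 * C) * ((q : ℝ) ^ (δ' / 2))⁻¹ ≤ ε / 4 * (Real.exp (13 * t))⁻¹ := by
      rw [← div_eq_mul_inv, ← div_eq_mul_inv, div_le_div_iff₀ (by positivity) (by positivity)]
      have := mul_le_mul_of_nonneg_left hq4 (show 0 ≤ ε / 4 by positivity)
      calc _ = ε / 4 * ((2 + 2 * C) * (4 / ε) * Real.exp (13 * t)) := by field_simp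
        _ ≤ _ := this
    calc (t + 1) * (z ^ (4 * B + 6) * r)
        ≤ Real.exp t * ((q : ℝ) ^ η * ((2 + 2 * C) * N * (q : ℝ) ^ (-δ'))) := by gcongr
      _ = Real.exp t * N * ((2 + 2 * C) * ((q : ℝ) ^ η * (q : ℝ) ^ (-δ'))) := by ring
      _ ≤ Real.exp t * N * ((2 + 2 * C) * ((q : ℝ) ^ (δ' / 2))⁻¹) := by gcongr
      _ ≤ Real.exp t * N * (ε / 4 * (Real.exp (13 * t))⁻¹) := by gcongr
      _ = ε / 4 * (N * Real.exp (-12) ^ t) := by rw [hexp]; ring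
      _ ≤ ε / 4 * (N * V) := by gcongr
  · have h1 : (q.primeFactors.card : ℝ) ≤ C₁ * (q : ℝ) ^ (s / 2) := by
      refine le_trans ?_ (hω q hq3)
      exact_mod_cast Nat.lt_two_pow_self.le
    have h2 : C₁ * ((q : ℝ) ^ (s / 2))⁻¹ ≤ ε / 4 * (Real.exp (13 * t))⁻¹ := by
      rw [← div_eq_mul_inv, ← div_eq_mul_inv, div_le_div_iff₀ (by positivity) (by positivity)]
      have := mul_le_mul_of_nonneg_left hq5 (show 0 ≤ ε / 4 by positivity)
      calc _ = ε / 4 * (C₁ * (4 / ε) * Real.exp (13 * t)) := by field_simp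
        _ ≤ _ := this
    have h3 : z = (q : ℝ) ^ (s / 2) * (q : ℝ) ^ (s / 2) := by
      rw [hz, ← Real.rpow_add hq0]; congr 1; ring
    refine (bad_card q N (by omega) z (by linarith)).trans ?_
    calc (q.primeFactors.card : ℝ) * (N / z) ≤ C₁ * (q : ℝ) ^ (s / 2) * (N / z) := by gcongr
      _ = N * (C₁ * ((q : ℝ) ^ (s / 2))⁻¹) := by rw [h3]; field_simp
      _ ≤ N * (ε / 4 * (Real.exp (13 * t))⁻¹) := by gcongr
      _ ≤ N * (ε / 4 * ((Real.exp (13 * t))⁻¹ * Real.exp t)) := by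
          gcongr; exact le_mul_of_one_le_right (by positivity) ht0
      _ = ε / 4 * (N * Real.exp (-12) ^ t) := by rw [hexp]; ring
      _ ≤ ε / 4 * (N * V) := by gcongr
  · convert hsieve1 using 2
    · rw [Finset.card_eq_sum_ones]; push_cast; rfl
  · have h1 : (N : ℝ) * V / 2 = N / 2 * V := by ring
    rw [h1]
    exact hsieve2

/-- The character of order two cut out by an index-two subgroup. -/
def indexTwoChar {G : Type*} [Group G] (H : Subgroup G) (hH : H.index = 2) : G →* ℤˣ where
  toFun u := if u ∈ H then 1 else -1
  map_one' := by simp [H.one_mem]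
  map_mul' a b := by
    have := Subgroup.mul_mem_iff_of_index_two hH (a := a) (b := b)
    by_cases ha : a ∈ H <;> by_cases hb : b ∈ H <;> simp [this, ha, hb]

theorem indexTwoChar_ne_one {G : Type*} [Group G] (H : Subgroup G) (hH : H.index = 2) :
    indexTwoChar H hH ≠ 1 := by
  intro h
  have : H = ⊤ := by
    rw [eq_top_iff]
    intro u _
    by_contra hu
    have h1 : indexTwoChar H hH u = 1 := by rw [h]; rfl
    simp [indexTwoChar, hu] at h1
  rw [this, Subgroup.index_top] at hH
  norm_num at hH

theorem indexTwoChar_eq_iff {G : Type*} [Group G] (H : Subgroup G) (hH : H.index = 2) (b u : G) :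
    b⁻¹ * u ∈ H ↔ indexTwoChar H hH b = indexTwoChar H hH u := by
  have := Subgroup.mul_mem_iff_of_index_two hH (a := b⁻¹) (b := u)
  rw [this, H.inv_mem_iff]
  by_cases ha : b ∈ H <;> by_cases hb : u ∈ H <;> simp [indexTwoChar, ha, hb]

theorem gcd_primorialLT (n : ℕ) (z : ℝ) :
    Nat.gcd n (primorialLT z) = 1 ↔ ∀ p ∈ primesLT z, ¬ p ∣ n := by
  change Nat.Coprime n (∏ p ∈ primesLT z, p) ↔ _
  rw [Nat.coprime_prod_right_iff]
  refine forall₂_congr fun p hp => ?_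
  rw [Nat.coprime_comm, (mem_primesLT.1 hp).1.coprime_iff_not_dvd]

theorem mem_roughs_iff (n : ℕ) (R z : ℝ) (hR : 0 ≤ R) (hz : 2 < z) :
    n ∈ roughs ⌊R⌋₊ z ↔ (n : ℝ) ≤ R ∧ Nat.gcd n (primorialLT z) = 1 := by
  rw [roughs, Finset.mem_filter, gcd_primorialLT, Finset.mem_Icc, Nat.le_floor_iff hR]
  constructor
  · rintro ⟨⟨_, h2⟩, h3⟩; exact ⟨h2, h3⟩
  · rintro ⟨h2, h3⟩
    refine ⟨⟨?_, h2⟩, h3⟩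
    by_contra h
    have h0 : n = 0 := by omega
    subst h0
    exact h3 2 (mem_primesLT.2 ⟨Nat.prime_two, by exact_mod_cast hz⟩) (dvd_zero _)

/-- Up to the integers sharing a factor with `q`, the sum of `(1 + φ(b) g(n)) / 2` counts the
rough numbers in `bH`. -/
theorem coset_count (q D N : ℕ) (ψ : MulChar (ZMod 8) ℤ) (z : ℝ) (hz : 2 < z)
    (H : Subgroup (ZMod q)ˣ) (hH : H.index = 2) (b : (ZMod q)ˣ)
    (hstr : ∀ (n : ℤ) (u : (ZMod q)ˣ), (u : ZMod q) = n → IsUnit (n : ZMod 8) →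
      ((indexTwoChar H hH u : ℤˣ) : ℤ) = ψ n * jacobiSym n D) :
    ∑ n ∈ roughs N z, (1 + (((indexTwoChar H hH b : ℤˣ) : ℤ) : ℝ) * octJacobi D ψ n) / 2 -
        (((roughs N z).filter (fun n => ¬ n.Coprime q)).card : ℝ) ≤
      (((roughs N z).filter (fun n : ℕ => ∃ u : (ZMod q)ˣ, (u : ZMod q) = (n : ZMod q) ∧
        b⁻¹ * u ∈ H)).card : ℝ) := by
  rw [sub_le_iff_le_add, Finset.card_filter, Finset.card_filter]
  push_cast
  rw [← Finset.sum_add_distrib]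
  refine Finset.sum_le_sum fun n hn => ?_
  rw [roughs, Finset.mem_filter] at hn
  have hσ : ((indexTwoChar H hH b : ℤˣ) : ℤ) = 1 ∨ ((indexTwoChar H hH b : ℤˣ) : ℤ) = -1 := by
    rcases Int.units_eq_one_or (indexTwoChar H hH b) with h | h <;> simp [h]
  by_cases hcop : n.Coprime q
  · have hodd : ¬ 2 ∣ n := hn.2 2 (mem_primesLT.2 ⟨Nat.prime_two, by exact_mod_cast hz⟩)
    have h8 : IsUnit (((n : ℤ)) : ZMod 8) := by
      rw [Int.cast_natCast, ZMod.isUnit_iff_coprime]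
      have : Nat.Coprime n (2 ^ 3) :=
        Nat.Coprime.pow_right 3 (Nat.Coprime.symm ((Nat.prime_two.coprime_iff_not_dvd).2 hodd))
      simpa using this
    have hu := hstr n (ZMod.unitOfCoprime n hcop) (by simp) h8
    have hg : octJacobi D ψ n = ((indexTwoChar H hH (ZMod.unitOfCoprime n hcop) : ℤˣ) : ℤ) := by
      rw [hu, octJacobi]; simp
    rw [hg]
    by_cases hmem : b⁻¹ * ZMod.unitOfCoprime n hcop ∈ H
    · rw [if_pos ⟨ZMod.unitOfCoprime n hcop, by simp, hmem⟩,
        ← (indexTwoChar_eq_iff H hH b _).1 hmem, if_neg (by simpa using hcop)]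
      rcases hσ with h | h <;> rw [h] <;> norm_num
    · have hne : indexTwoChar H hH (ZMod.unitOfCoprime n hcop) = - indexTwoChar H hH b := by
        have h := mt (indexTwoChar_eq_iff H hH b _).2 hmem
        rcases Int.units_eq_one_or (indexTwoChar H hH b) with h1 | h1 <;>
        rcases Int.units_eq_one_or (indexTwoChar H hH (ZMod.unitOfCoprime n hcop)) with h2 | h2 <;>
        rw [h1, h2] at h <;> rw [h1, h2] <;> simp_all only [not_true_eq_false, neg_neg]
      rw [hne, Units.val_neg]
      have : (1 + (((indexTwoChar H hH b : ℤˣ) : ℤ) : ℝ) *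
          ((-((indexTwoChar H hH b : ℤˣ) : ℤ) : ℤ) : ℝ)) / 2 = 0 := by
        rcases hσ with h | h <;> rw [h] <;> norm_num
      rw [this]
      positivity
  · rw [if_pos hcop]
    have h1 : (1 + (((indexTwoChar H hH b : ℤˣ) : ℤ) : ℝ) * octJacobi D ψ n) / 2 ≤ 1 := by
      have hg : |(octJacobi D ψ n : ℝ)| ≤ 1 := by exact_mod_cast octJacobi_abs_le D ψ n
      rcases hσ with h | h <;> rw [h] <;> push_cast <;> linarith [(abs_le.1 hg).1, (abs_le.1 hg).2]
    have h2 : (0 : ℝ) ≤ if ∃ u : (ZMod q)ˣ, (u : ZMod q) = (n : ZMod q) ∧ b⁻¹ * u ∈ H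
      then 1 else 0 := by positivity
    linarith

/-- **Rough numbers in cosets.** For all sufficiently small `ε > 0` and `q` large in terms
of `ε`, every index-2 coset `bH` of `(ℤ/qℤ)ˣ` contains at least a `(1/2 − ε)` proportion of
the integers `n ≤ R` free of prime factors `< q^√ε`, whenever `R ∈ [q^0.26, q]`. -/
theorem rough_numbers_in_cosets :
    ∃ ε₀ : ℝ, 0 < ε₀ ∧
      ∀ ε : ℝ, 0 < ε → ε < ε₀ →
        ∃ q₀ : ℕ,
          ∀ q : ℕ, q₀ ≤ q →
            ∀ H : Subgroup ((ZMod q)ˣ), H.index = 2 →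
              ∀ b : (ZMod q)ˣ,
                ∀ R : ℝ, (q : ℝ) ^ (0.26 : ℝ) ≤ R → R ≤ (q : ℝ) →
                  ((1 : ℝ) / 2 - ε) *
                      (Set.ncard {n : ℕ | (n : ℝ) ≤ R ∧
                        Nat.gcd n (primorialLT ((q : ℝ) ^ Real.sqrt ε)) = 1} : ℝ) ≤
                    (Set.ncard {n : ℕ | (n : ℝ) ≤ R ∧
                      (∃ u : (ZMod q)ˣ, ((u : ZMod q) = (n : ZMod q)) ∧ b⁻¹ * u ∈ H) ∧
                      Nat.gcd n (primorialLT ((q : ℝ) ^ Real.sqrt ε)) = 1} : ℝ) := by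
  obtain ⟨ε₀, hε₀, hmain⟩ := rough_char
  refine ⟨ε₀, hε₀, fun ε hε hεlt => ?_⟩
  obtain ⟨q₀, hq₀⟩ := Filter.eventually_atTop.1 (hmain ε hε hεlt)
  refine ⟨max q₀ 1, fun q hq H hH b R hR1 _ => ?_⟩
  obtain ⟨h1, hz, hrough⟩ := hq₀ q ((le_max_left _ _).trans hq)
  have hq1 : 1 ≤ q := (le_max_right _ _).trans hq
  have hq0 : (0 : ℝ) < q := by exact_mod_cast hq1
  have hqone : (1 : ℝ) ≤ q := by exact_mod_cast hq1
  set z := (q : ℝ) ^ Real.sqrt ε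
  have hR0 : 0 ≤ R := le_trans (by positivity) hR1
  have hN : (q : ℝ) ^ (0.2595 : ℝ) ≤ (⌊R⌋₊ : ℝ) := by
    have h2 : (1 : ℝ) ≤ (q : ℝ) ^ (0.2595 : ℝ) := Real.one_le_rpow hqone (by norm_num)
    have h3 : (q : ℝ) ^ (0.26 : ℝ) = (q : ℝ) ^ (0.2595 : ℝ) * (q : ℝ) ^ (0.0005 : ℝ) := by
      rw [← Real.rpow_add hq0]; norm_num
    have h4 := Nat.lt_floor_add_one R
    nlinarith
  obtain ⟨D, ψ, hodd, hsq, hDq, hne, hstr⟩ :=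
    quadratic_structure q (by omega) (indexTwoChar H hH) (indexTwoChar_ne_one H hH)
  have hσ : |(((indexTwoChar H hH b : ℤˣ) : ℤ) : ℝ)| ≤ 1 := by
    rcases Int.units_eq_one_or (indexTwoChar H hH b) with h | h <;> simp [h]
  have h5 := hrough D ψ _ ⌊R⌋₊ hodd hsq (Nat.le_of_dvd hq1 hDq) hne hσ hN
  have h6 := coset_count q D ⌊R⌋₊ ψ z hz H hH b hstr
  have e1 : {n : ℕ | (n : ℝ) ≤ R ∧ Nat.gcd n (primorialLT z) = 1} =
      (roughs ⌊R⌋₊ z : Set ℕ) := by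
    ext n; rw [Finset.mem_coe, mem_roughs_iff n R z hR0 hz]; rfl
  have e2 : {n : ℕ | (n : ℝ) ≤ R ∧ (∃ u : (ZMod q)ˣ, ((u : ZMod q) = (n : ZMod q)) ∧
      b⁻¹ * u ∈ H) ∧ Nat.gcd n (primorialLT z) = 1} =
      ((roughs ⌊R⌋₊ z).filter (fun n : ℕ => ∃ u : (ZMod q)ˣ, (u : ZMod q) = (n : ZMod q) ∧
        b⁻¹ * u ∈ H) : Finset ℕ) := by
    ext n
    rw [Finset.mem_coe, Finset.mem_filter, mem_roughs_iff n R z hR0 hz, Set.mem_ofPred_eq]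
    tauto
  rw [e1, e2, Set.ncard_coe_finset, Set.ncard_coe_finset]
  exact h5.trans h6
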